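/- There is an absolute constant c > 0 such that the following holds for every prime p. Let P be a finite set of points in F_p^2 with |P| ≤ p^{15/13}, and let C be any finite set of irreducible cubic curves in F_p^2. Then the number of incidences satisfies I(P,C) ≤ c·( min{ (|P||C|)^{39/43}, |P||C|^{9/10}, |P|^{1/2}|C| } + |P| + |C| ). -/

import Mathlib

open scoped Classical

noncomputable section

/-- The zero set in `F_p^2` of a bivariate polynomial over `F_p`. -/
def zeroSet {p : ℕ} (f : MvPolynomial (Fin 2) (ZMod p)) : Set (Fin 2 → ZMod p) :=
  {x | MvPolynomial.eval x f = 0}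

/-- A set `γ ⊆ F_p^2` is an irreducible cubic curve if it is the zero set of an
irreducible polynomial of total degree 3. -/
def IsIrredCubic {p : ℕ} (γ : Set (Fin 2 → ZMod p)) : Prop :=
  ∃ f : MvPolynomial (Fin 2) (ZMod p), Irreducible f ∧ f.totalDegree = 3 ∧ γ = zeroSet f

/-- The number of incidences between a finite set of points `P` and a finite
set of curves `C`. -/
def incidences {p : ℕ} (P : Finset (Fin 2 → ZMod p)) (C : Finset (Set (Fin 2 → ZMod p))) : ℕ :=
  ((P ×ˢ C).filter fun z => z.1 ∈ z.2).card

/-!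
Write `m = |P|` and `n = |C|`. An equation for each curve gives `n` pairwise non-proportional
irreducible cubic polynomials, and two of them have at most nine common zeros. This already gives
the term `m ^ (1/2) n`, by the Kővári–Sós–Turán inequality.

*Pinning.* Consider curves with at least `d` points of `P`. The cubics form a ten-dimensional
space. A point of `P` that lies on many of the curves, and is not a base point of the current
linear system, cuts the dimension by one and keeps a proportion of about `d / m` of the curves.
Nine pins determine the curve, so there are at most about `(m / d) ^ 9` curves; summation gives
`m n ^ (8/9)`, which is stronger than `m n ^ (9/10)`.

*Nets.* Seven pins leave a three-dimensional system, a net. The map to the projective plane given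
by a net turns its cubics into lines, with fibres of at most nine points on each curve. In the
projective plane, `m` objects of one kind and `N` of the dual kind, each incident to at least `k`
of the former, satisfy `N ^ 4 k ^ 15 ≪ m ^ 11` when `m ≤ p ^ (4/3)`. Together with the pins, the
number `n` of cubics with about `k` points satisfies `n ^ 4 k ^ 43 ≪ m ^ 39`, and removing poorest
curves one at a time yields `(m n) ^ (39/43)`.

*Lines in the plane.* A double count produces two points `y₁`, `y₂` such that many of the `N`
points lie on the grid of lines through `y₁` and `y₂`. In affine coordinates these points lie in a
product `A × B` with `|A|, |B| ≤ k` and on many lines `b = c a + d`, so the Cauchy–Schwarz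
inequality bounds their number by the number of solutions of `c a + d = c₂ a₂ + d₂`. Very rich
points are removed beforehand, so that few of the lines `(c, d)` are concurrent.

*Lines in space.* The solutions count incidences between the lines `x = u, z = v y + w` and the
lines `y = u, z = v x + w` of two families in three-space. `N ≤ p²` lines have
`O(N ^ (3/2) + k N)` incidences if at most `k` lines of a family are collinear in parameter space,
a form of Rudnev's point-plane theorem. The proof is by the polynomial method: if every line is
rich, most lines lie on a surface of degree `≪ √N`, found by sampling and parameter counting. On
an irreducible surface `Q = 0` of degree below `p`, a second-order differential polynomial in `Q`
vanishes on every line of the first family. If `Q` does not divide it, there are few such lines;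
otherwise the surface is ruled, and a line of the second family on it makes it so special that the
lines of the first family are collinear in parameter space. The characteristic enters because the
degree must stay below it.
-/

namespace CubicIncidence

open MvPolynomial

open scoped Polynomial

/-- The characteristic of `R` is zero or at least `p`, stated as the property in which it is used:
the positive integers below `p` are nonzero in `R`. -/
def CharAtLeast (R : Type*) [Semiring R] (p : ℕ) : Prop :=
  ∀ n : ℕ, 0 < n → n < p → (n : R) ≠ 0

theorem CharAtLeast.map {R S : Type*} [Semiring R] [Semiring S] {p : ℕ} (h : CharAtLeast R p)
    {φ : R →+* S} (hφ : Function.Injective φ) : CharAtLeast S p := by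
  intro n h₀ hn
  rw [← map_natCast φ, ne_eq, map_eq_zero_iff φ hφ]
  exact h n h₀ hn

theorem charAtLeast_of_charP (R : Type*) [Semiring R] (p : ℕ) [CharP R p] : CharAtLeast R p :=
  fun n h₀ hn h => hn.not_ge (Nat.le_of_dvd h₀ ((CharP.cast_eq_zero_iff R p n).1 h))

/-! ### Elimination -/

section Elimination

theorem totalDegree_units_smul_le {σ R : Type*} [CommRing R] (u : ℤˣ) (f : MvPolynomial σ R) :
    (u • f).totalDegree ≤ f.totalDegree := by
  rcases Int.units_eq_one_or u with rfl | rfl <;> simp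

/-- The Sylvester determinant has `n` columns with entries among the coefficients of `f` and `m`
columns with entries among those of `g`. -/
theorem totalDegree_resultant_le {σ R : Type*} [CommRing R] (f g : (MvPolynomial σ R)[X])
    (m n : ℕ) {D E : ℕ} (hf : ∀ i, (f.coeff i).totalDegree ≤ D)
    (hg : ∀ i, (g.coeff i).totalDegree ≤ E) :
    (Polynomial.resultant f g m n).totalDegree ≤ m * E + n * D := by
  rw [Polynomial.resultant, Matrix.det_apply]
  refine totalDegree_finsetSum_le fun σ _ => (totalDegree_units_smul_le _ _).trans ?_
  refine (totalDegree_finsetProd _ _).trans ?_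
  rw [Fin.sum_univ_add]
  refine add_le_add ((Finset.sum_le_card_nsmul _ _ E fun i _ => ?_).trans (by simp))
    ((Finset.sum_le_card_nsmul _ _ D fun i _ => ?_).trans (by simp))
  · simp only [Polynomial.sylvester, Matrix.of_apply, Fin.addCases_left]
    split_ifs
    exacts [hg _, by simp]
  · simp only [Polynomial.sylvester, Matrix.of_apply, Fin.addCases_right]
    split_ifs
    exacts [hf _, by simp]

/-- By Gauss's lemma `q` stays irreducible over the fraction field, where it is coprime to `g`. -/
theorem resultant_ne_zero_of_isPrimitive {A : Type*} [CommRing A] [IsDomain A]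
    [UniqueFactorizationMonoid A] {q g : A[X]} (hqp : q.IsPrimitive) (hqi : Irreducible q)
    (hqg : ¬q ∣ g) : Polynomial.resultant q g ≠ 0 := by
  have hinj : Function.Injective (algebraMap A (FractionRing A)) := IsFractionRing.injective _ _
  have hirr : Irreducible (q.map (algebraMap A (FractionRing A))) :=
    hqp.irreducible_iff_irreducible_map_fraction_map.1 hqi
  have hcop : IsCoprime (q.map (algebraMap A (FractionRing A)))
      (g.map (algebraMap A (FractionRing A))) :=
    hirr.coprime_iff_not_dvd.2 fun h => hqg (hqp.dvd_of_fraction_map_dvd_fraction_map h)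
  have hres := Polynomial.resultant_ne_zero _ _ hcop
  rw [Polynomial.natDegree_map_eq_of_injective hinj, Polynomial.natDegree_map_eq_of_injective hinj,
    Polynomial.resultant_map_map] at hres
  exact ne_zero_of_map hres

theorem finSuccEquiv_rename_succ {R : Type*} [CommSemiring R] (n : ℕ)
    (f : MvPolynomial (Fin n) R) : finSuccEquiv R n (rename Fin.succ f) = Polynomial.C f := by
  have h : (finSuccEquiv R n).toAlgHom.comp (rename Fin.succ) =
      IsScalarTower.toAlgHom R (MvPolynomial (Fin n) R) (MvPolynomial (Fin n) R)[X] :=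
    algHom_ext fun i => by simp [finSuccEquiv_X_succ]
  simpa using DFunLike.congr_fun h f

theorem totalDegree_coeff_finSuccEquiv_le {R : Type*} [CommSemiring R] {n : ℕ}
    (f : MvPolynomial (Fin (n + 1)) R) (i : ℕ) :
    ((finSuccEquiv R n f).coeff i).totalDegree ≤ f.totalDegree := by
  by_cases h : (finSuccEquiv R n f).coeff i = 0
  · simp [h]
  · exact (Nat.le_add_right _ _).trans (totalDegree_coeff_finSuccEquiv_add_le f i h)

/-- The eliminant is the resultant with respect to the first variable. -/
theorem exists_eliminant {F : Type*} [Field F] {n : ℕ} {Q G : MvPolynomial (Fin (n + 1)) F}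
    (hQ : Irreducible Q) (hdeg : 0 < degreeOf 0 Q) (hQG : ¬Q ∣ G) :
    ∃ R : MvPolynomial (Fin n) F, R ≠ 0 ∧ R.totalDegree ≤ 2 * Q.totalDegree * G.totalDegree ∧
      ∃ a b, Q * a + G * b = rename Fin.succ R := by
  set q := finSuccEquiv F n Q
  set g := finSuccEquiv F n G
  have hqi : Irreducible q := (MulEquiv.irreducible_iff (finSuccEquiv F n)).2 hQ
  have hqd : q.natDegree = degreeOf 0 Q := natDegree_finSuccEquiv Q
  have hgd : g.natDegree = degreeOf 0 G := natDegree_finSuccEquiv G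
  have hres : Polynomial.resultant q g ≠ 0 :=
    resultant_ne_zero_of_isPrimitive (hqi.isPrimitive (by omega)) hqi
      fun h => hQG ((map_dvd_iff (finSuccEquiv F n)).1 h)
  refine ⟨Polynomial.resultant q g, hres, ?_, ?_⟩
  · refine (totalDegree_resultant_le q g _ _ (totalDegree_coeff_finSuccEquiv_le Q)
      (totalDegree_coeff_finSuccEquiv_le G)).trans ?_
    rw [hqd, hgd]
    nlinarith [degreeOf_le_totalDegree Q 0, degreeOf_le_totalDegree G 0]
  · obtain ⟨a, b, -, -, hab⟩ :=
      Polynomial.exists_mul_add_mul_eq_C_resultant q g le_rfl le_rfl (Or.inl (by omega))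
    refine ⟨(finSuccEquiv F n).symm a, (finSuccEquiv F n).symm b, (finSuccEquiv F n).injective ?_⟩
    simpa only [finSuccEquiv_rename_succ, map_add, map_mul, AlgEquiv.apply_symm_apply] using hab

end Elimination

/-! ### Partial derivatives -/

section Derivatives

variable {σ : Type*}

theorem derivative_aeval_eq_sum {R A : Type*} [CommSemiring R] [CommSemiring A] [Algebra R A]
    [Fintype σ] (g : σ → A[X]) (f : MvPolynomial σ R) :
    Polynomial.derivative (aeval g f) =
      ∑ i, aeval g (pderiv i f) * Polynomial.derivative (g i) := by
  induction f using MvPolynomial.induction_on with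
  | C a => simp [Polynomial.algebraMap_apply]
  | add f₁ f₂ h₁ h₂ => simp only [map_add, h₁, h₂, add_mul, Finset.sum_add_distrib]
  | mul_X f i hf =>
    have hterm (j : σ) : aeval g (pderiv j (f * X i)) * Polynomial.derivative (g j) =
        aeval g (pderiv j f) * Polynomial.derivative (g j) * g i +
          if j = i then aeval g f * Polynomial.derivative (g i) else 0 := by
      rw [pderiv_mul, map_add, map_mul, map_mul, aeval_X, add_mul, mul_right_comm]
      split_ifs with hj
      · rw [hj, pderiv_X_self, map_one, mul_one]
      · rw [pderiv_X_of_ne (Ne.symm hj), map_zero, mul_zero, zero_mul]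
    rw [map_mul, aeval_X, Polynomial.derivative_mul, hf, Finset.sum_congr rfl fun j _ => hterm j,
      Finset.sum_add_distrib, Finset.sum_mul, Finset.sum_ite_eq', if_pos (Finset.mem_univ i)]

theorem natDegree_aeval_le_totalDegree {R A : Type*} [CommSemiring R] [CommSemiring A]
    [Algebra R A] {g : σ → A[X]} (hg : ∀ i, (g i).natDegree ≤ 1) (f : MvPolynomial σ R) :
    (aeval g f).natDegree ≤ f.totalDegree := by
  rw [← aeval_map_algebraMap A g f]
  exact (aeval_natDegree_le _ (Finset.sup_mono (support_map_subset _ _)) g hg).trans_eq (mul_one _)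

theorem totalDegree_pderiv_le {R : Type*} [CommSemiring R] (i : σ) (f : MvPolynomial σ R) :
    (pderiv i f).totalDegree ≤ f.totalDegree - 1 := by
  refine Finset.sup_le fun m hm => ?_
  rw [mem_support_iff, coeff_pderiv] at hm
  have hle := le_totalDegree (mem_support_iff.2 (left_ne_zero_of_mul hm))
  rw [Finsupp.sum_add_index' (by simp) (by simp), Finsupp.sum_single_index rfl] at hle
  omega

theorem pderiv_ne_zero {R : Type*} [CommSemiring R] [NoZeroDivisors R] {p : ℕ}
    (hp : CharAtLeast R p) {i : σ} {f : MvPolynomial σ R} (hpos : 0 < degreeOf i f)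
    (hlt : degreeOf i f < p) : pderiv i f ≠ 0 := by
  obtain ⟨m, hm, hmi⟩ : ∃ m ∈ f.support, 0 < m i := by
    by_contra! h
    exact hpos.not_ge (degreeOf_le_iff.2 h)
  intro h
  have hcoeff := coeff_pderiv (i := i) f (m - Finsupp.single i 1)
  rw [h, coeff_zero, tsub_add_cancel_of_le (Finsupp.single_le_iff.2 hmi), Finsupp.tsub_apply,
    Finsupp.single_eq_same, ← Nat.cast_add_one, Nat.sub_add_cancel hmi] at hcoeff
  rcases mul_eq_zero.1 hcoeff.symm with h₀ | h₀
  · exact mem_support_iff.1 hm h₀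
  · exact hp (m i) hmi ((degreeOf_le_iff.1 le_rfl m hm).trans_lt hlt) h₀

theorem not_dvd_pderiv {R : Type*} [CommRing R] [IsDomain R] {p : ℕ} (hp : CharAtLeast R p)
    {i : σ} {f : MvPolynomial σ R} (hpos : 0 < degreeOf i f) (hlt : f.totalDegree < p) :
    ¬f ∣ pderiv i f := by
  have hle := degreeOf_le_totalDegree f i
  have hne := pderiv_ne_zero hp hpos (hle.trans_lt hlt)
  rintro ⟨r, hr⟩
  have hdeg := totalDegree_pderiv_le i f
  rw [hr] at hne
  rw [hr, totalDegree_mul_of_isDomain (left_ne_zero_of_mul hne) (right_ne_zero_of_mul hne)] at hdeg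
  omega

/-- The lowest order term `c X ^ m` of `φ` gives the term `m (m - 1) c a(0) X ^ (m - 2)` on the left
side, while the right side has no term below `X ^ (m - 1)`. -/
theorem eq_zero_of_mul_derivative_derivative_eq {A : Type*} [CommRing A] [IsDomain A] {p : ℕ}
    (hp : CharAtLeast A p) {φ a b c : A[X]} (hφ : φ.natDegree < p) (ha : a.coeff 0 ≠ 0)
    (h₀ : φ.coeff 0 = 0) (h₁ : φ.coeff 1 = 0)
    (h : a * φ.derivative.derivative = φ * b + φ.derivative * c) : φ = 0 := by
  by_contra hne
  have hcm : φ.coeff φ.natTrailingDegree ≠ 0 := Polynomial.coeff_natTrailingDegree_eq_zero.not.2 hne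
  obtain ⟨k, hk⟩ : ∃ k, φ.natTrailingDegree = k + 2 := by
    refine Nat.exists_eq_add_of_le' ?_
    by_contra! hlt
    interval_cases φ.natTrailingDegree <;> contradiction
  rw [hk] at hcm
  have hlt (d : ℕ) (hd : d < k + 2) : φ.coeff d = 0 :=
    Polynomial.coeff_eq_zero_of_lt_natTrailingDegree (hk ▸ hd)
  have hmp : k + 2 < p := hk ▸ Polynomial.natTrailingDegree_le_natDegree φ |>.trans_lt hφ
  have hdvd : (Polynomial.X : A[X]) ^ (k + 1) ∣ φ :=
    Polynomial.X_pow_dvd_iff.2 fun d hd => hlt d (by omega)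
  have hdvd' : (Polynomial.X : A[X]) ^ (k + 1) ∣ φ.derivative :=
    Polynomial.X_pow_dvd_iff.2 fun d hd => by
      rw [Polynomial.coeff_derivative, hlt (d + 1) (by omega), zero_mul]
  have hdvd'' : (Polynomial.X : A[X]) ^ (k + 1) ∣ φ.derivative.derivative :=
    Polynomial.prime_X.pow_dvd_of_dvd_mul_left _ (mt Polynomial.X_dvd_iff.1 ha)
      (h ▸ dvd_add (hdvd.mul_right _) (hdvd'.mul_right _))
  have hcoeff := Polynomial.X_pow_dvd_iff.1 hdvd'' k (by omega)
  rw [Polynomial.coeff_derivative, Polynomial.coeff_derivative] at hcoeff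
  refine mul_ne_zero (mul_ne_zero hcm ?_) ?_ hcoeff
  · exact_mod_cast hp (k + 1 + 1) (by omega) hmp
  · exact_mod_cast hp (k + 1) (by omega) (by omega)

end Derivatives

/-! ### Lines and ruled surfaces -/

section Lines

/-- In three-space with coordinates `z = X 0`, `x = X 1`, `y = X 2`, the triple `(u, v, w)` encodes
the line `x = u, z = v y + w` of the first family and the line `y = u, z = v x + w` of the second
family. -/
abbrev LineCode (F : Type*) := F × F × F

variable {F : Type*} [Field F]

/-- The restriction of a polynomial to the line `x = u, z = v y + w` of the first family, as a
polynomial in the parameter `y`. The line lies on the surface `Q = 0` iff `restrict₁ t Q = 0`. -/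
def restrict₁ (t : LineCode F) : MvPolynomial (Fin 3) F →ₐ[F] F[X] :=
  aeval ![Polynomial.C t.2.1 * Polynomial.X + Polynomial.C t.2.2, Polynomial.C t.1, Polynomial.X]

/-- The restriction of a polynomial to the line `y = u, z = v x + w` of the second family, as a
polynomial in the parameter `x`. -/
def restrict₂ (t : LineCode F) : MvPolynomial (Fin 3) F →ₐ[F] F[X] :=
  aeval ![Polynomial.C t.2.1 * Polynomial.X + Polynomial.C t.2.2, Polynomial.X, Polynomial.C t.1]

/-- The exchange of `x` and `y`, which interchanges the two families of lines. -/
def swapXY : MvPolynomial (Fin 3) F ≃ₐ[F] MvPolynomial (Fin 3) F :=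
  renameEquiv F (Equiv.swap 1 2)

theorem restrict₁_X_zero (t : LineCode F) :
    restrict₁ t (X 0) = Polynomial.C t.2.1 * Polynomial.X + Polynomial.C t.2.2 := aeval_X _ _

theorem restrict₁_X_one (t : LineCode F) : restrict₁ t (X 1) = Polynomial.C t.1 := aeval_X _ _

theorem restrict₁_X_two (t : LineCode F) : restrict₁ t (X 2) = Polynomial.X := aeval_X _ _

theorem restrict₂_X_zero (t : LineCode F) :
    restrict₂ t (X 0) = Polynomial.C t.2.1 * Polynomial.X + Polynomial.C t.2.2 := aeval_X _ _

theorem restrict₂_X_one (t : LineCode F) : restrict₂ t (X 1) = Polynomial.X := aeval_X _ _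

theorem restrict₂_X_two (t : LineCode F) : restrict₂ t (X 2) = Polynomial.C t.1 := aeval_X _ _

theorem restrict₁_swapXY (t : LineCode F) (Q : MvPolynomial (Fin 3) F) :
    restrict₁ t (swapXY Q) = restrict₂ t Q := by
  have h : (restrict₁ t).comp swapXY.toAlgHom = restrict₂ t := by
    refine algHom_ext fun i => ?_
    fin_cases i <;> simp [restrict₁, restrict₂, swapXY, Equiv.swap_apply_of_ne_of_ne]
  exact DFunLike.congr_fun h Q

theorem restrict₂_swapXY (t : LineCode F) (Q : MvPolynomial (Fin 3) F) :
    restrict₂ t (swapXY Q) = restrict₁ t Q := by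
  rw [← restrict₁_swapXY]
  simp [swapXY, rename_rename, ← Equiv.coe_trans, Equiv.swap_swap]

theorem totalDegree_swapXY (Q : MvPolynomial (Fin 3) F) :
    (swapXY Q).totalDegree = Q.totalDegree :=
  totalDegree_renameEquiv (Equiv.swap (1 : Fin 3) 2) Q

theorem degreeOf_zero_swapXY (Q : MvPolynomial (Fin 3) F) :
    degreeOf 0 (swapXY Q) = degreeOf 0 Q := by
  simpa [swapXY, Equiv.swap_apply_of_ne_of_ne] using
    degreeOf_rename_of_injective (p := Q) (Equiv.swap (1 : Fin 3) 2).injective 0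

theorem pderiv_zero_swapXY (Q : MvPolynomial (Fin 3) F) :
    pderiv 0 (swapXY Q) = swapXY (pderiv 0 Q) := by
  simpa [swapXY, Equiv.swap_apply_of_ne_of_ne] using
    pderiv_rename (R := F) (Equiv.swap (1 : Fin 3) 2).injective 0 Q

theorem natDegree_restrict₁_le (t : LineCode F) (Q : MvPolynomial (Fin 3) F) :
    (restrict₁ t Q).natDegree ≤ Q.totalDegree := by
  refine natDegree_aeval_le_totalDegree (fun i => ?_) Q
  fin_cases i
  exacts [Polynomial.natDegree_linear_le, by simp, Polynomial.natDegree_X_le]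

theorem natDegree_restrict₂_le (t : LineCode F) (Q : MvPolynomial (Fin 3) F) :
    (restrict₂ t Q).natDegree ≤ Q.totalDegree := by
  rw [← restrict₁_swapXY, ← totalDegree_swapXY Q]
  exact natDegree_restrict₁_le t _

theorem restrict₂_aeval_X_one (t : LineCode F) (q : F[X]) :
    restrict₂ t (Polynomial.aeval (X 1) q) = q := by
  rw [← Polynomial.aeval_algHom_apply, restrict₂_X_one, Polynomial.aeval_X_left_apply]

theorem restrict₁_rename_succ (t : LineCode F) (R : MvPolynomial (Fin 2) F) :
    restrict₁ t (rename Fin.succ R) = aeval ![Polynomial.C t.1, Polynomial.X] R := by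
  rw [restrict₁, aeval_rename]
  congr 1

theorem derivative_restrict₁ (t : LineCode F) (Q : MvPolynomial (Fin 3) F) :
    Polynomial.derivative (restrict₁ t Q) =
      restrict₁ t (pderiv 0 Q) * Polynomial.C t.2.1 + restrict₁ t (pderiv 2 Q) := by
  rw [restrict₁, derivative_aeval_eq_sum, Fin.sum_univ_three]
  simp

theorem card_le_totalDegree_of_aeval_eq_zero {R : MvPolynomial (Fin 2) F} (hR : R ≠ 0)
    (A : Finset F) (h : ∀ u ∈ A, aeval ![Polynomial.C u, Polynomial.X] R = (0 : F[X])) :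
    A.card ≤ R.totalDegree := by
  set r := finSuccEquiv F 1 R
  have hr : r ≠ 0 := by simpa [r] using hR
  have hroot (u : F) (hu : u ∈ A) : r.eval (C u) = 0 := by
    have hcomp : ((Polynomial.aeval (C u : MvPolynomial (Fin 1) F)).restrictScalars F).comp
        (finSuccEquiv F 1).toAlgHom = (Polynomial.aeval (X 0 : MvPolynomial (Fin 1) F)).comp
          (aeval ![Polynomial.C u, Polynomial.X]) := by
      refine algHom_ext fun i => ?_
      fin_cases i
      · simp [finSuccEquiv_X_zero]
      · have hX : finSuccEquiv F 1 (X 1) = Polynomial.C (X 0) := finSuccEquiv_X_succ (j := 0)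
        simp [hX]
    simpa [Polynomial.coe_aeval_eq_eval, h u hu] using DFunLike.congr_fun hcomp R
  have hsub : (A.image (C : F → MvPolynomial (Fin 1) F)).val ⊆ r.roots := fun z hz => by
    obtain ⟨u, hu, rfl⟩ := Finset.mem_image.1 hz
    exact (Polynomial.mem_roots hr).2 (hroot u hu)
  calc A.card = (A.image (C : F → MvPolynomial (Fin 1) F)).card :=
        (Finset.card_image_of_injective _ (C_injective _ _)).symm
    _ ≤ r.natDegree := Polynomial.card_le_degree_of_subset_roots hsub
    _ = degreeOf 0 R := natDegree_finSuccEquiv R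
    _ ≤ R.totalDegree := degreeOf_le_totalDegree _ _

theorem card_le_totalDegree_of_restrict₁_rename_succ {R : MvPolynomial (Fin 2) F} (hR : R ≠ 0)
    {A : Finset (LineCode F)} (hA : Set.InjOn Prod.fst (A : Set (LineCode F)))
    (h : ∀ t ∈ A, restrict₁ t (rename Fin.succ R) = 0) : A.card ≤ R.totalDegree := by
  rw [← Finset.card_image_of_injOn hA]
  refine card_le_totalDegree_of_aeval_eq_zero hR _ fun u hu => ?_
  obtain ⟨t, ht, rfl⟩ := Finset.mem_image.1 hu
  rw [← restrict₁_rename_succ, h t ht]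

theorem card_le_of_restrict₁_eq_zero {Q G : MvPolynomial (Fin 3) F} (hQ : Irreducible Q)
    (hdeg : 0 < degreeOf 0 Q) (hQG : ¬Q ∣ G) {A : Finset (LineCode F)}
    (hA : Set.InjOn Prod.fst (A : Set (LineCode F))) (hAQ : ∀ t ∈ A, restrict₁ t Q = 0)
    (hAG : ∀ t ∈ A, restrict₁ t G = 0) : A.card ≤ 2 * Q.totalDegree * G.totalDegree := by
  obtain ⟨R, hR, hRdeg, a, b, hab⟩ := exists_eliminant hQ hdeg hQG
  refine (card_le_totalDegree_of_restrict₁_rename_succ hR hA fun t ht => ?_).trans hRdeg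
  simp [← hab, hAQ t ht, hAG t ht]

/-- Lines along which `∂Q/∂z` vanishes are the singular ones for the projection along `z`; when `Q`
does not involve `z`, these are all lines on the surface. -/
theorem card_le_of_restrict₁_pderiv_zero {p : ℕ} (hp : CharAtLeast F p)
    {Q : MvPolynomial (Fin 3) F} (hQ : Irreducible Q) (hlt : Q.totalDegree < p)
    {A : Finset (LineCode F)} (hA : Set.InjOn Prod.fst (A : Set (LineCode F)))
    (hAQ : ∀ t ∈ A, restrict₁ t Q = 0) (hAd : ∀ t ∈ A, restrict₁ t (pderiv 0 Q) = 0) :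
    A.card ≤ 2 * Q.totalDegree ^ 2 := by
  rcases Nat.eq_zero_or_pos (degreeOf 0 Q) with hdeg | hdeg
  · obtain ⟨R, hR⟩ : ∃ R, Polynomial.C R = finSuccEquiv F 2 Q :=
      Polynomial.natDegree_eq_zero.1 ((natDegree_finSuccEquiv Q).trans hdeg)
    obtain rfl : Q = rename Fin.succ R := (finSuccEquiv F 2).injective (by
      rw [finSuccEquiv_rename_succ, hR])
    have hR₀ : R ≠ 0 := fun h => hQ.ne_zero (by simp [h])
    have hcard := card_le_totalDegree_of_restrict₁_rename_succ hR₀ hA hAQ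
    have hle := totalDegree_coeff_finSuccEquiv_le (rename Fin.succ R) 0
    rw [finSuccEquiv_rename_succ, Polynomial.coeff_C_zero] at hle
    nlinarith [Nat.le_self_pow two_ne_zero (rename Fin.succ R).totalDegree]
  · have hle : (pderiv 0 Q).totalDegree ≤ Q.totalDegree :=
      (totalDegree_pderiv_le 0 Q).trans (Nat.sub_le _ _)
    calc A.card ≤ 2 * Q.totalDegree * (pderiv 0 Q).totalDegree :=
          card_le_of_restrict₁_eq_zero hQ hdeg (not_dvd_pderiv hp hdeg hlt) hA hAQ hAd
      _ ≤ 2 * Q.totalDegree * Q.totalDegree := Nat.mul_le_mul_left _ hle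
      _ = 2 * Q.totalDegree ^ 2 := by ring

/-- The flecnode-type polynomial `Q_yy Q_z² - 2 Q_yz Q_y Q_z + Q_zz Q_y²`. Up to a scalar it is the
second derivative of `Q` along the tangent direction lying in the planes `x = const`, so it vanishes
on the lines of the first family contained in `Q = 0`. The mixed term is symmetrized, which makes
commutation of partial derivatives unnecessary. -/
def flecnode (Q : MvPolynomial (Fin 3) F) : MvPolynomial (Fin 3) F :=
  pderiv 2 (pderiv 2 Q) * pderiv 0 Q ^ 2
    - (pderiv 2 (pderiv 0 Q) + pderiv 0 (pderiv 2 Q)) * pderiv 2 Q * pderiv 0 Q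
    + pderiv 0 (pderiv 0 Q) * pderiv 2 Q ^ 2

theorem totalDegree_flecnode_le (Q : MvPolynomial (Fin 3) F) :
    (flecnode Q).totalDegree ≤ 3 * Q.totalDegree := by
  have hd (i : Fin 3) (P : MvPolynomial (Fin 3) F) : (pderiv i P).totalDegree ≤ P.totalDegree :=
    (totalDegree_pderiv_le i P).trans (Nat.sub_le _ _)
  have hdd (i j : Fin 3) : (pderiv i (pderiv j Q)).totalDegree ≤ Q.totalDegree :=
    (hd _ _).trans (hd _ _)
  have hsq (i : Fin 3) : (pderiv i Q ^ 2).totalDegree ≤ 2 * Q.totalDegree :=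
    (totalDegree_pow _ _).trans (Nat.mul_le_mul_left _ (hd _ _))
  have hmul {f g : MvPolynomial (Fin 3) F} {k l : ℕ} (hf : f.totalDegree ≤ k * Q.totalDegree)
      (hg : g.totalDegree ≤ l * Q.totalDegree) : (f * g).totalDegree ≤ (k + l) * Q.totalDegree :=
    (totalDegree_mul _ _).trans ((add_le_add hf hg).trans_eq (add_mul _ _ _).symm)
  refine (totalDegree_add _ _).trans (max_le ((totalDegree_sub _ _).trans (max_le ?_ ?_)) ?_)
  · exact hmul (k := 1) ((hdd 2 2).trans_eq (one_mul _).symm) (hsq 0)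
  · refine hmul (k := 2) (hmul (k := 1) (l := 1) ?_ ?_) ((hd 0 Q).trans_eq (one_mul _).symm)
    · exact (totalDegree_add _ _).trans (max_le (hdd 2 0) (hdd 0 2)) |>.trans_eq (one_mul _).symm
    · exact (hd 2 Q).trans_eq (one_mul _).symm
  · exact hmul (k := 1) ((hdd 0 0).trans_eq (one_mul _).symm) (hsq 2)

theorem restrict₁_flecnode_eq_zero {t : LineCode F} {Q : MvPolynomial (Fin 3) F}
    (h : restrict₁ t Q = 0) : restrict₁ t (flecnode Q) = 0 := by
  have h₁ := derivative_restrict₁ t Q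
  rw [h, map_zero] at h₁
  have h₂ := congrArg Polynomial.derivative h₁
  simp only [map_zero, map_add, Polynomial.derivative_mul, Polynomial.derivative_C, mul_zero,
    add_zero, derivative_restrict₁] at h₂
  have hy : restrict₁ t (pderiv 2 Q) = -(restrict₁ t (pderiv 0 Q) * Polynomial.C t.2.1) := by
    linear_combination -h₁
  simp only [flecnode, map_add, map_sub, map_mul, map_pow, hy]
  linear_combination -(restrict₁ t (pderiv 0 Q)) ^ 2 * h₂

end Lines

section RuledSurfaces

variable {F : Type*} [Field F]

/-- A parametrization over `F[x]`, with parameter `T`, of the line through the point of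
`y = u, z = v x + w` with abscissa `x` and with direction `(z, y) = (-Q_y, Q_z)`: the tangent at
this point to the section of `Q = 0` by a plane `x = const`. -/
def tangentParam (Q : MvPolynomial (Fin 3) F) (b : LineCode F) : Fin 3 → F[X][X] :=
  ![Polynomial.C (Polynomial.C b.2.1 * Polynomial.X + Polynomial.C b.2.2)
      - Polynomial.C (restrict₂ b (pderiv 2 Q)) * Polynomial.X,
    Polynomial.C Polynomial.X,
    Polynomial.C (Polynomial.C b.1) + Polynomial.C (restrict₂ b (pderiv 0 Q)) * Polynomial.X]

/-- The polynomial defining the union of the tangent lines parametrized by `tangentParam Q b`. -/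
def tangentPoly (Q : MvPolynomial (Fin 3) F) (b : LineCode F) : MvPolynomial (Fin 3) F :=
  Polynomial.aeval (X 1) (restrict₂ b (pderiv 0 Q)) * (X 0 - C b.2.1 * X 1 - C b.2.2) +
    Polynomial.aeval (X 1) (restrict₂ b (pderiv 2 Q)) * (X 2 - C b.1)

variable (Q P : MvPolynomial (Fin 3) F) (b : LineCode F)

theorem coeff_zero_aeval_tangentParam :
    (aeval (tangentParam Q b) P).coeff 0 = restrict₂ b P := by
  have h : ((Polynomial.aeval (0 : F[X])).restrictScalars F).comp (aeval (tangentParam Q b)) =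
      restrict₂ b := by
    refine algHom_ext fun i => ?_
    fin_cases i <;> simp [tangentParam, restrict₂]
  rw [← h, Polynomial.coeff_zero_eq_eval_zero]
  simp [Polynomial.coe_aeval_eq_eval]

theorem derivative_aeval_tangentParam :
    Polynomial.derivative (aeval (tangentParam Q b) P) =
      aeval (tangentParam Q b) (pderiv 2 P) * Polynomial.C (restrict₂ b (pderiv 0 Q)) -
        aeval (tangentParam Q b) (pderiv 0 P) * Polynomial.C (restrict₂ b (pderiv 2 Q)) := by
  rw [derivative_aeval_eq_sum, Fin.sum_univ_three]
  simp [tangentParam]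
  ring

theorem natDegree_aeval_tangentParam_le :
    (aeval (tangentParam Q b) P).natDegree ≤ P.totalDegree := by
  have hlin (f : F[X]) : (Polynomial.C f * Polynomial.X).natDegree ≤ 1 :=
    (Polynomial.natDegree_C_mul_le _ _).trans Polynomial.natDegree_X_le
  have hconst (f : F[X]) : (Polynomial.C f).natDegree ≤ 1 :=
    (Polynomial.natDegree_C f).trans_le zero_le_one
  refine natDegree_aeval_le_totalDegree (fun i => ?_) P
  fin_cases i
  · exact (Polynomial.natDegree_sub_le _ _).trans (max_le (hconst _) (hlin _))
  · exact hconst _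
  · exact (Polynomial.natDegree_add_le _ _).trans (max_le (hconst _) (hlin _))

theorem aeval_tangentParam_aeval_X_one (q : F[X]) :
    aeval (tangentParam Q b) (Polynomial.aeval (X 1 : MvPolynomial (Fin 3) F) q) =
      Polynomial.C q := by
  rw [← Polynomial.aeval_algHom_apply, aeval_X]
  exact Polynomial.aeval_algHom_apply (Polynomial.CAlgHom (R := F) (A := F[X])) Polynomial.X q
    |>.trans (congrArg _ (Polynomial.aeval_X_left_apply q))

theorem aeval_tangentParam_tangentPoly : aeval (tangentParam Q b) (tangentPoly Q b) = 0 := by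
  simp only [tangentPoly, map_add, map_mul, map_sub, aeval_tangentParam_aeval_X_one]
  simp [tangentParam, Polynomial.algebraMap_apply]
  ring

variable {Q b}

/-- The substitution `x ↦ x, y ↦ u + α(x) T` is an automorphism `y ↦ u + T` followed by the scaling
`T ↦ α(x) T`. -/
theorem eq_zero_of_aeval_tangentParam_rename_succ (hb : restrict₂ b (pderiv 0 Q) ≠ 0)
    {R : MvPolynomial (Fin 2) F} (h : aeval (tangentParam Q b) (rename Fin.succ R) = 0) :
    R = 0 := by
  set α := restrict₂ b (pderiv 0 Q)
  set ψ : MvPolynomial (Fin 2) F →ₐ[F] F[X][X] :=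
    aeval ![Polynomial.C Polynomial.X, Polynomial.C (Polynomial.C b.1) + Polynomial.X] with hψ
  have hscale : ((aeval (tangentParam Q b)).comp (rename Fin.succ)).toRingHom =
      (Polynomial.compRingHom (Polynomial.C α * Polynomial.X)).comp ψ.toRingHom := by
    refine ringHom_ext (fun r => by simp [hψ, Polynomial.algebraMap_apply]) fun i => ?_
    fin_cases i <;> simp [hψ, tangentParam, α]
  have hinv : (Polynomial.eval₂RingHom (Polynomial.aeval (X 0 : MvPolynomial (Fin 2) F)).toRingHom
      (X 1 - C b.1)).comp ψ.toRingHom = RingHom.id _ := by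
    refine ringHom_ext (fun r => by simp [hψ, Polynomial.algebraMap_apply]) fun i => ?_
    fin_cases i <;> simp [hψ]
  have hcomp : (ψ R).comp (Polynomial.C α * Polynomial.X) = 0 :=
    (DFunLike.congr_fun hscale R).symm.trans h
  rw [Polynomial.comp_C_mul_X_eq_zero_iff (mem_nonZeroDivisors_of_ne_zero hb)] at hcomp
  have hR : Polynomial.eval₂RingHom (Polynomial.aeval (X 0 : MvPolynomial (Fin 2) F)).toRingHom
      (X 1 - C b.1) (ψ R) = R := DFunLike.congr_fun hinv R
  rw [hcomp, map_zero] at hR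
  exact hR.symm

/-- The restriction of `Q` to the tangent line satisfies a regular linear differential equation of
second order, and it vanishes to order two at the point of tangency. -/
theorem aeval_tangentParam_self_eq_zero {p : ℕ} (hp : CharAtLeast F p) (hlt : Q.totalDegree < p)
    (hF : Q ∣ flecnode Q) (hbQ : restrict₂ b Q = 0) (hb : restrict₂ b (pderiv 0 Q) ≠ 0) :
    aeval (tangentParam Q b) Q = 0 := by
  obtain ⟨H, hH⟩ := hF
  set α := restrict₂ b (pderiv 0 Q) with hα
  set β := restrict₂ b (pderiv 2 Q) with hβ
  set θ := aeval (R := F) (tangentParam Q b)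
  have hD (P : MvPolynomial (Fin 3) F) : Polynomial.derivative (θ P) =
      θ (pderiv 2 P) * Polynomial.C α - θ (pderiv 0 P) * Polynomial.C β :=
    derivative_aeval_tangentParam Q P b
  have hcoeff (P : MvPolynomial (Fin 3) F) : (θ P).coeff 0 = restrict₂ b P :=
    coeff_zero_aeval_tangentParam Q P b
  refine eq_zero_of_mul_derivative_derivative_eq (hp.map Polynomial.C_injective)
    (a := θ (pderiv 0 Q) ^ 2) (b := Polynomial.C α ^ 2 * θ H)
    (c := Polynomial.C α * (θ (pderiv 2 (pderiv 0 Q)) + θ (pderiv 0 (pderiv 2 Q))) * θ (pderiv 0 Q)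
      - θ (pderiv 0 (pderiv 0 Q)) *
        (Polynomial.derivative (θ Q) + 2 * Polynomial.C β * θ (pderiv 0 Q)))
    ((natDegree_aeval_tangentParam_le Q Q b).trans_lt hlt) ?_ ?_ ?_ ?_
  · rw [pow_two, Polynomial.mul_coeff_zero, hcoeff]
    exact mul_ne_zero hb hb
  · rw [hcoeff, hbQ]
  · have h := congrArg (Polynomial.coeff · 0) (hD Q)
    simp only [Polynomial.coeff_derivative, Polynomial.coeff_sub, Polynomial.mul_coeff_zero, hcoeff,
      Polynomial.coeff_C_zero, Nat.cast_zero, zero_add, mul_one] at h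
    rw [h, ← hα, ← hβ]
    ring
  · have hDD : Polynomial.derivative (Polynomial.derivative (θ Q)) =
        (θ (pderiv 2 (pderiv 2 Q)) * Polynomial.C α - θ (pderiv 0 (pderiv 2 Q)) * Polynomial.C β)
          * Polynomial.C α
        - (θ (pderiv 2 (pderiv 0 Q)) * Polynomial.C α - θ (pderiv 0 (pderiv 0 Q)) * Polynomial.C β)
          * Polynomial.C β := by
      rw [hD]
      simp only [map_sub, Polynomial.derivative_mul, Polynomial.derivative_C, mul_zero, add_zero,
        hD]
    have hflec := congrArg θ hH
    simp only [flecnode, map_add, map_sub, map_mul, map_pow] at hflec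
    rw [hDD]
    linear_combination (Polynomial.C α ^ 2) * hflec +
      (-(Polynomial.C α * (θ (pderiv 2 (pderiv 0 Q)) + θ (pderiv 0 (pderiv 2 Q))) *
          θ (pderiv 0 Q))
        + θ (pderiv 0 (pderiv 0 Q)) * (Polynomial.derivative (θ Q) +
          Polynomial.C β * θ (pderiv 0 Q) + Polynomial.C α * θ (pderiv 2 Q))) * hD Q

/-- Both polynomials vanish along `tangentParam Q b`. If `Q` did not divide `tangentPoly Q b`, their
eliminant would vanish there too. -/
theorem dvd_tangentPoly {p : ℕ} (hp : CharAtLeast F p) (hlt : Q.totalDegree < p)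
    (hQ : Irreducible Q) (hdeg : 0 < degreeOf 0 Q) (hF : Q ∣ flecnode Q)
    (hbQ : restrict₂ b Q = 0) (hb : restrict₂ b (pderiv 0 Q) ≠ 0) : Q ∣ tangentPoly Q b := by
  by_contra hnd
  obtain ⟨R, hR, -, f, g, hfg⟩ := exists_eliminant hQ hdeg hnd
  refine hR (eq_zero_of_aeval_tangentParam_rename_succ hb ?_)
  rw [← hfg, map_add, map_mul, map_mul, aeval_tangentParam_tangentPoly,
    aeval_tangentParam_self_eq_zero hp hlt hF hbQ hb, zero_mul, zero_mul, add_zero]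

/-- If `Q` divides `tangentPoly Q b`, then restriction to a second line of the second family shows
that the slope `Q_y / Q_z` along `b` is a polynomial of degree at most one. -/
theorem exists_dvd_bilinear (hQ : Irreducible Q) (hT : Q ∣ tangentPoly Q b)
    (hbQ : restrict₂ b Q = 0) (hb : restrict₂ b (pderiv 0 Q) ≠ 0) {b' : LineCode F}
    (hbQ' : restrict₂ b' Q = 0) (hbb' : b'.1 ≠ b.1) :
    ∃ c d : F, Q ∣ X 0 - C b.2.1 * X 1 - C b.2.2 + (C c * X 1 + C d) * (X 2 - C b.1) := by
  set α := restrict₂ b (pderiv 0 Q)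
  set β := restrict₂ b (pderiv 2 Q)
  have hu : b'.1 - b.1 ≠ 0 := sub_ne_zero.2 hbb'
  have hrestr : restrict₂ b' (tangentPoly Q b) = 0 := by
    obtain ⟨H, hH⟩ := hT
    rw [hH, map_mul, hbQ', zero_mul]
  simp only [tangentPoly, map_add, map_mul, map_sub, restrict₂_aeval_X_one, restrict₂_X_zero,
    restrict₂_X_one, restrict₂_X_two, algHom_C, Polynomial.algebraMap_eq] at hrestr
  set c : F := -(b'.2.1 - b.2.1) / (b'.1 - b.1) with hc
  set d : F := -(b'.2.2 - b.2.2) / (b'.1 - b.1) with hd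
  have hβ : β = α * (Polynomial.C c * Polynomial.X + Polynomial.C d) := by
    have hcC := congrArg Polynomial.C ((eq_div_iff hu).1 hc)
    have hdC := congrArg Polynomial.C ((eq_div_iff hu).1 hd)
    refine mul_right_cancel₀ (Polynomial.C_ne_zero.2 hu) ?_
    simp only [map_mul, map_sub, map_neg] at hcC hdC ⊢
    linear_combination hrestr - α * Polynomial.X * hcC - α * hdC
  have hfactor : tangentPoly Q b = Polynomial.aeval (X 1) α *
      (X 0 - C b.2.1 * X 1 - C b.2.2 + (C c * X 1 + C d) * (X 2 - C b.1)) := by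
    change Polynomial.aeval (X 1) α * _ + Polynomial.aeval (X 1) β * _ = _
    rw [hβ]
    simp only [map_mul, map_add, Polynomial.aeval_X, Polynomial.aeval_C, algebraMap_eq]
    ring
  refine ⟨c, d, (hQ.prime.dvd_or_dvd (hfactor ▸ hT)).resolve_left fun ⟨r, hr⟩ => hb ?_⟩
  have h := congrArg (restrict₂ b) hr
  rwa [map_mul, hbQ, zero_mul, restrict₂_aeval_X_one] at h

theorem exists_collinear_of_restrict₁_eq_zero {p : ℕ} (hp : CharAtLeast F p)
    (hlt : Q.totalDegree < p) (hQ : Irreducible Q) (hdeg : 0 < degreeOf 0 Q)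
    (hF : Q ∣ flecnode Q) (hbQ : restrict₂ b Q = 0) (hb : restrict₂ b (pderiv 0 Q) ≠ 0)
    {b' : LineCode F} (hbQ' : restrict₂ b' Q = 0) (hbb' : b'.1 ≠ b.1) :
    ∃ v w : F × F, ∀ t : LineCode F, restrict₁ t Q = 0 → t.2 = t.1 • v + w := by
  obtain ⟨c, d, H, hH⟩ := exists_dvd_bilinear hQ (dvd_tangentPoly hp hlt hQ hdeg hF hbQ hb) hbQ hb
    hbQ' hbb'
  refine ⟨(-c, b.2.1 + c * b.1), (-d, b.2.2 + d * b.1), fun t ht => ?_⟩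
  have h := congrArg (restrict₁ t) hH
  rw [map_mul, ht, zero_mul] at h
  simp only [map_add, map_mul, map_sub, algHom_C, Polynomial.algebraMap_eq, restrict₁_X_zero,
    restrict₁_X_one, restrict₁_X_two] at h
  have h₀ := congrArg (Polynomial.eval 0) h
  have h₁ := congrArg (Polynomial.eval 1) h
  simp at h₀ h₁
  refine Prod.ext ?_ ?_
  · simp only [Prod.fst_add, Prod.smul_fst, smul_eq_mul]
    linear_combination h₁ - h₀
  · simp only [Prod.snd_add, Prod.smul_snd, smul_eq_mul]
    linear_combination h₀

end RuledSurfaces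

/-! ### Incidences on surfaces of small degree -/

section IncidenceCount

/-- The number of pairs in `A × B` related by `r`. -/
def incidenceCount {α β : Type*} (r : α → β → Prop) (A : Finset α) (B : Finset β) : ℕ :=
  ∑ a ∈ A, (B.filter (r a)).card

variable {α β : Type*} (r : α → β → Prop)

theorem incidenceCount_comm (A : Finset α) (B : Finset β) :
    incidenceCount r A B = incidenceCount (fun b a => r a b) B A := by
  simp only [incidenceCount, Finset.card_filter]
  exact Finset.sum_comm

variable {r} in
theorem incidenceCount_le_card_mul {A : Finset α} {B : Finset β} {d : ℕ}
    (h : ∀ a ∈ A, (B.filter (r a)).card ≤ d) : incidenceCount r A B ≤ A.card * d :=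
  Finset.sum_le_card_nsmul A _ d h

theorem incidenceCount_le_card_mul_card (A : Finset α) (B : Finset β) :
    incidenceCount r A B ≤ A.card * B.card :=
  incidenceCount_le_card_mul fun _ _ => Finset.card_filter_le _ _

theorem incidenceCount_mono {A A' : Finset α} {B B' : Finset β} (hA : A ⊆ A') (hB : B ⊆ B') :
    incidenceCount r A B ≤ incidenceCount r A' B' :=
  (Finset.sum_le_sum fun _ _ => Finset.card_le_card (Finset.filter_subset_filter _ hB)).trans
    (Finset.sum_le_sum_of_subset hA)

theorem incidenceCount_filter_add_left (A : Finset α) (B : Finset β) (q : α → Prop)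
    [DecidablePred q] :
    incidenceCount r (A.filter q) B + incidenceCount r (A.filter fun a => ¬q a) B =
      incidenceCount r A B :=
  Finset.sum_filter_add_sum_filter_not A q _

theorem incidenceCount_filter_add_right (A : Finset α) (B : Finset β) (q : β → Prop)
    [DecidablePred q] :
    incidenceCount r A (B.filter q) + incidenceCount r A (B.filter fun b => ¬q b) =
      incidenceCount r A B := by
  rw [incidenceCount_comm r A (B.filter q), incidenceCount_comm r A (B.filter fun b => ¬q b),
    incidenceCount_filter_add_left, incidenceCount_comm r A B]

theorem incidenceCount_add_le_union [DecidableEq α] [DecidableEq β] {A A' : Finset α}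
    (B B' : Finset β) (h : Disjoint A A') :
    incidenceCount r A B + incidenceCount r A' B' ≤ incidenceCount r (A ∪ A') (B ∪ B') :=
  calc incidenceCount r A B + incidenceCount r A' B'
      ≤ incidenceCount r A (B ∪ B') + incidenceCount r A' (B ∪ B') :=
        add_le_add (incidenceCount_mono r subset_rfl Finset.subset_union_left)
          (incidenceCount_mono r subset_rfl Finset.subset_union_right)
    _ = incidenceCount r (A ∪ A') (B ∪ B') := (Finset.sum_union h).symm

end IncidenceCount

section LineIncidences

variable {F : Type*} [Field F]

/-- The line of the first family encoded by `a` meets the line of the second family encoded by `b`,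
necessarily at the point with `x = a.1` and `y = b.1`. -/
def Meets (a b : LineCode F) : Prop := a.2.1 * b.1 + a.2.2 = b.2.1 * a.1 + b.2.2

theorem incidenceCount_meets_comm (A B : Finset (LineCode F)) :
    incidenceCount Meets A B = incidenceCount Meets B A := by
  rw [incidenceCount_comm]
  exact congrArg (incidenceCount · B A) (funext₂ fun _ _ => propext eq_comm)

theorem Meets.eval_restrict₁_eq {a b : LineCode F} (h : Meets a b) (Q : MvPolynomial (Fin 3) F) :
    (restrict₁ a Q).eval b.1 = (restrict₂ b Q).eval a.1 := by
  have hcomp : (Polynomial.aeval (R := F) b.1).comp (restrict₁ a) =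
      (Polynomial.aeval (R := F) a.1).comp (restrict₂ b) := by
    unfold Meets at h
    refine algHom_ext fun i => ?_
    fin_cases i
    · simp [restrict₁_X_zero, restrict₂_X_zero, h]
    · simp [restrict₁_X_one, restrict₂_X_one]
    · simp [restrict₁_X_two, restrict₂_X_two]
  exact DFunLike.congr_fun hcomp Q

/-- The lines encoded by `A` are pairwise skew when read in one and the same family, and at most `k`
of their codes lie on a line of code space that is a graph over the first coordinate; these are the
lines of that family in a common plane or regulus. -/
structure IsGeneric (k : ℕ) (A : Finset (LineCode F)) : Prop where
  injOn_fst : Set.InjOn Prod.fst (A : Set (LineCode F))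
  card_filter_le : ∀ v w : F × F, (A.filter fun t => t.2 = t.1 • v + w).card ≤ k

theorem IsGeneric.mono {k : ℕ} {A B : Finset (LineCode F)} (h : IsGeneric k A) (hB : B ⊆ A) :
    IsGeneric k B where
  injOn_fst := h.injOn_fst.mono (Finset.coe_subset.2 hB)
  card_filter_le v w :=
    (Finset.card_le_card (Finset.filter_subset_filter _ hB)).trans (h.card_filter_le v w)

theorem card_filter_meets_le_of_restrict₁_ne_zero {a : LineCode F} {Q : MvPolynomial (Fin 3) F}
    (ha : restrict₁ a Q ≠ 0) {B : Finset (LineCode F)}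
    (hB : Set.InjOn Prod.fst (B : Set (LineCode F))) (h : ∀ b ∈ B, restrict₂ b Q = 0) :
    (B.filter (Meets a)).card ≤ Q.totalDegree := by
  have hroots : (B.filter (Meets a)).image Prod.fst ⊆ (restrict₁ a Q).roots.toFinset := by
    refine Finset.image_subset_iff.2 fun b hb => ?_
    obtain ⟨hbB, hab⟩ := Finset.mem_filter.1 hb
    rw [Multiset.mem_toFinset, Polynomial.mem_roots ha, Polynomial.IsRoot.def,
      hab.eval_restrict₁_eq, h b hbB, Polynomial.eval_zero]
  calc (B.filter (Meets a)).card = ((B.filter (Meets a)).image Prod.fst).card :=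
        (Finset.card_image_of_injOn (hB.mono (Finset.filter_subset _ _))).symm
    _ ≤ (restrict₁ a Q).roots.toFinset.card := Finset.card_le_card hroots
    _ ≤ (restrict₁ a Q).natDegree :=
        (Multiset.toFinset_card_le _).trans (Polynomial.card_roots' _)
    _ ≤ Q.totalDegree := natDegree_restrict₁_le a Q

theorem card_filter_meets_le_of_restrict₂_ne_zero {a : LineCode F} {Q : MvPolynomial (Fin 3) F}
    (ha : restrict₂ a Q ≠ 0) {B : Finset (LineCode F)}
    (hB : Set.InjOn Prod.fst (B : Set (LineCode F))) (h : ∀ b ∈ B, restrict₁ b Q = 0) :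
    (B.filter (Meets a)).card ≤ Q.totalDegree := by
  rw [← restrict₁_swapXY] at ha
  rw [← totalDegree_swapXY]
  exact card_filter_meets_le_of_restrict₁_ne_zero ha hB fun b hb => by
    rw [restrict₂_swapXY, h b hb]

theorem incidenceCount_meets_le_add (Q : MvPolynomial (Fin 3) F) {A₁ A₂ : Finset (LineCode F)}
    (h₁ : Set.InjOn Prod.fst (A₁ : Set (LineCode F)))
    (h₂ : Set.InjOn Prod.fst (A₂ : Set (LineCode F))) :
    incidenceCount Meets A₁ A₂ ≤
      incidenceCount Meets {t ∈ A₁ | restrict₁ t Q = 0} {t ∈ A₂ | restrict₂ t Q = 0} +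
      incidenceCount Meets {t ∈ A₁ | ¬restrict₁ t Q = 0} {t ∈ A₂ | ¬restrict₂ t Q = 0} +
      ({t ∈ A₁ | ¬restrict₁ t Q = 0}.card + {t ∈ A₂ | ¬restrict₂ t Q = 0}.card) *
        Q.totalDegree := by
  have h₁₂ : incidenceCount Meets {t ∈ A₁ | restrict₁ t Q = 0} {t ∈ A₂ | ¬restrict₂ t Q = 0} ≤
      {t ∈ A₂ | ¬restrict₂ t Q = 0}.card * Q.totalDegree := by
    rw [incidenceCount_meets_comm]
    exact incidenceCount_le_card_mul fun t ht => card_filter_meets_le_of_restrict₂_ne_zero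
      (Finset.mem_filter.1 ht).2 (h₁.mono (Finset.filter_subset _ _))
      fun b hb => (Finset.mem_filter.1 hb).2
  have h₂₁ : incidenceCount Meets {t ∈ A₁ | ¬restrict₁ t Q = 0} {t ∈ A₂ | restrict₂ t Q = 0} ≤
      {t ∈ A₁ | ¬restrict₁ t Q = 0}.card * Q.totalDegree :=
    incidenceCount_le_card_mul fun t ht => card_filter_meets_le_of_restrict₁_ne_zero
      (Finset.mem_filter.1 ht).2 (h₂.mono (Finset.filter_subset _ _))
      fun b hb => (Finset.mem_filter.1 hb).2
  rw [← incidenceCount_filter_add_left Meets A₁ A₂ fun t => restrict₁ t Q = 0,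
    ← incidenceCount_filter_add_right Meets _ A₂ fun t => restrict₂ t Q = 0,
    ← incidenceCount_filter_add_right Meets {t ∈ A₁ | ¬restrict₁ t Q = 0} A₂ fun t =>
      restrict₂ t Q = 0]
  linarith

/-- Up to `M` incidences per line, all incidences between `A₁` and `A₂` are those between
subfamilies with at most `N` members in total. -/
def HasCore (N M : ℕ) (A₁ A₂ : Finset (LineCode F)) : Prop :=
  ∃ X₁ ⊆ A₁, ∃ X₂ ⊆ A₂, X₁.card + X₂.card ≤ N ∧
    incidenceCount Meets A₁ A₂ ≤ M * (A₁.card + A₂.card) + incidenceCount Meets X₁ X₂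

theorem HasCore.symm {N M : ℕ} {A₁ A₂ : Finset (LineCode F)} (h : HasCore N M A₁ A₂) :
    HasCore N M A₂ A₁ := by
  obtain ⟨X₁, hX₁, X₂, hX₂, hcard, hinc⟩ := h
  refine ⟨X₂, hX₂, X₁, hX₁, by omega, ?_⟩
  rwa [incidenceCount_meets_comm A₂, incidenceCount_meets_comm X₂, add_comm A₂.card]

theorem HasCore.of_card_le {N M : ℕ} {A₁ A₂ : Finset (LineCode F)} (h : A₁.card + A₂.card ≤ N) :
    HasCore N M A₁ A₂ :=
  ⟨A₁, subset_rfl, A₂, subset_rfl, h, Nat.le_add_left _ _⟩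

theorem HasCore.of_incidenceCount_le {N M : ℕ} {A₁ A₂ : Finset (LineCode F)}
    (h : incidenceCount Meets A₁ A₂ ≤ M * (A₁.card + A₂.card)) : HasCore N M A₁ A₂ :=
  ⟨∅, Finset.empty_subset _, ∅, Finset.empty_subset _, by simp, Nat.le_add_right_of_le h⟩

theorem HasCore.mono {N N' M M' : ℕ} {A₁ A₂ : Finset (LineCode F)} (h : HasCore N M A₁ A₂)
    (hN : N ≤ N') (hM : M ≤ M') : HasCore N' M' A₁ A₂ := by
  obtain ⟨X₁, hX₁, X₂, hX₂, hcard, hinc⟩ := h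
  exact ⟨X₁, hX₁, X₂, hX₂, hcard.trans hN,
    hinc.trans (Nat.add_le_add_right (Nat.mul_le_mul_right _ hM) _)⟩

section IrreducibleSurface

variable {p : ℕ} (hp : CharAtLeast F p) {Q : MvPolynomial (Fin 3) F} (hlt : Q.totalDegree < p)
  (hQ : Irreducible Q) {k : ℕ} {A₁ A₂ : Finset (LineCode F)}
  (hA₁Q : ∀ t ∈ A₁, restrict₁ t Q = 0) (hA₂Q : ∀ t ∈ A₂, restrict₂ t Q = 0)

include hp hlt hQ hA₁Q hA₂Q

theorem incidenceCount_meets_le_of_dvd_flecnode (hdeg : 0 < degreeOf 0 Q) (hF : Q ∣ flecnode Q)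
    (hk : 1 ≤ k) (hA₁ : IsGeneric k A₁) (hA₂ : Set.InjOn Prod.fst (A₂ : Set (LineCode F)))
    {b : LineCode F} (hbA : b ∈ A₂) (hb : restrict₂ b (pderiv 0 Q) ≠ 0) :
    incidenceCount Meets A₁ A₂ ≤ k * (A₁.card + A₂.card) := by
  refine (incidenceCount_le_card_mul_card _ _ _).trans ?_
  by_cases hb' : ∃ b' ∈ A₂, b'.1 ≠ b.1
  · obtain ⟨b', hbA', hne⟩ := hb'
    obtain ⟨v, w, hvw⟩ := exists_collinear_of_restrict₁_eq_zero hp hlt hQ hdeg hF (hA₂Q b hbA) hb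
      (hA₂Q b' hbA') hne
    have hcard : A₁.card ≤ k := by
      have h := hA₁.card_filter_le v w
      rwa [Finset.filter_true_of_mem fun t ht => hvw t (hA₁Q t ht)] at h
    nlinarith
  · push Not at hb'
    have hcard : A₂.card ≤ 1 := Finset.card_le_one.2 fun x hx y hy =>
      hA₂ hx hy ((hb' x hx).trans (hb' y hy).symm)
    nlinarith

/-- The core consists of the lines along which `∂Q/∂z` vanishes; any other line meets few of
them. -/
theorem hasCore_of_restrict₂_pderiv_eq_zero
    (hA₁ : Set.InjOn Prod.fst (A₁ : Set (LineCode F)))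
    (hA₂ : Set.InjOn Prod.fst (A₂ : Set (LineCode F)))
    (hsing : ∀ t ∈ A₂, restrict₂ t (pderiv 0 Q) = 0) :
    HasCore (4 * Q.totalDegree ^ 2) Q.totalDegree A₁ A₂ := by
  refine ⟨{t ∈ A₁ | restrict₁ t (pderiv 0 Q) = 0}, Finset.filter_subset _ _, A₂, subset_rfl, ?_, ?_⟩
  · have h₁ := card_le_of_restrict₁_pderiv_zero hp hQ hlt (hA₁.mono (Finset.filter_subset _ _))
      (fun t ht => hA₁Q t (Finset.mem_filter.1 ht).1) fun t ht => (Finset.mem_filter.1 ht).2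
    have h₂ := card_le_of_restrict₁_pderiv_zero hp ((MulEquiv.irreducible_iff swapXY).2 hQ)
      (by rwa [totalDegree_swapXY]) hA₂ (fun t ht => by rw [restrict₁_swapXY, hA₂Q t ht])
      (fun t ht => by rw [pderiv_zero_swapXY, restrict₁_swapXY, hsing t ht])
    rw [totalDegree_swapXY] at h₂
    linarith
  · have hreg : incidenceCount Meets {t ∈ A₁ | ¬restrict₁ t (pderiv 0 Q) = 0} A₂ ≤
        A₁.card * Q.totalDegree :=
      (incidenceCount_le_card_mul fun a ha => (card_filter_meets_le_of_restrict₁_ne_zero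
        (Finset.mem_filter.1 ha).2 hA₂ hsing).trans
          ((totalDegree_pderiv_le _ _).trans (Nat.sub_le _ _))).trans
        (Nat.mul_le_mul_right _ (Finset.card_filter_le _ _))
    rw [← incidenceCount_filter_add_left Meets A₁ A₂ fun t => restrict₁ t (pderiv 0 Q) = 0]
    nlinarith

theorem hasCore_of_dvd_flecnode (hdeg : 0 < degreeOf 0 Q) (hF : Q ∣ flecnode Q) (hk : 1 ≤ k)
    (hA₁ : IsGeneric k A₁) (hA₂ : IsGeneric k A₂) :
    HasCore (12 * Q.totalDegree ^ 2) (Q.totalDegree + k) A₁ A₂ := by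
  by_cases hreg : ∃ b ∈ A₂, restrict₂ b (pderiv 0 Q) ≠ 0
  · obtain ⟨b, hbA, hb⟩ := hreg
    have h := incidenceCount_meets_le_of_dvd_flecnode hp hlt hQ hA₁Q hA₂Q hdeg hF hk hA₁
      hA₂.injOn_fst hbA hb
    exact .of_incidenceCount_le (h.trans (Nat.mul_le_mul_right _ (Nat.le_add_left _ _)))
  · push Not at hreg
    exact (hasCore_of_restrict₂_pderiv_eq_zero hp hlt hQ hA₁Q hA₂Q hA₁.injOn_fst hA₂.injOn_fst
      hreg).mono (by omega) (by omega)

/-- If the surface is ruled by neither family, each family has few lines on it, since these also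
lie on the flecnodal surface. -/
theorem hasCore_of_irreducible (hk : 1 ≤ k) (hA₁ : IsGeneric k A₁) (hA₂ : IsGeneric k A₂) :
    HasCore (12 * Q.totalDegree ^ 2) (Q.totalDegree + k) A₁ A₂ := by
  have hQ' : Irreducible (swapXY Q) := (MulEquiv.irreducible_iff swapXY).2 hQ
  have hlt' : (swapXY Q).totalDegree < p := by rwa [totalDegree_swapXY]
  have hA₁Q' : ∀ t ∈ A₁, restrict₂ t (swapXY Q) = 0 := fun t ht => by
    rw [restrict₂_swapXY, hA₁Q t ht]
  have hA₂Q' : ∀ t ∈ A₂, restrict₁ t (swapXY Q) = 0 := fun t ht => by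
    rw [restrict₁_swapXY, hA₂Q t ht]
  rcases Nat.eq_zero_or_pos (degreeOf 0 Q) with hdeg | hdeg
  · have hpd : pderiv 0 Q = 0 := pderiv_eq_zero_of_notMem_vars (by
      rw [mem_vars_iff_degreeOf_ne_zero, not_not, hdeg])
    exact (hasCore_of_restrict₂_pderiv_eq_zero hp hlt hQ hA₁Q hA₂Q hA₁.injOn_fst hA₂.injOn_fst
      fun t _ => by rw [hpd, map_zero]).mono (by omega) (by omega)
  have hdeg' : 0 < degreeOf 0 (swapXY Q) := by rwa [degreeOf_zero_swapXY]
  by_cases hF : Q ∣ flecnode Q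
  · exact hasCore_of_dvd_flecnode hp hlt hQ hA₁Q hA₂Q hdeg hF hk hA₁ hA₂
  by_cases hF' : swapXY Q ∣ flecnode (swapXY Q)
  · have h := hasCore_of_dvd_flecnode hp hlt' hQ' hA₂Q' hA₁Q' hdeg' hF' hk hA₂ hA₁
    rw [totalDegree_swapXY] at h
    exact h.symm
  have h₁ := card_le_of_restrict₁_eq_zero hQ hdeg hF hA₁.injOn_fst hA₁Q
    fun t ht => restrict₁_flecnode_eq_zero (hA₁Q t ht)
  have h₂ := card_le_of_restrict₁_eq_zero hQ' hdeg' hF' hA₂.injOn_fst hA₂Q'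
    fun t ht => restrict₁_flecnode_eq_zero (hA₂Q' t ht)
  have hd₁ := totalDegree_flecnode_le Q
  have hd₂ := totalDegree_flecnode_le (swapXY Q)
  rw [totalDegree_swapXY] at hd₂ h₂
  exact .of_card_le (by nlinarith)

end IrreducibleSurface

theorem HasCore.union {N N' M M' : ℕ} (Q : MvPolynomial (Fin 3) F) {A₁ A₂ : Finset (LineCode F)}
    (hA₁ : Set.InjOn Prod.fst (A₁ : Set (LineCode F)))
    (hA₂ : Set.InjOn Prod.fst (A₂ : Set (LineCode F)))
    (hon : HasCore N M {t ∈ A₁ | restrict₁ t Q = 0} {t ∈ A₂ | restrict₂ t Q = 0})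
    (hoff : HasCore N' M' {t ∈ A₁ | ¬restrict₁ t Q = 0} {t ∈ A₂ | ¬restrict₂ t Q = 0}) :
    HasCore (N + N') (max M (M' + Q.totalDegree)) A₁ A₂ := by
  obtain ⟨X₁, hX₁, X₂, hX₂, hXcard, hX⟩ := hon
  obtain ⟨Y₁, hY₁, Y₂, hY₂, hYcard, hY⟩ := hoff
  refine ⟨X₁ ∪ Y₁, Finset.union_subset (hX₁.trans (Finset.filter_subset _ _))
      (hY₁.trans (Finset.filter_subset _ _)), X₂ ∪ Y₂,
    Finset.union_subset (hX₂.trans (Finset.filter_subset _ _))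
      (hY₂.trans (Finset.filter_subset _ _)), ?_, ?_⟩
  · have h₁ := Finset.card_union_le X₁ Y₁
    have h₂ := Finset.card_union_le X₂ Y₂
    omega
  · have hXY := incidenceCount_add_le_union Meets X₂ Y₂
      ((Finset.disjoint_filter_filter_not A₁ A₁ fun t => restrict₁ t Q = 0).mono hX₁ hY₁)
    have hsplit := incidenceCount_meets_le_add Q hA₁ hA₂
    rw [← Finset.card_filter_add_card_filter_not (s := A₁) fun t => restrict₁ t Q = 0,
      ← Finset.card_filter_add_card_filter_not (s := A₂) fun t => restrict₂ t Q = 0]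
    set K := max M (M' + Q.totalDegree)
    have hK : M ≤ K := le_max_left _ _
    have hK' : M' + Q.totalDegree ≤ K := le_max_right _ _
    have hon := Nat.mul_le_mul_right
      ({t ∈ A₁ | restrict₁ t Q = 0}.card + {t ∈ A₂ | restrict₂ t Q = 0}.card) hK
    have hoff := Nat.mul_le_mul_right
      ({t ∈ A₁ | ¬restrict₁ t Q = 0}.card + {t ∈ A₂ | ¬restrict₂ t Q = 0}.card) hK'
    linarith

theorem totalDegree_pos_of_not_isUnit {Q : MvPolynomial (Fin 3) F} (hQ : Q ≠ 0)
    (hu : ¬IsUnit Q) : 0 < Q.totalDegree := by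
  by_contra! hd
  rw [Nat.le_zero, totalDegree_eq_zero_iff_eq_C] at hd
  rw [hd] at hQ hu
  exact hu ((IsUnit.mk0 _ (C_ne_zero.1 hQ)).map C)

/-- Irreducible factors of `Q` are split off one at a time. -/
theorem hasCore_of_restrict_eq_zero {p : ℕ} (hp : CharAtLeast F p) {k : ℕ} (hk : 1 ≤ k)
    {Q : MvPolynomial (Fin 3) F} (hQ : Q ≠ 0) (hlt : Q.totalDegree < p)
    {A₁ A₂ : Finset (LineCode F)} (hA₁ : IsGeneric k A₁) (hA₂ : IsGeneric k A₂)
    (hA₁Q : ∀ t ∈ A₁, restrict₁ t Q = 0) (hA₂Q : ∀ t ∈ A₂, restrict₂ t Q = 0) :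
    HasCore (12 * Q.totalDegree ^ 2) (Q.totalDegree + k) A₁ A₂ := by
  induction hD : Q.totalDegree using Nat.strong_induction_on generalizing Q A₁ A₂ with
  | _ D ih =>
  by_cases hu : IsUnit Q
  · have hempty : A₁ = ∅ := Finset.eq_empty_of_forall_notMem fun t ht =>
      (hu.map (restrict₁ t)).ne_zero (hA₁Q t ht)
    subst hempty
    exact .of_incidenceCount_le (by simp [incidenceCount])
  obtain ⟨R, hR, Q', rfl⟩ := WfDvdMonoid.exists_irreducible_factor hu hQ
  have hRpos := totalDegree_pos_of_not_isUnit hR.ne_zero hR.not_isUnit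
  have hQ' : Q' ≠ 0 := right_ne_zero_of_mul hQ
  rw [totalDegree_mul_of_isDomain hR.ne_zero hQ'] at hlt hD
  have hon := hasCore_of_irreducible hp (by omega) hR (k := k)
    (A₁ := {t ∈ A₁ | restrict₁ t R = 0}) (A₂ := {t ∈ A₂ | restrict₂ t R = 0})
    (fun t ht => (Finset.mem_filter.1 ht).2) (fun t ht => (Finset.mem_filter.1 ht).2) hk
    (hA₁.mono (Finset.filter_subset _ _)) (hA₂.mono (Finset.filter_subset _ _))
  have hoff := ih Q'.totalDegree (by omega) hQ' (by omega)
    (hA₁.mono (Finset.filter_subset (fun t => ¬restrict₁ t R = 0) _))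
    (hA₂.mono (Finset.filter_subset (fun t => ¬restrict₂ t R = 0) _))
    (fun t ht => by
      obtain ⟨htA, htR⟩ := Finset.mem_filter.1 ht
      exact (mul_eq_zero.1 ((map_mul _ R Q').symm.trans (hA₁Q t htA))).resolve_left htR)
    (fun t ht => by
      obtain ⟨htA, htR⟩ := Finset.mem_filter.1 ht
      exact (mul_eq_zero.1 ((map_mul _ R Q').symm.trans (hA₂Q t htA))).resolve_left htR) rfl
  exact (hon.union R hA₁.injOn_fst hA₂.injOn_fst hoff).mono (by nlinarith) (by omega)

end LineIncidences

/-! ### Random sampling -/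

section Sampling

variable {α β : Type*}

/-- The probability of the outcome `S` when every element of `V` is chosen independently with
probability `p`. -/
def sampleWeight (p : ℝ) (V S : Finset α) : ℝ := p ^ S.card * (1 - p) ^ (V \ S).card

theorem sampleWeight_pos {p : ℝ} (hp₀ : 0 < p) (hp₁ : p < 1) (V S : Finset α) :
    0 < sampleWeight p V S :=
  mul_pos (pow_pos hp₀ _) (pow_pos (sub_pos.2 hp₁) _)

theorem sum_sampleWeight_mul_prod (p : ℝ) (V : Finset α) (f : α → ℝ) :
    ∑ S ∈ V.powerset, sampleWeight p V S * ∏ u ∈ S, f u = ∏ u ∈ V, (p * f u + (1 - p)) := by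
  rw [Finset.prod_add]
  refine Finset.sum_congr rfl fun S _ => ?_
  rw [Finset.prod_mul_distrib, Finset.prod_const, Finset.prod_const, sampleWeight]
  ring

theorem sum_sampleWeight (p : ℝ) (V : Finset α) : ∑ S ∈ V.powerset, sampleWeight p V S = 1 := by
  simpa using sum_sampleWeight_mul_prod p V fun _ => 1

theorem sum_sampleWeight_mul_two_pow (p : ℝ) (V : Finset α) :
    ∑ S ∈ V.powerset, sampleWeight p V S * 2 ^ S.card = (1 + p) ^ V.card := by
  have h := sum_sampleWeight_mul_prod p V fun _ => 2
  simp only [Finset.prod_const] at h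
  rw [h]
  ring

theorem sum_sampleWeight_mul_half_pow (p : ℝ) (V : Finset α) (q : α → Prop) :
    ∑ S ∈ V.powerset, sampleWeight p V S * (1 / 2) ^ (S.filter q).card =
      (1 - p / 2) ^ (V.filter q).card := by
  have h := sum_sampleWeight_mul_prod p V fun u => if q u then 1 / 2 else 1
  have hfactor (u : α) : p * (if q u then 1 / 2 else 1) + (1 - p) =
      if q u then 1 - p / 2 else 1 := by
    split_ifs <;> ring
  simpa only [hfactor, Finset.prod_ite, Finset.prod_const, one_pow, mul_one] using h

theorem exists_sampleWeight_average_le {p : ℝ} (hp₀ : 0 < p) (hp₁ : p < 1) (V : Finset α)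
    {X : Finset α → ℝ} {c : ℝ} (h : ∑ S ∈ V.powerset, sampleWeight p V S * X S ≤ c) :
    ∃ S ⊆ V, X S ≤ c := by
  have hle : ∑ S ∈ V.powerset, sampleWeight p V S * X S ≤
      ∑ S ∈ V.powerset, sampleWeight p V S * c := by
    rwa [← Finset.sum_mul, sum_sampleWeight, one_mul]
  obtain ⟨S, hS, hle⟩ := Finset.exists_le_of_sum_le (Finset.powerset_nonempty V) hle
  exact ⟨S, Finset.mem_powerset.1 hS, le_of_mul_le_mul_left hle (sampleWeight_pos hp₀ hp₁ V S)⟩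

/-- The exponential moments `2 ^ |S|` and `∑ w, 2 ^ (-|S ∩ N(w)|)` of a random subset `S` are
simultaneously at most twice their expectations. -/
theorem exists_subset_two_pow_card_le {p : ℝ} (hp₀ : 0 < p) (hp₁ : p < 1) (V : Finset α)
    {W : Finset β} (hW : W.Nonempty) (r : β → α → Prop) {d : ℕ}
    (hd : ∀ w ∈ W, d ≤ (V.filter (r w)).card) :
    ∃ S ⊆ V, (2 : ℝ) ^ S.card ≤ 2 * (1 + p) ^ V.card ∧
      ∑ w ∈ W, (1 / 2 : ℝ) ^ (S.filter (r w)).card ≤ 2 * (W.card * (1 - p / 2) ^ d) := by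
  set A := (1 + p) ^ V.card
  set B := W.card * (1 - p / 2) ^ d
  have hA : 0 < A := pow_pos (by linarith) _
  have hB : 0 < B := mul_pos (Nat.cast_pos.2 hW.card_pos) (pow_pos (by linarith) _)
  have hsecond : ∑ S ∈ V.powerset, sampleWeight p V S *
      ∑ w ∈ W, (1 / 2 : ℝ) ^ (S.filter (r w)).card ≤ B := by
    simp only [Finset.mul_sum]
    rw [Finset.sum_comm]
    simp only [sum_sampleWeight_mul_half_pow]
    refine (Finset.sum_le_card_nsmul W _ ((1 - p / 2) ^ d) fun w hw => ?_).trans_eq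
      (nsmul_eq_mul _ _)
    exact pow_le_pow_of_le_one (by linarith) (by linarith) (hd w hw)
  have haverage : ∑ S ∈ V.powerset, sampleWeight p V S *
      (2 ^ S.card / A + (∑ w ∈ W, (1 / 2 : ℝ) ^ (S.filter (r w)).card) / B) ≤ 2 := by
    simp only [mul_add, Finset.sum_add_distrib, ← mul_div_assoc, ← Finset.sum_div]
    rw [sum_sampleWeight_mul_two_pow, div_self hA.ne']
    linarith [(div_le_one hB).2 hsecond]
  obtain ⟨S, hSV, hS⟩ := exists_sampleWeight_average_le hp₀ hp₁ V haverage
  have h₁ : 0 ≤ (2 : ℝ) ^ S.card / A := by positivity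
  have h₂ : 0 ≤ (∑ w ∈ W, (1 / 2 : ℝ) ^ (S.filter (r w)).card) / B := by positivity
  exact ⟨S, hSV, (div_le_iff₀ hA).1 (by linarith), (div_le_iff₀ hB).1 (by linarith)⟩

theorem card_le_of_two_pow_card_le {n N : ℕ} {p : ℝ} (hp : 0 ≤ p)
    (h : (2 : ℝ) ^ n ≤ 2 * (1 + p) ^ N) : (n : ℝ) ≤ 1 + 2 * p * N := by
  have hexp : (1 + p) ^ N ≤ Real.exp (N * p) := by
    rw [Real.exp_nat_mul, add_comm]
    exact pow_le_pow_left₀ (by linarith) (Real.add_one_le_exp p) _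
  have hlog := Real.log_le_log (by positivity) (h.trans (by linarith : _ ≤ 2 * Real.exp (N * p)))
  rw [Real.log_pow, Real.log_mul two_ne_zero (Real.exp_ne_zero _), Real.log_exp] at hlog
  have hlog₂ := Real.log_two_gt_d9
  have hNp : 0 ≤ N * p := by positivity
  by_contra! hcon
  nlinarith

theorem exp_neg_half_mul_two_pow_le {s : ℝ} (hs : 10000 ≤ s) {m : ℕ} (hm : (m : ℝ) ≤ s / 8) :
    Real.exp (-(s / 2)) * 2 ^ m ≤ 1 / 8 := by
  have hpow : (2 : ℝ) ^ m ≤ Real.exp (s / 8) := by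
    rw [← Real.exp_log (by positivity : (0 : ℝ) < 2 ^ m), Real.log_pow]
    have hlog := Real.log_two_lt_d9
    exact Real.exp_le_exp.2 (by nlinarith [m.cast_nonneg (α := ℝ)])
  calc Real.exp (-(s / 2)) * 2 ^ m ≤ Real.exp (-(s / 2)) * Real.exp (s / 8) := by gcongr
    _ = (Real.exp (3 * s / 8))⁻¹ := by rw [← Real.exp_add, ← Real.exp_neg]; ring_nf
    _ ≤ 1 / 8 := by
        rw [one_div]
        exact inv_anti₀ (by norm_num) (by linarith [Real.add_one_le_exp (3 * s / 8)])

/-- A sample of density `1 / 10000` in which most vertices of `W` have many neighbours: the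
exceptional ones contribute at least `2 ^ (-m)` each to the exponential moment. -/
theorem exists_sample (V : Finset α) (W : Finset β) (r : β → α → Prop) {s : ℝ} (hs : 10000 ≤ s)
    {m : ℕ} (hm : (m : ℝ) ≤ s / 8) (hr : ∀ w ∈ W, 10000 * s ≤ (V.filter (r w)).card) :
    ∃ S ⊆ V, (S.card : ℝ) ≤ 1 + 2 / 10000 * V.card ∧
      ((W.filter fun w => (S.filter (r w)).card ≤ m).card : ℝ) ≤ W.card / 4 := by
  rcases W.eq_empty_or_nonempty with rfl | hW
  · exact ⟨∅, Finset.empty_subset _, by rw [Finset.card_empty, Nat.cast_zero]; positivity, by simp⟩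
  obtain ⟨S, hSV, hcard, hmoment⟩ := exists_subset_two_pow_card_le (p := 1 / 10000) (by norm_num)
    (by norm_num) V hW r fun w hw => Nat.ceil_le.2 (hr w hw)
  refine ⟨S, hSV, (card_le_of_two_pow_card_le (by norm_num) hcard).trans (by linarith), ?_⟩
  set B := W.filter fun w => (S.filter (r w)).card ≤ m
  have hB : B.card * (1 / 2 : ℝ) ^ m ≤ ∑ w ∈ W, (1 / 2 : ℝ) ^ (S.filter (r w)).card :=
    calc B.card * (1 / 2 : ℝ) ^ m = B.card • (1 / 2 : ℝ) ^ m := (nsmul_eq_mul _ _).symm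
      _ ≤ ∑ w ∈ B, (1 / 2 : ℝ) ^ (S.filter (r w)).card :=
          Finset.card_nsmul_le_sum _ _ _ fun w hw =>
            pow_le_pow_of_le_one (by norm_num) (by norm_num) (Finset.mem_filter.1 hw).2
      _ ≤ ∑ w ∈ W, (1 / 2 : ℝ) ^ (S.filter (r w)).card :=
          Finset.sum_le_sum_of_subset_of_nonneg (Finset.filter_subset _ _) fun _ _ _ => by
            positivity
  have hexp : (1 - 1 / 10000 / 2 : ℝ) ^ ⌈10000 * s⌉₊ ≤ Real.exp (-(s / 2)) :=
    calc (1 - 1 / 10000 / 2 : ℝ) ^ ⌈10000 * s⌉₊ ≤ Real.exp (-(1 / 20000)) ^ ⌈10000 * s⌉₊ :=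
          pow_le_pow_left₀ (by norm_num) (by linarith [Real.add_one_le_exp (-(1 / 20000) : ℝ)]) _
      _ = Real.exp (⌈10000 * s⌉₊ * -(1 / 20000)) := (Real.exp_nat_mul _ _).symm
      _ ≤ Real.exp (-(s / 2)) := Real.exp_le_exp.2 (by linarith [Nat.le_ceil (10000 * s)])
  calc (B.card : ℝ) = B.card * (1 / 2 : ℝ) ^ m * 2 ^ m := by
        rw [mul_assoc, ← mul_pow]
        norm_num
    _ ≤ 2 * (W.card * Real.exp (-(s / 2))) * 2 ^ m := by
        refine mul_le_mul_of_nonneg_right ((hB.trans hmoment).trans ?_) (by positivity)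
        gcongr
    _ = 2 * W.card * (Real.exp (-(s / 2)) * 2 ^ m) := by ring
    _ ≤ 2 * W.card * (1 / 8) := by gcongr; exact exp_neg_half_mul_two_pow_le hs hm
    _ = W.card / 4 := by ring

end Sampling

section ParameterCounting

variable {F : Type*} [Field F]

theorem exists_ne_zero_forall_map_eq_zero {M ι : Type*} [AddCommGroup M] [Module F M]
    [Module.Finite F M] [Fintype ι] (φ : ι → M →ₗ[F] F[X]) {n : ℕ}
    (hφ : ∀ i x, (φ i x).natDegree < n) (h : Fintype.card ι * n < Module.finrank F M) :
    ∃ x ≠ 0, ∀ i, φ i x = 0 := by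
  let Φ : M →ₗ[F] ι × Fin n → F := LinearMap.pi fun ij => Polynomial.lcoeff F ij.2 ∘ₗ φ ij.1
  obtain ⟨x, hx, hx₀⟩ := Submodule.exists_mem_ne_zero_of_ne_bot
    (LinearMap.ker_ne_bot_of_finrank_lt (f := Φ) (by simpa using h))
  refine ⟨x, hx₀, fun i => Polynomial.ext fun j => ?_⟩
  rcases lt_or_ge j n with hj | hj
  · exact congrFun (LinearMap.mem_ker.1 hx) (i, ⟨j, hj⟩)
  · exact Polynomial.coeff_eq_zero_of_natDegree_lt ((hφ i x).trans_le hj)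

theorem finrank_restrictDegree (σ : Type*) [Fintype σ] (m : ℕ) :
    Module.finrank F (restrictDegree σ F m) = (m + 1) ^ Fintype.card σ := by
  have e : {n : σ →₀ ℕ // ∀ i, n i ≤ m} ≃ (σ → Fin (m + 1)) :=
    (Finsupp.equivFunOnFinite.subtypeEquiv (q := fun n => ∀ i, n i ≤ m) fun _ => Iff.rfl).trans
      ((Equiv.subtypePiEquivPi (p := fun _ n => n ≤ m)).trans
        (Equiv.piCongrRight fun _ => (Equiv.subtypeEquivRight fun _ => Nat.lt_succ_iff.symm).trans
          Fin.equivSubtype.symm))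
  have b := (basisRestrictSupport F {n : σ →₀ ℕ | ∀ i, n i ≤ m}).reindex e
  rw [restrictDegree, Module.finrank_eq_card_basis b]
  simp

theorem totalDegree_le_of_mem_restrictDegree {σ : Type*} [Fintype σ] {m : ℕ}
    {Q : MvPolynomial σ F} (hQ : Q ∈ restrictDegree σ F m) :
    Q.totalDegree ≤ Fintype.card σ * m := by
  refine Finset.sup_le fun n hn => ?_
  rw [Finsupp.sum_fintype _ _ fun _ => rfl]
  exact Finset.sum_le_card_nsmul _ _ m fun i _ => (mem_restrictDegree _ _ _).1 hQ n hn i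

theorem exists_restrict_eq_zero (S₁ S₂ : Finset (LineCode F)) {e : ℕ}
    (he : 3 * (S₁.card + S₂.card) < e ^ 2) :
    ∃ Q : MvPolynomial (Fin 3) F, Q ≠ 0 ∧ Q.totalDegree ≤ 3 * e ∧
      (∀ t ∈ S₁, restrict₁ t Q = 0) ∧ ∀ t ∈ S₂, restrict₂ t Q = 0 := by
  obtain ⟨m, rfl⟩ : ∃ m, e = m + 1 := Nat.exists_eq_succ_of_ne_zero (by rintro rfl; simp at he)
  have hdeg (Q : restrictDegree (Fin 3) F m) : Q.1.totalDegree ≤ 3 * m := by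
    simpa using totalDegree_le_of_mem_restrictDegree Q.2
  obtain ⟨Q, hQ, h⟩ := exists_ne_zero_forall_map_eq_zero (n := 3 * (m + 1))
    (fun i : S₁ ⊕ S₂ => (Sum.elim (fun t => (restrict₁ t.1).toLinearMap)
      (fun t => (restrict₂ t.1).toLinearMap) i) ∘ₗ (restrictDegree (Fin 3) F m).subtype)
    (by
      rintro (t | t) Q
      exacts [((natDegree_restrict₁_le t.1 Q.1).trans (hdeg Q)).trans_lt (by omega),
        ((natDegree_restrict₂_le t.1 Q.1).trans (hdeg Q)).trans_lt (by omega)])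
    (by
      rw [finrank_restrictDegree, Fintype.card_sum, Fintype.card_coe, Fintype.card_coe,
        Fintype.card_fin]
      nlinarith)
  exact ⟨Q, fun h₀ => hQ (Subtype.ext h₀), (hdeg Q).trans (by omega),
    fun t ht => h (Sum.inl ⟨t, ht⟩), fun t ht => h (Sum.inr ⟨t, ht⟩)⟩

end ParameterCounting

/-! ### Incidences between generic families of lines -/

section IncidenceBound

variable {F : Type*} [Field F]

/-- The surface is chosen to contain a random sample of the lines; a line that meets more lines of
the sample than the degree lies on the surface. -/
theorem exists_surface {A₁ A₂ : Finset (LineCode F)}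
    (h₁ : Set.InjOn Prod.fst (A₁ : Set (LineCode F)))
    (h₂ : Set.InjOn Prod.fst (A₂ : Set (LineCode F))) {s : ℝ} (hs : 10000 ≤ s)
    (hcard : s ^ 2 = A₁.card + A₂.card)
    (hr₁ : ∀ a ∈ A₁, 10000 * s ≤ (A₂.filter (Meets a)).card)
    (hr₂ : ∀ b ∈ A₂, 10000 * s ≤ (A₁.filter (Meets b)).card) :
    ∃ Q : MvPolynomial (Fin 3) F, Q ≠ 0 ∧ (Q.totalDegree : ℝ) ≤ s / 8 ∧
      (({t ∈ A₁ | ¬restrict₁ t Q = 0}.card + {t ∈ A₂ | ¬restrict₂ t Q = 0}.card : ℕ) : ℝ) ≤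
        s ^ 2 / 4 := by
  obtain ⟨e, hse, hes⟩ : ∃ e : ℕ, 3 / 100 * s < e ∧ (e : ℝ) ≤ 3 / 100 * s + 1 :=
    ⟨⌊3 / 100 * s⌋₊ + 1, by exact_mod_cast Nat.lt_floor_add_one _, by
      push_cast
      linarith [Nat.floor_le (a := 3 / 100 * s) (by positivity)]⟩
  have hm : ((3 * e : ℕ) : ℝ) ≤ s / 8 := by
    push_cast
    linarith
  obtain ⟨S₂, hS₂A, hS₂, hpoor₁⟩ := exists_sample A₂ A₁ Meets hs hm hr₁
  obtain ⟨S₁, hS₁A, hS₁, hpoor₂⟩ := exists_sample A₁ A₂ Meets hs hm hr₂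
  have hsample : 3 * (S₁.card + S₂.card) < e ^ 2 := by
    have h : (3 * (S₁.card + S₂.card) : ℝ) < (e : ℝ) ^ 2 := by nlinarith
    exact_mod_cast h
  obtain ⟨Q, hQ, hdeg, hS₁Q, hS₂Q⟩ := exists_restrict_eq_zero S₁ S₂ hsample
  refine ⟨Q, hQ, (Nat.cast_le.2 hdeg).trans hm, ?_⟩
  have hoff₁ : {t ∈ A₁ | ¬restrict₁ t Q = 0}.card ≤
      (A₁.filter fun a => (S₂.filter (Meets a)).card ≤ 3 * e).card :=
    Finset.card_le_card fun t ht => Finset.mem_filter.2 ⟨(Finset.mem_filter.1 ht).1,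
      (card_filter_meets_le_of_restrict₁_ne_zero (Finset.mem_filter.1 ht).2
        (h₂.mono (Finset.coe_subset.2 hS₂A)) hS₂Q).trans hdeg⟩
  have hoff₂ : {t ∈ A₂ | ¬restrict₂ t Q = 0}.card ≤
      (A₂.filter fun b => (S₁.filter (Meets b)).card ≤ 3 * e).card :=
    Finset.card_le_card fun t ht => Finset.mem_filter.2 ⟨(Finset.mem_filter.1 ht).1,
      (card_filter_meets_le_of_restrict₂_ne_zero (Finset.mem_filter.1 ht).2
        (h₁.mono (Finset.coe_subset.2 hS₁A)) hS₁Q).trans hdeg⟩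
  have hoff₁' := (Nat.cast_le (α := ℝ)).2 hoff₁
  have hoff₂' := (Nat.cast_le (α := ℝ)).2 hoff₂
  push_cast
  linarith

/-- The bound for `N` lines in two families of which at most `k` are in a common plane or
regulus. -/
def lineBound (k N : ℕ) : ℝ :=
  10000 * (N * √N) + 2 * k * N

theorem sqrt_add_lineBound_le (k N : ℕ) :
    10000 * √((N + 1 : ℕ) : ℝ) + lineBound k N ≤ lineBound k (N + 1) := by
  have hsqrt : √(N : ℝ) ≤ √((N + 1 : ℕ) : ℝ) := Real.sqrt_le_sqrt (by push_cast; linarith)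
  have hmul := mul_le_mul_of_nonneg_left hsqrt N.cast_nonneg
  unfold lineBound
  push_cast at hmul ⊢
  linarith

theorem lineBound_le_of_le_div_four (k : ℕ) {n N : ℕ} (h : (n : ℝ) ≤ N / 4) :
    lineBound k n ≤ 1250 * (N * √N) + k * N / 2 := by
  have hsqrt : √(n : ℝ) ≤ √N / 2 := by
    refine Real.sqrt_le_iff.2 ⟨by positivity, ?_⟩
    rw [div_pow, Real.sq_sqrt N.cast_nonneg]
    linarith
  have hmain : n * √(n : ℝ) ≤ N / 4 * (√N / 2) :=
    mul_le_mul h hsqrt (Real.sqrt_nonneg _) (by positivity)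
  have hk := mul_le_mul_of_nonneg_left h (by positivity : (0 : ℝ) ≤ 2 * k)
  unfold lineBound
  linarith

theorem incidenceCount_meets_le_of_erase {k : ℕ} {A₁ A₂ : Finset (LineCode F)} {a : LineCode F}
    (ha : a ∈ A₁) (hpoor : ((A₂.filter (Meets a)).card : ℝ) ≤ 10000 * √(A₁.card + A₂.card : ℕ))
    (ih : (incidenceCount Meets (A₁.erase a) A₂ : ℝ) ≤
      lineBound k ((A₁.erase a).card + A₂.card)) :
    (incidenceCount Meets A₁ A₂ : ℝ) ≤ lineBound k (A₁.card + A₂.card) := by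
  have hcard : A₁.card + A₂.card = (A₁.erase a).card + A₂.card + 1 := by
    rw [← Finset.card_erase_add_one ha]
    ring
  have hinc : incidenceCount Meets A₁ A₂ =
      (A₂.filter (Meets a)).card + incidenceCount Meets (A₁.erase a) A₂ :=
    (Finset.add_sum_erase A₁ _ ha).symm
  rw [hcard] at hpoor ⊢
  rw [hinc]
  push_cast at hpoor ⊢
  have hstep := sqrt_add_lineBound_le k ((A₁.erase a).card + A₂.card)
  push_cast at hstep
  linarith

/-- Lines on the surface are reduced to a small core, lines off it are few. -/
theorem incidenceCount_meets_le_of_surface {p : ℕ} (hp : CharAtLeast F p) {k : ℕ} (hk : 1 ≤ k)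
    {A₁ A₂ : Finset (LineCode F)} (hA₁ : IsGeneric k A₁) (hA₂ : IsGeneric k A₂) {N : ℕ}
    (hN : A₁.card + A₂.card = N) (hNpos : 0 < N) {Q : MvPolynomial (Fin 3) F} (hQ : Q ≠ 0)
    (hlt : Q.totalDegree < p) (hdeg : (Q.totalDegree : ℝ) ≤ √N / 8)
    (hoff : (({t ∈ A₁ | ¬restrict₁ t Q = 0}.card + {t ∈ A₂ | ¬restrict₂ t Q = 0}.card : ℕ) : ℝ) ≤
      N / 4)
    (ih : ∀ X₁ ⊆ A₁, ∀ X₂ ⊆ A₂, X₁.card + X₂.card < N →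
      (incidenceCount Meets X₁ X₂ : ℝ) ≤ lineBound k (X₁.card + X₂.card)) :
    (incidenceCount Meets A₁ A₂ : ℝ) ≤ lineBound k N := by
  have hsqrt : √(N : ℝ) ^ 2 = N := Real.sq_sqrt N.cast_nonneg
  have hNpos' : (0 : ℝ) < N := Nat.cast_pos.2 hNpos
  have hsmall : ∀ X₁ ⊆ A₁, ∀ X₂ ⊆ A₂, ((X₁.card + X₂.card : ℕ) : ℝ) ≤ N / 4 →
      (incidenceCount Meets X₁ X₂ : ℝ) ≤ 1250 * (N * √N) + k * N / 2 := fun X₁ h₁ X₂ h₂ h =>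
    (ih X₁ h₁ X₂ h₂ (Nat.cast_lt.1 (h.trans_lt (div_lt_self hNpos' (by norm_num))))).trans
      (lineBound_le_of_le_div_four k h)
  obtain ⟨X₁, hX₁, X₂, hX₂, hXcard, hX⟩ := hasCore_of_restrict_eq_zero hp hk hQ hlt
    (hA₁.mono (Finset.filter_subset (restrict₁ · Q = 0) _))
    (hA₂.mono (Finset.filter_subset (restrict₂ · Q = 0) _))
    (fun t ht => (Finset.mem_filter.1 ht).2) fun t ht => (Finset.mem_filter.1 ht).2
  have hcore := hsmall X₁ (hX₁.trans (Finset.filter_subset _ _)) X₂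
    (hX₂.trans (Finset.filter_subset _ _)) <| by
      have h : ((X₁.card + X₂.card : ℕ) : ℝ) ≤ 12 * (Q.totalDegree : ℝ) ^ 2 := by
        exact_mod_cast hXcard
      have hsq := pow_le_pow_left₀ (Nat.cast_nonneg _) hdeg 2
      rw [div_pow] at hsq
      linarith
  have hrest := hsmall _ (Finset.filter_subset (fun t => ¬restrict₁ t Q = 0) _) _
    (Finset.filter_subset (fun t => ¬restrict₂ t Q = 0) _) hoff
  have hon : {t ∈ A₁ | restrict₁ t Q = 0}.card + {t ∈ A₂ | restrict₂ t Q = 0}.card ≤ N :=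
    hN ▸ add_le_add (Finset.card_filter_le _ _) (Finset.card_filter_le _ _)
  have htotal := (incidenceCount_meets_le_add Q hA₁.injOn_fst hA₂.injOn_fst).trans
    (Nat.add_le_add_right (Nat.add_le_add_right (hX.trans (Nat.add_le_add_right
      (Nat.mul_le_mul_left _ hon) _)) _) _)
  have htotal' := (Nat.cast_le (α := ℝ)).2 htotal
  have hcross := mul_le_mul hoff hdeg (Nat.cast_nonneg _) (by positivity)
  have hmain := mul_le_mul_of_nonneg_right hdeg hNpos'.le
  push_cast at htotal' hcross
  have hpos : 0 ≤ N * √(N : ℝ) := by positivity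
  unfold lineBound
  linarith

/-- A line with few incidences is removed. When there is none, most lines lie on a surface of small
degree. -/
theorem incidenceCount_meets_le {p : ℕ} (hp : CharAtLeast F p) {k : ℕ} (hk : 1 ≤ k)
    {A₁ A₂ : Finset (LineCode F)} (hA₁ : IsGeneric k A₁) (hA₂ : IsGeneric k A₂)
    (hAp : A₁.card + A₂.card ≤ p ^ 2) :
    (incidenceCount Meets A₁ A₂ : ℝ) ≤ lineBound k (A₁.card + A₂.card) := by
  induction hN : A₁.card + A₂.card using Nat.strong_induction_on generalizing A₁ A₂ with
  | _ N ih =>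
  have hih : ∀ X₁ ⊆ A₁, ∀ X₂ ⊆ A₂, X₁.card + X₂.card < N →
      (incidenceCount Meets X₁ X₂ : ℝ) ≤ lineBound k (X₁.card + X₂.card) := fun X₁ h₁ X₂ h₂ h =>
    ih _ h (hA₁.mono h₁) (hA₂.mono h₂) (by omega) rfl
  by_cases hpoor₁ : ∃ a ∈ A₁, ((A₂.filter (Meets a)).card : ℝ) ≤ 10000 * √(N : ℝ)
  · obtain ⟨a, ha, hpoor⟩ := hpoor₁
    subst hN
    exact incidenceCount_meets_le_of_erase ha hpoor (hih _ (Finset.erase_subset _ _) _ subset_rfl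
      (Nat.add_lt_add_right (Finset.card_erase_lt_of_mem ha) _))
  by_cases hpoor₂ : ∃ b ∈ A₂, ((A₁.filter (Meets b)).card : ℝ) ≤ 10000 * √(N : ℝ)
  · obtain ⟨b, hb, hpoor⟩ := hpoor₂
    subst hN
    have herase := hih _ subset_rfl _ (Finset.erase_subset b A₂)
      (Nat.add_lt_add_left (Finset.card_erase_lt_of_mem hb) _)
    rw [incidenceCount_meets_comm, add_comm] at herase ⊢
    rw [add_comm] at hpoor
    exact incidenceCount_meets_le_of_erase hb hpoor herase
  push Not at hpoor₁ hpoor₂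
  rcases Nat.eq_zero_or_pos N with rfl | hNpos
  · rw [Finset.card_eq_zero.1 (Nat.eq_zero_of_add_eq_zero_right hN)]
    simp [incidenceCount, lineBound]
  have hsq : √(N : ℝ) ^ 2 = N := Real.sq_sqrt N.cast_nonneg
  have hsN : 10000 * √(N : ℝ) ≤ N := by
    rcases Nat.add_pos_iff_pos_or_pos.1 (hN ▸ hNpos) with h | h <;>
      obtain ⟨a, ha⟩ := Finset.card_pos.1 h
    · exact (hpoor₁ a ha).le.trans (Nat.cast_le.2
        ((Finset.card_filter_le _ _).trans (hN ▸ Nat.le_add_left _ _)))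
    · exact (hpoor₂ a ha).le.trans (Nat.cast_le.2
        ((Finset.card_filter_le _ _).trans (hN ▸ Nat.le_add_right _ _)))
  have hspos : 0 < √(N : ℝ) := Real.sqrt_pos.2 (Nat.cast_pos.2 hNpos)
  obtain ⟨Q, hQ, hdeg, hoff⟩ := exists_surface hA₁.injOn_fst hA₂.injOn_fst (s := √(N : ℝ))
    (by nlinarith) (by rw [hsq, ← hN, Nat.cast_add]) (fun a ha => (hpoor₁ a ha).le)
    fun b hb => (hpoor₂ b hb).le
  have hsp : √(N : ℝ) ≤ p := Real.sqrt_le_iff.2 ⟨p.cast_nonneg, by exact_mod_cast hN ▸ hAp⟩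
  have hlt : (Q.totalDegree : ℝ) < p := by linarith
  exact incidenceCount_meets_le_of_surface hp hk hA₁ hA₂ hN hNpos hQ (by exact_mod_cast hlt) hdeg
    (hsq ▸ hoff) hih

end IncidenceBound

/-! ### The energy of a product set -/

theorem incidenceCount_image {α β : Type*} [DecidableEq β] {r : α → α → Prop} {r' : β → β → Prop}
    {f : α → β} {A : Finset α} (hf : Set.InjOn f (A : Set α))
    (h : ∀ a ∈ A, ∀ b ∈ A, r a b ↔ r' (f a) (f b)) :
    incidenceCount r' (A.image f) (A.image f) = incidenceCount r A A := by
  unfold incidenceCount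
  rw [Finset.sum_image hf]
  refine Finset.sum_congr rfl fun a ha => ?_
  rw [Finset.filter_image, Finset.card_image_of_injOn (hf.mono (Finset.filter_subset _ _)),
    Finset.filter_congr fun b hb => (h a ha b hb).symm]

theorem exists_forall_eval_ne_zero {R : Type*} [CommRing R] [IsDomain R] [Infinite R]
    {S : Finset R[X]} (hS : ∀ f ∈ S, f ≠ 0) : ∃ x, ∀ f ∈ S, f.eval x ≠ 0 := by
  by_contra! h
  refine Finset.prod_ne_zero_iff.2 hS (Polynomial.funext fun x => ?_)
  obtain ⟨f, hfS, hf⟩ := h x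
  rw [Polynomial.eval_prod, Polynomial.eval_zero]
  exact Finset.prod_eq_zero hfS hf

section Energy

variable {F : Type*} [Field F]

/-- At most `k` points of `L` lie on a line of the plane. -/
def MaxCollinear (k : ℕ) (L : Finset (F × F)) : Prop :=
  ∀ a b c : F, (a ≠ 0 ∨ b ≠ 0) → {l ∈ L | a * l.1 + b * l.2 = c}.card ≤ k

/-- A change of parameters preserving `Meets`. After a translation by `η` it is the projective map
`(1 : a : c : d) ↦ (1 + θ c : a + θ d : c : d)`, which preserves the symplectic form whose null
pairs are the meeting pairs. -/
def symplecticShear (η θ : F) (t : LineCode F) : LineCode F :=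
  ((t.1 + θ * (t.2.2 + η)) / (1 + θ * t.2.1), t.2.1 / (1 + θ * t.2.1),
    (t.2.2 + η) / (1 + θ * t.2.1))

theorem meets_symplecticShear_iff {η θ : F} {s t : LineCode F} (hs : 1 + θ * s.2.1 ≠ 0)
    (ht : 1 + θ * t.2.1 ≠ 0) :
    Meets (symplecticShear η θ s) (symplecticShear η θ t) ↔ Meets s t := by
  unfold Meets symplecticShear
  dsimp only
  rw [div_mul_div_comm, div_mul_div_comm, div_add_div _ _ (mul_ne_zero hs ht) hs,
    div_add_div _ _ (mul_ne_zero ht hs) ht, div_eq_div_iff (by simp [hs, ht]) (by simp [hs, ht])]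
  have hst : (1 + θ * s.2.1) ^ 2 * (1 + θ * t.2.1) ^ 2 ≠ 0 := by simp [hs, ht]
  refine ⟨fun h => mul_left_cancel₀ hst ?_, fun h => ?_⟩
  · linear_combination h
  · linear_combination (1 + θ * s.2.1) ^ 2 * (1 + θ * t.2.1) ^ 2 * h

/-- The polynomial in `θ` vanishing where `symplecticShear η θ s` and `symplecticShear η θ t` have
the same first coordinate: the difference of their cross-multiplied first coordinates. -/
def shearDiff (η : F) (s t : LineCode F) : F[X] :=
  Polynomial.C (s.1 - t.1) +
    Polynomial.C (s.2.2 - t.2.2 + s.1 * t.2.1 - t.1 * s.2.1) * Polynomial.X +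
    Polynomial.C ((s.2.2 + η) * t.2.1 - (t.2.2 + η) * s.2.1) * Polynomial.X ^ 2

theorem shearDiff_ne_zero {η : F} {s t : LineCode F} (hs : s.2.2 + η - s.1 * s.2.1 ≠ 0)
    (hne : s ≠ t) : shearDiff η s t ≠ 0 := by
  intro h
  have h₀ : s.1 - t.1 = 0 := by simpa [shearDiff] using congrArg (Polynomial.coeff · 0) h
  have h₁ : s.2.2 - t.2.2 + s.1 * t.2.1 - t.1 * s.2.1 = 0 := by
    simpa [shearDiff, -map_add, -map_sub, -map_mul, Polynomial.coeff_X_pow, Polynomial.coeff_C]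
      using congrArg (Polynomial.coeff · 1) h
  have h₂ : (s.2.2 + η) * t.2.1 - (t.2.2 + η) * s.2.1 = 0 := by
    simpa [shearDiff, -map_add, -map_sub, -map_mul, Polynomial.coeff_X, Polynomial.coeff_C]
      using congrArg (Polynomial.coeff · 2) h
  have hc : t.2.1 = s.2.1 := sub_eq_zero.1 <| mul_left_cancel₀ hs <| by
    linear_combination h₂ - s.2.1 * h₁ + s.2.1 ^ 2 * h₀
  refine hne (Prod.ext (sub_eq_zero.1 h₀) (Prod.ext hc.symm ?_))
  linear_combination h₁ - s.2.1 * h₀ - s.1 * hc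

theorem exists_injOn_symplecticShear [Infinite F] (A : Finset (LineCode F)) :
    ∃ η θ : F, (∀ t ∈ A, 1 + θ * t.2.1 ≠ 0) ∧
      Set.InjOn (fun t => (symplecticShear η θ t).1) (A : Set (LineCode F)) := by
  obtain ⟨η, hη⟩ := Infinite.exists_notMem_finset (A.image fun t => t.1 * t.2.1 - t.2.2)
  have hη' : ∀ t ∈ A, t.2.2 + η - t.1 * t.2.1 ≠ 0 := fun t ht h =>
    hη (Finset.mem_image.2 ⟨t, ht, by linear_combination -h⟩)
  let denom (t : LineCode F) : F[X] := 1 + Polynomial.C t.2.1 * Polynomial.X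
  have hdenom : ∀ t, denom t ≠ 0 := fun t h => by
    simpa [denom] using congrArg (Polynomial.eval 0) h
  obtain ⟨θ, hθ⟩ := exists_forall_eval_ne_zero (S := A.image denom ∪
      A.offDiag.image fun q => shearDiff η q.1 q.2) <| by
    simp only [Finset.forall_mem_union, Finset.forall_mem_image, Finset.mem_offDiag]
    exact ⟨fun t _ => hdenom t, fun q hq => shearDiff_ne_zero (hη' _ hq.1) hq.2.2⟩
  simp only [Finset.forall_mem_union, Finset.forall_mem_image, Finset.mem_offDiag] at hθ
  have hz : ∀ t ∈ A, 1 + θ * t.2.1 ≠ 0 := fun t ht => by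
    simpa only [denom, Polynomial.eval_add, Polynomial.eval_one, Polynomial.eval_C_mul,
      Polynomial.eval_X, mul_comm θ] using hθ.1 ht
  refine ⟨η, θ, hz, fun s hs t ht hst => ?_⟩
  by_contra hne
  refine hθ.2 (x := (s, t)) ⟨hs, ht, hne⟩ ?_
  have hcross := (div_eq_div_iff (hz s hs) (hz t ht)).1 hst
  simp only [shearDiff, Polynomial.eval_add, Polynomial.eval_mul, Polynomial.eval_C,
    Polynomial.eval_X, Polynomial.eval_pow]
  linear_combination hcross

theorem mul_affine_sub_eq {x₀ x₁ x z₀ z₁ z m b : F} (h₀ : z₀ * (m * x₀ + b) = 1)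
    (h₁ : z₁ * (m * x₁ + b) = 1) (h : z * (m * x + b) = 1) (hne : x₁ ≠ x₀) (v w : F) :
    z * (v * x + w) = z₀ * (v * x₀ + w) +
      z * (x - x₀) / (z₁ * (x₁ - x₀)) * (z₁ * (v * x₁ + w) - z₀ * (v * x₀ + w)) := by
  have hz₁ : z₁ ≠ 0 := left_ne_zero_of_mul_eq_one h₁
  have hx : x₁ - x₀ ≠ 0 := sub_ne_zero.2 hne
  field_simp
  linear_combination (v * x₀ + w) * (-(z₁ * z * (x₁ - x)) * h₀ + z₀ * z₁ * (x₁ - x₀) * h -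
    z₀ * z * (x - x₀) * h₁)

theorem exists_eq_add_smul_of_symplecticShear {η θ : F} {v w : F × F} {s t q : LineCode F}
    (hz : ∀ u ∈ ({s, t, q} : Finset (LineCode F)), 1 + θ * u.2.1 ≠ 0)
    (h : ∀ u ∈ ({s, t, q} : Finset (LineCode F)),
      (symplecticShear η θ u).2 = (symplecticShear η θ u).1 • v + w)
    (hne : (symplecticShear η θ t).1 ≠ (symplecticShear η θ s).1) :
    ∃ μ : F, q = s + μ • (t - s) := by
  let x (u : LineCode F) : F := (symplecticShear η θ u).1
  have hcoord : ∀ u ∈ ({s, t, q} : Finset (LineCode F)),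
      (1 + θ * u.2.1) * (-(θ * v.1) * x u + (1 - θ * w.1)) = 1 ∧
      u.1 = (1 + θ * u.2.1) * ((1 - θ * v.2) * x u + -(θ * w.2)) ∧
      u.2.1 = (1 + θ * u.2.1) * (v.1 * x u + w.1) ∧
      u.2.2 + η = (1 + θ * u.2.1) * (v.2 * x u + w.2) := by
    intro u hu
    have hx : u.1 + θ * (u.2.2 + η) = x u * (1 + θ * u.2.1) := (div_eq_iff (hz u hu)).1 rfl
    have hc := (div_eq_iff (hz u hu)).1 (congrArg Prod.fst (h u hu))
    have hd := (div_eq_iff (hz u hu)).1 (congrArg Prod.snd (h u hu))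
    change u.2.1 = (x u * v.1 + w.1) * _ at hc
    change u.2.2 + η = (x u * v.2 + w.2) * _ at hd
    exact ⟨by linear_combination θ * hc, by linear_combination hx - θ * hd,
      by linear_combination hc, by linear_combination hd⟩
  simp only [Finset.mem_insert, Finset.mem_singleton, forall_eq_or_imp, forall_eq] at hcoord
  obtain ⟨⟨hs, has, hcs, hds⟩, ⟨ht, hat, hct, hdt⟩, hq, haq, hcq, hdq⟩ := hcoord
  have key := mul_affine_sub_eq hs ht hq hne
  refine ⟨(1 + θ * q.2.1) * (x q - x s) / ((1 + θ * t.2.1) * (x t - x s)),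
    Prod.ext ?_ (Prod.ext ?_ ?_)⟩
  · have h := key (1 - θ * v.2) (-(θ * w.2))
    rwa [← has, ← hat, ← haq] at h
  · have h := key v.1 w.1
    rwa [← hcs, ← hct, ← hcq] at h
  · have h := key v.2 w.2
    rw [← hds, ← hdt, ← hdq, add_sub_add_right_eq_sub] at h
    exact add_right_cancel (h.trans (add_right_comm ..))

theorem MaxCollinear.card_le {k : ℕ} {A : Finset F} {L : Finset (F × F)} (hL : MaxCollinear k L)
    (hA : A.card ≤ k) {G : Finset (LineCode F)} (hG : G ⊆ A ×ˢ L)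
    (h : ∀ s ∈ G, ∀ t ∈ G, s ≠ t → ∀ q ∈ G, ∃ μ : F, q = s + μ • (t - s)) : G.card ≤ k := by
  by_cases hinj : Set.InjOn Prod.fst (G : Set (LineCode F))
  · rw [← Finset.card_image_of_injOn hinj]
    exact (Finset.card_le_card (Finset.image_subset_iff.2 fun t ht =>
      (Finset.mem_product.1 (hG ht)).1)).trans hA
  · simp only [Set.InjOn, not_forall, Finset.mem_coe] at hinj
    obtain ⟨s, hs, t, ht, hst, hne⟩ := hinj
    have hfst : ∀ q ∈ G, q.1 = s.1 := fun q hq => by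
      obtain ⟨μ, rfl⟩ := h s hs t ht hne q hq
      simp [hst]
    have hsnd : Set.InjOn Prod.snd (G : Set (LineCode F)) := fun q hq q' hq' hqq' =>
      Prod.ext ((hfst q hq).trans (hfst q' hq').symm) hqq'
    rw [← Finset.card_image_of_injOn hsnd]
    refine (Finset.card_le_card (Finset.image_subset_iff.2 fun q hq => ?_)).trans
      (hL (t.2.2 - s.2.2) (s.2.1 - t.2.1) (t.2.2 * s.2.1 - t.2.1 * s.2.2) ?_)
    · refine Finset.mem_filter.2 ⟨(Finset.mem_product.1 (hG hq)).2, ?_⟩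
      obtain ⟨μ, rfl⟩ := h s hs t ht hne q hq
      simp only [Prod.snd_add, Prod.fst_add, Prod.smul_snd, Prod.smul_fst, Prod.snd_sub,
        Prod.fst_sub, smul_eq_mul]
      ring
    · by_contra! hzero
      exact hne (Prod.ext hst (Prod.ext (sub_eq_zero.1 hzero.2) (sub_eq_zero.1 hzero.1).symm))

/-- Codes that become collinear were collinear before the change of parameters. -/
theorem isGeneric_image_symplecticShear {k : ℕ} {A : Finset F} {L : Finset (F × F)}
    (hA : A.card ≤ k) (hL : MaxCollinear k L) {η θ : F} (hz : ∀ t ∈ A ×ˢ L, 1 + θ * t.2.1 ≠ 0)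
    (hinj : Set.InjOn (fun t => (symplecticShear η θ t).1)
      ((A ×ˢ L : Finset (LineCode F)) : Set (LineCode F))) :
    IsGeneric k ((A ×ˢ L).image (symplecticShear η θ)) where
  injOn_fst := by
    rw [Finset.coe_image]
    exact Set.InjOn.image_of_comp hinj
  card_filter_le v w := by
    rw [Finset.filter_image]
    refine Finset.card_image_le.trans (hL.card_le hA (Finset.filter_subset _ _) ?_)
    intro s hs t ht hne q hq
    rw [Finset.mem_filter] at hs ht hq
    refine exists_eq_add_smul_of_symplecticShear (η := η) (θ := θ) (v := v) (w := w) ?_ ?_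
      fun h => hne (hinj ht.1 hs.1 h).symm
    · simp only [Finset.mem_insert, Finset.mem_singleton, forall_eq_or_imp, forall_eq]
      exact ⟨hz s hs.1, hz t ht.1, hz q hq.1⟩
    · simp only [Finset.mem_insert, Finset.mem_singleton, forall_eq_or_imp, forall_eq]
      exact ⟨hs.2, ht.2, hq.2⟩

/-- Solutions of `c a' + d = c' a + d'` with `a, a' ∈ A` and `(c, d), (c', d') ∈ L`. -/
theorem incidenceCount_meets_product_le [Infinite F] {p : ℕ} (hp : CharAtLeast F p) {k : ℕ}
    (hk : 1 ≤ k) {A : Finset F} {L : Finset (F × F)} (hA : A.card ≤ k) (hL : MaxCollinear k L)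
    (hAL : 2 * (A.card * L.card) ≤ p ^ 2) :
    (incidenceCount Meets (A ×ˢ L) (A ×ˢ L) : ℝ) ≤ lineBound k (2 * (A.card * L.card)) := by
  obtain ⟨η, θ, hz, hinj⟩ := exists_injOn_symplecticShear (A ×ˢ L)
  have hinj' : Set.InjOn (symplecticShear η θ)
      ((A ×ˢ L : Finset (LineCode F)) : Set (LineCode F)) :=
    fun s hs t ht h => hinj hs ht (congrArg Prod.fst h)
  have hgen := isGeneric_image_symplecticShear hA hL hz hinj
  have hcard : ((A ×ˢ L).image (symplecticShear η θ)).card = A.card * L.card := by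
    rw [Finset.card_image_of_injOn hinj', Finset.card_product]
  have h := incidenceCount_meets_le hp hk hgen hgen (by rwa [hcard, ← two_mul])
  rwa [hcard, ← two_mul, incidenceCount_image hinj' fun s hs t ht =>
    (meets_symplecticShear_iff (hz s hs) (hz t ht)).symm] at h

end Energy

/-! ### Double counting in partial linear spaces -/

section PartialLinear

variable {α β : Type*} {r : α → β → Prop}

theorem sum_card_filter_sq (r : α → β → Prop) (A : Finset α) (B : Finset β) :
    ∑ a ∈ A, (B.filter (r a)).card ^ 2 =
      ∑ b ∈ B, ∑ b' ∈ B, {a ∈ A | r a b ∧ r a b'}.card := by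
  simp only [Finset.card_filter, sq, Finset.sum_mul_sum, ite_zero_mul_ite_zero, mul_one]
  rw [Finset.sum_comm]
  exact Finset.sum_congr rfl fun b _ => Finset.sum_comm

/-- The Kővári–Sós–Turán inequality. -/
theorem incidenceCount_sq_le {A : Finset α} {B : Finset β} {s : ℕ}
    (h : ∀ b ∈ B, ∀ b' ∈ B, b ≠ b' → {a ∈ A | r a b ∧ r a b'}.card ≤ s) :
    incidenceCount r A B ^ 2 ≤ A.card * (incidenceCount r A B + s * B.card ^ 2) := by
  have hB : ∀ b ∈ B, ∑ b' ∈ B, {a ∈ A | r a b ∧ r a b'}.card ≤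
      {a ∈ A | r a b}.card + B.card * s := fun b hb => by
    rw [← Finset.add_sum_erase B _ hb]
    refine add_le_add (by simp only [and_self, le_refl]) ?_
    refine (Finset.sum_le_card_nsmul _ _ s fun b' hb' =>
      h b hb b' (Finset.mem_of_mem_erase hb') (Finset.ne_of_mem_erase hb').symm).trans ?_
    exact Nat.mul_le_mul_right _ (Finset.card_erase_le)
  calc incidenceCount r A B ^ 2
      ≤ A.card * ∑ a ∈ A, (B.filter (r a)).card ^ 2 := sq_sum_le_card_mul_sum_sq
    _ ≤ A.card * ∑ b ∈ B, ({a ∈ A | r a b}.card + B.card * s) := by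
        rw [sum_card_filter_sq]
        exact Nat.mul_le_mul_left _ (Finset.sum_le_sum hB)
    _ = A.card * (incidenceCount r A B + s * B.card ^ 2) := by
        rw [Finset.sum_add_distrib, incidenceCount_comm, incidenceCount, Finset.sum_const,
          smul_eq_mul]
        ring

theorem card_mul_le_incidenceCount {A : Finset α} {B : Finset β} {k : ℕ}
    (h : ∀ b ∈ B, k ≤ {a ∈ A | r a b}.card) : B.card * k ≤ incidenceCount r A B := by
  rw [incidenceCount_comm]
  exact Finset.card_nsmul_le_sum B _ k h

/-- Above the degree `√(2 s |A|)` the linear term of `incidenceCount_sq_le` dominates. -/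
theorem incidenceCount_le_two_mul_card {A : Finset α} {B : Finset β} {s : ℕ}
    (h : ∀ b ∈ B, ∀ b' ∈ B, b ≠ b' → {a ∈ A | r a b ∧ r a b'}.card ≤ s)
    (hdeg : ∀ b ∈ B, 2 * s * A.card ≤ {a ∈ A | r a b}.card ^ 2) :
    incidenceCount r A B ≤ 2 * A.card := by
  have hlow : 2 * s * A.card * B.card ^ 2 ≤ incidenceCount r A B ^ 2 := by
    rw [incidenceCount_comm, incidenceCount, sq (∑ b ∈ B, _), Finset.sum_mul_sum]
    refine le_trans (le_of_eq (by simp only [Finset.sum_const, smul_eq_mul]; ring))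
      (Finset.sum_le_sum fun b hb => Finset.sum_le_sum (f := fun _ => 2 * s * A.card)
        fun b' hb' => ?_)
    refine (Nat.pow_le_pow_iff_left two_ne_zero).1 ?_
    rw [mul_pow _ {a ∈ A | r a b'}.card, sq (2 * s * A.card)]
    exact Nat.mul_le_mul (hdeg b hb) (hdeg b' hb')
  by_contra! hlarge
  nlinarith [incidenceCount_sq_le h]

/-- Incidence relations, between lines and points, for which two points are on at most one common
line. -/
def IsPartialLinear (r : α → β → Prop) : Prop :=
  ∀ ⦃x x' y y'⦄, r x y → r x' y → r x y' → r x' y' → x = x' ∨ y = y'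

namespace IsPartialLinear

theorem flip (hr : IsPartialLinear r) : IsPartialLinear fun y x => r x y :=
  fun _ _ _ _ h₁ h₂ h₃ h₄ => (hr h₁ h₃ h₂ h₄).symm

theorem card_common_le_one (hr : IsPartialLinear r) (X : Finset α) {y y' : β} (h : y ≠ y') :
    {x ∈ X | r x y ∧ r x y'}.card ≤ 1 := by
  refine Finset.card_le_one.2 fun x hx x' hx' => ?_
  rw [Finset.mem_filter] at hx hx'
  exact (hr hx.2.1 hx'.2.1 hx.2.2 hx'.2.2).resolve_right h

/-- Each of the `n` points determines about `k ^ 2` of the `|X| ^ 2` pairs of lines. -/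
theorem card_mul_sq_le (hr : IsPartialLinear r) {X : Finset α} {Y : Finset β} {k : ℕ} (hk : 2 ≤ k)
    (hY : ∀ y ∈ Y, k ≤ {x ∈ X | r x y}.card) : Y.card * k ^ 2 ≤ 2 * X.card ^ 2 := by
  have hpairs := incidenceCount_sq_le (A := Y) (B := X) fun x _ x' _ hne =>
    hr.flip.card_common_le_one Y hne
  rw [← incidenceCount_comm] at hpairs
  have hlow := card_mul_le_incidenceCount hY
  rcases Nat.eq_zero_or_pos Y.card with hY0 | hY0
  · simp [hY0]
  refine Nat.le_of_mul_le_mul_left (?_ : Y.card * _ ≤ Y.card * _) hY0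
  nlinarith [Nat.pow_le_pow_left hlow 2]

end IsPartialLinear

/-! ### Rich grids in partial linear spaces -/

/-- The points of `Y` on a common line of `X` with `y`, other than `y` itself. -/
def collinearWith (r : α → β → Prop) (X : Finset α) (Y : Finset β) (y : β) : Finset β :=
  {y' ∈ Y | y' ≠ y ∧ ∃ x ∈ X, r x y ∧ r x y'}

/-- The points of `Y` that are the intersection of a line of `X` through `y₁` and another one
through `y₂`. -/
def gridPoints (r : α → β → Prop) (X : Finset α) (Y : Finset β) (y₁ y₂ : β) : Finset β :=
  {y ∈ Y | y ≠ y₁ ∧ y ≠ y₂ ∧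
    ∃ x₁ ∈ X, ∃ x₂ ∈ X, x₁ ≠ x₂ ∧ r x₁ y ∧ r x₁ y₁ ∧ r x₂ y ∧ r x₂ y₂}

theorem gridPoints_mono {X X' : Finset α} (h : X ⊆ X') (Y : Finset β) (y₁ y₂ : β) :
    gridPoints r X Y y₁ y₂ ⊆ gridPoints r X' Y y₁ y₂ :=
  Finset.monotone_filter_right Y fun _ _ ⟨h₁, h₂, x₁, hx₁, x₂, hx₂, hx⟩ =>
    ⟨h₁, h₂, x₁, h hx₁, x₂, h hx₂, hx⟩

/-- For points `y₁`, `y₂` collinear with `y`, the point `y` is a grid point unless `y₂` is one of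
the at most `ρ` points on the line through `y` and `y₁`. -/
theorem card_collinearWith_sq_le {X : Finset α} (Y : Finset β) {ρ : ℕ}
    (hρ : ∀ x ∈ X, (Y.filter (r x)).card ≤ ρ) {y : β} (hy : y ∈ Y) :
    (collinearWith r X Y y).card ^ 2 ≤
      incidenceCount (fun y₁ y₂ => y ∈ gridPoints r X Y y₁ y₂) Y Y +
        ρ * (collinearWith r X Y y).card := by
  have hsub : collinearWith r X Y y ⊆ Y := Finset.filter_subset _ _
  have hline : ∀ y₁ ∈ collinearWith r X Y y,
      {y₂ ∈ collinearWith r X Y y | ¬y ∈ gridPoints r X Y y₁ y₂}.card ≤ ρ := by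
    intro y₁ hy₁
    obtain ⟨-, hne₁, x, hx, hxy, hxy₁⟩ := Finset.mem_filter.1 hy₁
    refine (Finset.card_le_card fun y₂ hy₂ => ?_).trans (hρ x hx)
    obtain ⟨hy₂, hgrid⟩ := Finset.mem_filter.1 hy₂
    obtain ⟨hy₂Y, hne₂, x', hx', hx'y, hx'y₂⟩ := Finset.mem_filter.1 hy₂
    by_contra hmem
    refine hgrid (Finset.mem_filter.2 ⟨hy, hne₁.symm, hne₂.symm, x, hx, x', hx', ?_, hxy, hxy₁,
      hx'y, hx'y₂⟩)
    rintro rfl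
    exact hmem (Finset.mem_filter.2 ⟨hy₂Y, hx'y₂⟩)
  calc (collinearWith r X Y y).card ^ 2
      = incidenceCount (fun y₁ y₂ => y ∈ gridPoints r X Y y₁ y₂) (collinearWith r X Y y)
          (collinearWith r X Y y) +
        incidenceCount (fun y₁ y₂ => ¬y ∈ gridPoints r X Y y₁ y₂) (collinearWith r X Y y)
          (collinearWith r X Y y) := by
        simp only [incidenceCount, ← Finset.sum_add_distrib,
          Finset.card_filter_add_card_filter_not, Finset.sum_const, smul_eq_mul, sq]
    _ ≤ _ := add_le_add (incidenceCount_mono _ hsub hsub)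
        ((incidenceCount_le_card_mul fun y₁ hy₁ => by convert hline y₁ hy₁).trans_eq
          (mul_comm _ _))

/-- Averaging `card_collinearWith_sq_le` over `y`. -/
theorem exists_sq_le_gridPoints {X : Finset α} {Y : Finset β}
    (hY : Y.Nonempty) {ρ : ℕ} (hρ : ∀ x ∈ X, (Y.filter (r x)).card ≤ ρ) :
    ∃ y₁ ∈ Y, ∃ y₂ ∈ Y, (∑ y ∈ Y, (collinearWith r X Y y).card) ^ 2 ≤
      Y.card * (Y.card ^ 2 * (gridPoints r X Y y₁ y₂).card +
        ρ * ∑ y ∈ Y, (collinearWith r X Y y).card) := by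
  obtain ⟨⟨y₁, y₂⟩, hy, hmax⟩ := Finset.exists_max_image (Y ×ˢ Y)
    (fun q => (gridPoints r X Y q.1 q.2).card) (hY.product hY)
  obtain ⟨hy₁, hy₂⟩ := Finset.mem_product.1 hy
  refine ⟨y₁, hy₁, y₂, hy₂, sq_sum_le_card_mul_sum_sq.trans (Nat.mul_le_mul_left _ ?_)⟩
  have hswap : ∑ y ∈ Y, incidenceCount (fun y₁ y₂ => y ∈ gridPoints r X Y y₁ y₂) Y Y =
      ∑ q ∈ Y ×ˢ Y, (gridPoints r X Y q.1 q.2).card := by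
    simp only [incidenceCount, Finset.card_filter]
    simp only [← Finset.sum_product' Y Y]
    rw [Finset.sum_comm]
    refine Finset.sum_congr rfl fun q _ => ?_
    rw [← Finset.card_filter, Finset.filter_mem_eq_inter]
    exact congrArg Finset.card (Finset.inter_eq_right.2 (Finset.filter_subset _ _))
  calc ∑ y ∈ Y, (collinearWith r X Y y).card ^ 2
      ≤ ∑ y ∈ Y, (incidenceCount (fun y₁ y₂ => y ∈ gridPoints r X Y y₁ y₂) Y Y +
          ρ * (collinearWith r X Y y).card) :=
        Finset.sum_le_sum fun y hy => card_collinearWith_sq_le Y hρ hy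
    _ ≤ _ := by
        rw [Finset.sum_add_distrib, ← Finset.mul_sum, hswap, sq, ← Finset.card_product]
        exact Nat.add_le_add_right (Finset.sum_le_card_nsmul _ _ _ hmax) _

namespace IsPartialLinear

theorem incidenceCount_sq_le_collinearWith (hr : IsPartialLinear r) (X : Finset α) (Y : Finset β) :
    incidenceCount r X Y ^ 2 ≤
      X.card * (incidenceCount r X Y + ∑ y ∈ Y, (collinearWith r X Y y).card) := by
  have hY : ∀ y ∈ Y, ∑ y' ∈ Y, {x ∈ X | r x y ∧ r x y'}.card ≤
      {x ∈ X | r x y}.card + (collinearWith r X Y y).card := fun y hy => by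
    have hcoll : collinearWith r X Y y = {y' ∈ Y.erase y | ∃ x ∈ X, r x y ∧ r x y'} := by
      ext y'
      simp only [collinearWith, Finset.mem_filter, Finset.mem_erase]
      tauto
    rw [← Finset.add_sum_erase Y _ hy, hcoll,
      Finset.card_filter (fun y' => ∃ x ∈ X, r x y ∧ r x y')]
    refine add_le_add (by simp only [and_self, le_refl]) (Finset.sum_le_sum fun y' hy' => ?_)
    split_ifs with hx
    · exact hr.card_common_le_one X (Finset.ne_of_mem_erase hy').symm
    · rw [Finset.filter_eq_empty_iff.2 fun x hxX hxy => hx ⟨x, hxX, hxy⟩, Finset.card_empty]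
  calc incidenceCount r X Y ^ 2
      ≤ X.card * ∑ x ∈ X, (Y.filter (r x)).card ^ 2 := sq_sum_le_card_mul_sum_sq
    _ ≤ X.card * ∑ y ∈ Y, ({x ∈ X | r x y}.card + (collinearWith r X Y y).card) := by
        rw [sum_card_filter_sq]
        exact Nat.mul_le_mul_left _ (Finset.sum_le_sum hY)
    _ = _ := by rw [Finset.sum_add_distrib, incidenceCount_comm, incidenceCount]

/-- The lines with at least `√(2 |Y|)` points carry at most `2 |Y|` incidences. -/
theorem incidenceCount_le_poor_add (hr : IsPartialLinear r) (X : Finset α) (Y : Finset β) :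
    incidenceCount r X Y ≤
      incidenceCount r {x ∈ X | ¬2 * Y.card ≤ (Y.filter (r x)).card ^ 2} Y + 2 * Y.card := by
  rw [← incidenceCount_filter_add_left r X Y fun x => 2 * Y.card ≤ (Y.filter (r x)).card ^ 2,
    add_comm, incidenceCount_comm r {x ∈ X | 2 * Y.card ≤ (Y.filter (r x)).card ^ 2}]
  refine Nat.add_le_add_left (incidenceCount_le_two_mul_card (s := 1)
    (fun x _ x' _ hne => hr.flip.card_common_le_one Y hne) fun x hx => ?_) _
  rw [mul_one]
  exact (Finset.mem_filter.1 hx).2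

end IsPartialLinear

/-- Here `I` is the number of incidences, `W` the number of pairs of distinct collinear points and
`M` the number of points of the richest grid. -/
theorem mul_pow_four_le_of_sq_le {n m k I W ρ M : ℕ} (hm : 0 < m) (hn : 0 < n)
    (hnk : 8192 * m ^ 2 ≤ n * k ^ 4) (hI : n * k ≤ 2 * I) (hW : I ^ 2 ≤ 2 * m * W)
    (hρ : ρ ^ 2 ≤ 2 * n) (hM : W ^ 2 ≤ n * (n ^ 2 * M + ρ * W)) :
    n * k ^ 4 ≤ 128 * m ^ 2 * M := by
  have hWlow : n ^ 2 * k ^ 2 ≤ 8 * m * W := by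
    nlinarith [Nat.pow_le_pow_left hI 2]
  have hdiag : 2 * (n * ρ) ≤ W := by
    refine Nat.le_of_mul_le_mul_left (?_ : 8 * m * _ ≤ 8 * m * _) (by positivity)
    refine (Nat.pow_le_pow_iff_left two_ne_zero).1 ?_
    calc (8 * m * (2 * (n * ρ))) ^ 2 = 256 * m ^ 2 * n ^ 2 * ρ ^ 2 := by ring
      _ ≤ 256 * m ^ 2 * n ^ 2 * (2 * n) := Nat.mul_le_mul_left _ hρ
      _ ≤ n ^ 3 * (8192 * m ^ 2) := by nlinarith [Nat.zero_le (n ^ 3 * m ^ 2)]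
      _ ≤ n ^ 3 * (n * k ^ 4) := Nat.mul_le_mul_left _ hnk
      _ = (n ^ 2 * k ^ 2) ^ 2 := by ring
      _ ≤ (8 * m * W) ^ 2 := Nat.pow_le_pow_left hWlow 2
  have hWM : W ^ 2 ≤ 2 * n ^ 3 * M := by nlinarith
  refine Nat.le_of_mul_le_mul_left (?_ : n ^ 3 * _ ≤ n ^ 3 * _) (by positivity)
  calc n ^ 3 * (n * k ^ 4) = (n ^ 2 * k ^ 2) ^ 2 := by ring
    _ ≤ (8 * m * W) ^ 2 := Nat.pow_le_pow_left hWlow 2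
    _ = 64 * m ^ 2 * W ^ 2 := by ring
    _ ≤ 64 * m ^ 2 * (2 * n ^ 3 * M) := Nat.mul_le_mul_left _ hWM
    _ = n ^ 3 * (128 * m ^ 2 * M) := by ring

theorem IsPartialLinear.exists_card_mul_le_gridPoints (hr : IsPartialLinear r) {X : Finset α}
    {Y : Finset β} {m k : ℕ} (hm : 0 < m) (hX : X.card ≤ m) (hk : 4 ≤ k)
    (hY : ∀ y ∈ Y, k ≤ {x ∈ X | r x y}.card) (hYne : Y.Nonempty) (hmk : 4 * m ≤ Y.card * k)
    (hmk' : 8192 * m ^ 2 ≤ Y.card * k ^ 4) :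
    ∃ y₁ ∈ Y, ∃ y₂ ∈ Y, Y.card * k ^ 4 ≤ 128 * m ^ 2 * (gridPoints r X Y y₁ y₂).card := by
  let X₀ : Finset α := {x ∈ X | ¬2 * Y.card ≤ (Y.filter (r x)).card ^ 2}
  have hX₀ : X₀ ⊆ X := Finset.filter_subset _ _
  have hρ : ∀ x ∈ X₀, (Y.filter (r x)).card ≤ Nat.sqrt (2 * Y.card) := fun x hx =>
    Nat.le_sqrt'.2 (not_le.1 (Finset.mem_filter.1 hx).2).le
  have hI : Y.card * k ≤ 2 * incidenceCount r X₀ Y := by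
    have : Y.card * k ≤ incidenceCount r X₀ Y + 2 * Y.card :=
      (card_mul_le_incidenceCount hY).trans (hr.incidenceCount_le_poor_add X Y)
    have := Nat.mul_le_mul_left Y.card hk
    omega
  obtain ⟨y₁, hy₁, y₂, hy₂, hM⟩ := exists_sq_le_gridPoints hYne hρ
  refine ⟨y₁, hy₁, y₂, hy₂, ?_⟩
  have hW : incidenceCount r X₀ Y ^ 2 ≤
      2 * m * ∑ y ∈ Y, (collinearWith r X₀ Y y).card := by
    have hcs := (hr.incidenceCount_sq_le_collinearWith X₀ Y).trans
      (Nat.mul_le_mul_right _ ((Finset.card_le_card hX₀).trans hX))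
    nlinarith [show 2 * m ≤ incidenceCount r X₀ Y by omega]
  exact (mul_pow_four_le_of_sq_le hm hYne.card_pos hmk' hI hW (Nat.sqrt_le' _) hM).trans
    (Nat.mul_le_mul_left _ (Finset.card_le_card (gridPoints_mono hX₀ Y y₁ y₂)))

end PartialLinear

/-! ### Grids of points and lines in coordinates -/

section CauchySchwarz

variable {F : Type*} [Field F]

theorem sum_card_fiber_sq_le {α β : Type*} (f : α → β) (A : Finset α) (B : Finset β) :
    ∑ b ∈ B, {a ∈ A | f a = b}.card ^ 2 ≤ incidenceCount (fun a a' => f a = f a') A A := by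
  rw [sum_card_filter_sq (fun b a => f a = b)]
  simp only [incidenceCount, Finset.card_filter (fun a' => f _ = f a')]
  refine Finset.sum_le_sum fun a _ => Finset.sum_le_sum fun a' _ => ?_
  split_ifs with h
  · exact Finset.card_le_one.2 fun b hb b' hb' =>
      (Finset.mem_filter.1 hb).2.1.symm.trans (Finset.mem_filter.1 hb').2.1
  · exact (Finset.card_eq_zero.2 <| Finset.filter_eq_empty_iff.2
      fun b _ hb => h (hb.1.trans hb.2.symm)).le

theorem incidenceCount_meets_product_self (A : Finset F) (L : Finset (F × F)) :
    incidenceCount Meets (A ×ˢ L) (A ×ˢ L) =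
      incidenceCount (fun s t : LineCode F => s.2.1 * s.1 + s.2.2 = t.2.1 * t.1 + t.2.2)
        (A ×ˢ L) (A ×ˢ L) := by
  simp only [incidenceCount, Meets, Finset.card_filter, Finset.sum_product_right]
  refine Finset.sum_congr rfl fun l _ => ?_
  rw [Finset.sum_comm' (t' := L) (s' := fun _ => A) (by tauto),
    Finset.sum_comm' (t' := L) (s' := fun _ => A) (by tauto)]
  exact Finset.sum_congr rfl fun l' _ => Finset.sum_comm

/-- Cauchy–Schwarz over the ordinate: a line `l` and an abscissa `a ∈ A` determine the point of `l`
above `a`, and two such points have the same ordinate exactly when they satisfy `Meets` after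
exchanging their abscissas. -/
theorem sq_card_mul_le_incidenceCount_meets {A B : Finset F} {L S : Finset (F × F)} {t : ℕ}
    (hS : S ⊆ A ×ˢ B) (ht : ∀ s ∈ S, t ≤ {l ∈ L | l.1 * s.1 + l.2 = s.2}.card) :
    (S.card * t) ^ 2 ≤ B.card * incidenceCount Meets (A ×ˢ L) (A ×ˢ L) := by
  have hsum : S.card * t ≤ ∑ b ∈ B, {q ∈ A ×ˢ L | q.2.1 * q.1 + q.2.2 = b}.card := calc
    S.card * t ≤ ∑ s ∈ S, {l ∈ L | l.1 * s.1 + l.2 = s.2}.card :=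
        Finset.card_nsmul_le_sum S _ t ht
    _ ≤ ∑ s ∈ A ×ˢ B, {l ∈ L | l.1 * s.1 + l.2 = s.2}.card :=
        Finset.sum_le_sum_of_subset hS
    _ = ∑ b ∈ B, {q ∈ A ×ˢ L | q.2.1 * q.1 + q.2.2 = b}.card := by
      simp only [Finset.card_filter, Finset.sum_product_right _ B, Finset.sum_product]
  calc (S.card * t) ^ 2
      ≤ (∑ b ∈ B, {q ∈ A ×ˢ L | q.2.1 * q.1 + q.2.2 = b}.card) ^ 2 := Nat.pow_le_pow_left hsum 2
    _ ≤ B.card * ∑ b ∈ B, {q ∈ A ×ˢ L | q.2.1 * q.1 + q.2.2 = b}.card ^ 2 :=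
        sq_sum_le_card_mul_sum_sq
    _ ≤ B.card * incidenceCount Meets (A ×ˢ L) (A ×ˢ L) := by
        rw [incidenceCount_meets_product_self]
        exact Nat.mul_le_mul_left _
          (sum_card_fiber_sq_le (fun q : LineCode F => q.2.1 * q.1 + q.2.2) _ _)

end CauchySchwarz

section Coordinates

open scoped LinearAlgebra.Projectivization
open Projectivization

variable {F : Type*} [Field F]

theorem isPartialLinear_orthogonal :
    IsPartialLinear (orthogonal : ℙ F (Fin 3 → F) → ℙ F (Fin 3 → F) → Prop) :=
  fun _ _ _ _ h₁ h₂ h₃ h₄ => Configuration.ofField.eq_or_eq_of_orthogonal h₁ h₂ h₃ h₄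

theorem orthogonal_iff_rep {x y : ℙ F (Fin 3 → F)} : orthogonal x y ↔ x.rep ⬝ᵥ y.rep = 0 := by
  rw [← orthogonal_mk x.rep_nonzero y.rep_nonzero, mk_rep, mk_rep]

theorem eq_of_rep_eq_smul {x y : ℙ F (Fin 3 → F)} (a : F) (h : x.rep = a • y.rep) : x = y := by
  rw [← mk_rep x, ← mk_rep y, mk_eq_mk_iff']
  exact ⟨a, h.symm⟩

theorem exists_basis_rep {y₁ y₂ : ℙ F (Fin 3 → F)} (h : y₁ ≠ y₂) :
    ∃ b : Module.Basis (Fin 3) F (Fin 3 → F), b 0 = y₁.rep ∧ b 1 = y₂.rep := by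
  have hind := independent_iff.1 ((independent_pair_iff_ne y₁ y₂).2 h)
  obtain ⟨y₃, hy₃⟩ := exists_linearIndependent_snoc_of_lt_finrank hind
    (by rw [Module.finrank_fin_fun]; norm_num)
  refine ⟨basisOfLinearIndependentOfCardEqFinrank hy₃ (by simp), ?_, ?_⟩ <;>
    simp [Fin.snoc]

variable (b : Module.Basis (Fin 3) F (Fin 3 → F))

theorem dotProduct_eq_sum_repr (x y : Fin 3 → F) :
    x ⬝ᵥ y = b.repr y 0 * (x ⬝ᵥ b 0) + b.repr y 1 * (x ⬝ᵥ b 1) + b.repr y 2 * (x ⬝ᵥ b 2) := by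
  conv_lhs => rw [← b.sum_repr y]
  simp only [Fin.sum_univ_three, dotProduct_add, dotProduct_smul, smul_eq_mul]

/-- The affine coordinates, with respect to the basis `b`, of a projective point; meaningful off the
line at infinity through `b 0` and `b 1`, where the third coordinate vanishes. -/
def affinePoint (y : ℙ F (Fin 3 → F)) : F × F :=
  (b.repr y.rep 0 / b.repr y.rep 2, b.repr y.rep 1 / b.repr y.rep 2)

/-- The slope and the intercept, with respect to the basis `b`, of a projective line; meaningful for
lines that do not pass through the point `b 1` at infinity. -/
def affineLine (x : ℙ F (Fin 3 → F)) : F × F :=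
  (-(x.rep ⬝ᵥ b 0) / (x.rep ⬝ᵥ b 1), -(x.rep ⬝ᵥ b 2) / (x.rep ⬝ᵥ b 1))

variable {b}

theorem rep_dotProduct_two_ne_zero {x : ℙ F (Fin 3 → F)} (h₀ : x.rep ⬝ᵥ b 0 = 0)
    (h₁ : x.rep ⬝ᵥ b 1 = 0) : x.rep ⬝ᵥ b 2 ≠ 0 := fun h₂ =>
  x.rep_nonzero <| dotProduct_eq_zero _ fun w => by
    rw [dotProduct_eq_sum_repr b, h₀, h₁, h₂]
    ring

theorem orthogonal_iff_affinePoint {x y : ℙ F (Fin 3 → F)} (hy : b.repr y.rep 2 ≠ 0) :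
    orthogonal x y ↔ (affinePoint b y).1 * (x.rep ⬝ᵥ b 0) + (affinePoint b y).2 * (x.rep ⬝ᵥ b 1) +
      x.rep ⬝ᵥ b 2 = 0 := by
  have hscale : x.rep ⬝ᵥ y.rep = b.repr y.rep 2 * ((affinePoint b y).1 * (x.rep ⬝ᵥ b 0) +
      (affinePoint b y).2 * (x.rep ⬝ᵥ b 1) + x.rep ⬝ᵥ b 2) := by
    rw [dotProduct_eq_sum_repr b, affinePoint]
    field_simp
  rw [orthogonal_iff_rep, hscale, mul_eq_zero, or_iff_right hy]

theorem affineLine_eq_of_orthogonal {x y : ℙ F (Fin 3 → F)} (hx : x.rep ⬝ᵥ b 1 ≠ 0)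
    (hy : b.repr y.rep 2 ≠ 0) (h : orthogonal x y) :
    (affineLine b x).1 * (affinePoint b y).1 + (affineLine b x).2 = (affinePoint b y).2 := by
  rw [orthogonal_iff_affinePoint hy] at h
  rw [affineLine, div_mul_eq_mul_div, ← add_div, div_eq_iff hx]
  linear_combination -h

theorem affinePoint_injOn :
    Set.InjOn (affinePoint b) {y | b.repr y.rep 2 ≠ 0} := by
  intro y (hy : _ ≠ _) y' (hy' : _ ≠ _) h
  obtain ⟨h₀, h₁⟩ := Prod.ext_iff.1 h
  simp only [affinePoint] at h₀ h₁
  refine eq_of_rep_eq_smul (b.repr y.rep 2 / b.repr y'.rep 2) (b.ext_elem fun i => ?_)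
  rw [map_smul, Finsupp.smul_apply, smul_eq_mul]
  fin_cases i
  · change b.repr y.rep 0 = _ * b.repr y'.rep 0
    field_simp at h₀ ⊢
    linear_combination h₀
  · change b.repr y.rep 1 = _ * b.repr y'.rep 1
    field_simp at h₁ ⊢
    linear_combination h₁
  · exact (div_mul_cancel₀ _ hy').symm

theorem affineLine_injOn :
    Set.InjOn (affineLine b) {x | x.rep ⬝ᵥ b 1 ≠ 0} := by
  intro x (hx : _ ≠ _) x' (hx' : _ ≠ _) h
  obtain ⟨h₀, h₂⟩ := Prod.ext_iff.1 h
  simp only [affineLine] at h₀ h₂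
  refine eq_of_rep_eq_smul (x.rep ⬝ᵥ b 1 / (x'.rep ⬝ᵥ b 1)) (dotProduct_eq _ _ fun w => ?_)
  rw [smul_dotProduct, smul_eq_mul, dotProduct_eq_sum_repr b x.rep w,
    dotProduct_eq_sum_repr b x'.rep w]
  field_simp at h₀ h₂ ⊢
  linear_combination -b.repr w 0 * h₀ - b.repr w 2 * h₂

theorem maxCollinear_image_affineLine {R : ℕ} {X : Finset (ℙ F (Fin 3 → F))}
    (hX : ∀ x ∈ X, x.rep ⬝ᵥ b 1 ≠ 0) (hR : ∀ w, {x ∈ X | orthogonal x w}.card ≤ R) :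
    MaxCollinear R (X.image (affineLine b)) := by
  intro a e c hae
  have hw : a • b 0 + c • b 1 + e • b 2 ≠ 0 := fun h => by
    have := Fintype.linearIndependent_iff.1 b.linearIndependent ![a, c, e]
      (by simpa [Fin.sum_univ_three] using h)
    exact hae.elim (· (this 0)) (· (this 2))
  rw [Finset.filter_image]
  refine Finset.card_image_le.trans (le_trans (Finset.card_le_card fun x hx => ?_)
    (hR (mk F _ hw)))
  rw [Finset.mem_filter, affineLine] at hx
  have hx₁ := hX x hx.1
  have hxw := hx.2
  rw [Finset.mem_filter, ← mk_rep x, orthogonal_mk x.rep_nonzero hw]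
  refine ⟨by rw [mk_rep]; exact hx.1, ?_⟩
  simp only [dotProduct_add, dotProduct_smul, smul_eq_mul]
  field_simp at hxw
  linear_combination -hxw

variable {r : ℙ F (Fin 3 → F) → ℙ F (Fin 3 → F) → Prop} {X Y : Finset (ℙ F (Fin 3 → F))}
  {y₁ y₂ : ℙ F (Fin 3 → F)}

theorem repr_two_ne_zero_of_mem_gridPoints (hr : ∀ x y, r x y → orthogonal x y)
    (hb₁ : b 0 = y₁.rep) (hb₂ : b 1 = y₂.rep) {y : ℙ F (Fin 3 → F)}
    (hy : y ∈ gridPoints r X Y y₁ y₂) : b.repr y.rep 2 ≠ 0 := by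
  obtain ⟨-, hy₁, hy₂, x₁, -, x₂, -, hne, h₁, h₁', h₂, h₂'⟩ := Finset.mem_filter.1 hy
  intro h₀
  have hrep : y.rep = b.repr y.rep 0 • y₁.rep + b.repr y.rep 1 • y₂.rep := by
    conv_lhs => rw [← b.sum_repr y.rep]
    simp only [Fin.sum_univ_three, h₀, zero_smul, add_zero, hb₁, hb₂]
  have hy0 : b.repr y.rep 0 ≠ 0 := fun h => hy₂ <|
    eq_of_rep_eq_smul (b.repr y.rep 1) (by rwa [h, zero_smul, zero_add] at hrep)
  have h₁₂' : orthogonal x₂ y₁ := by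
    have := orthogonal_iff_rep.1 (hr _ _ h₂)
    rw [hrep, dotProduct_add, dotProduct_smul, dotProduct_smul,
      orthogonal_iff_rep.1 (hr _ _ h₂'), smul_zero, add_zero, smul_eq_mul] at this
    exact orthogonal_iff_rep.2 ((mul_eq_zero.1 this).resolve_left hy0)
  exact (isPartialLinear_orthogonal (hr _ _ h₁) (hr _ _ h₂) (hr _ _ h₁') h₁₂').elim hne hy₁

theorem affinePoint_mem_product (hr : ∀ x y, r x y → orthogonal x y)
    (hb₁ : b 0 = y₁.rep) (hb₂ : b 1 = y₂.rep) {y : ℙ F (Fin 3 → F)}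
    (hy : y ∈ gridPoints r X Y y₁ y₂) :
    affinePoint b y ∈
      {x ∈ X | r x y₂}.image (fun x => -(x.rep ⬝ᵥ b 2) / (x.rep ⬝ᵥ b 0)) ×ˢ
        {x ∈ X | r x y₁}.image (fun x => -(x.rep ⬝ᵥ b 2) / (x.rep ⬝ᵥ b 1)) := by
  have hy₀ := repr_two_ne_zero_of_mem_gridPoints hr hb₁ hb₂ hy
  obtain ⟨-, -, -, x₁, hx₁, x₂, hx₂, -, h₁, h₁', h₂, h₂'⟩ := Finset.mem_filter.1 hy
  have hx₁₀ : x₁.rep ⬝ᵥ b 0 = 0 := hb₁ ▸ orthogonal_iff_rep.1 (hr _ _ h₁')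
  have hx₂₁ : x₂.rep ⬝ᵥ b 1 = 0 := hb₂ ▸ orthogonal_iff_rep.1 (hr _ _ h₂')
  have hyx₁ := (orthogonal_iff_affinePoint hy₀).1 (hr _ _ h₁)
  have hyx₂ := (orthogonal_iff_affinePoint hy₀).1 (hr _ _ h₂)
  rw [hx₁₀, mul_zero, zero_add] at hyx₁
  rw [hx₂₁, mul_zero, add_zero] at hyx₂
  refine Finset.mem_product.2 ⟨Finset.mem_image.2 ⟨x₂, Finset.mem_filter.2 ⟨hx₂, h₂'⟩, ?_⟩,
    Finset.mem_image.2 ⟨x₁, Finset.mem_filter.2 ⟨hx₁, h₁'⟩, ?_⟩⟩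
  · have hx₂₀ : x₂.rep ⬝ᵥ b 0 ≠ 0 := fun h => rep_dotProduct_two_ne_zero h hx₂₁ (by
      rwa [h, mul_zero, zero_add] at hyx₂)
    rw [div_eq_iff hx₂₀]
    linear_combination -hyx₂
  · have hx₁₁ : x₁.rep ⬝ᵥ b 1 ≠ 0 := fun h => rep_dotProduct_two_ne_zero hx₁₀ h (by
      rwa [h, mul_zero, zero_add] at hyx₁)
    rw [div_eq_iff hx₁₁]
    linear_combination -hyx₁

/-- The lines through `b 1` are not graphs, which costs at most one line through each point. -/
theorem card_filter_orthogonal_le (hb₂ : b 1 = y₂.rep) {y : ℙ F (Fin 3 → F)} (hy : y ≠ y₂)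
    (hy₀ : b.repr y.rep 2 ≠ 0) :
    {x ∈ X | orthogonal x y}.card ≤
      {l ∈ {x ∈ X | x.rep ⬝ᵥ b 1 ≠ 0}.image (affineLine b) |
        l.1 * (affinePoint b y).1 + l.2 = (affinePoint b y).2}.card + 1 := by
  rw [← Finset.card_filter_add_card_filter_not (s := {x ∈ X | orthogonal x y})
    (fun x => x.rep ⬝ᵥ b 1 ≠ 0)]
  refine add_le_add ?_ ?_
  · refine Finset.card_le_card_of_injOn (affineLine b) (fun x hx => ?_)
      (affineLine_injOn.mono fun x hx => (Finset.mem_filter.1 hx).2)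
    obtain ⟨hxX, hx₁⟩ := Finset.mem_filter.1 hx
    rw [Finset.mem_filter] at hxX
    exact Finset.mem_filter.2 ⟨Finset.mem_image_of_mem _ (Finset.mem_filter.2 ⟨hxX.1, hx₁⟩),
      affineLine_eq_of_orthogonal hx₁ hy₀ hxX.2⟩
  · refine le_trans (Finset.card_le_card fun x hx => ?_)
      (isPartialLinear_orthogonal.card_common_le_one X hy)
    simp only [Finset.mem_filter, not_not] at hx ⊢
    exact ⟨hx.1.1, hx.1.2, orthogonal_iff_rep.2 (hb₂ ▸ hx.2)⟩

theorem exists_sq_card_gridPoints_mul_le (hr : ∀ x y, r x y → orthogonal x y) (h₁₂ : y₁ ≠ y₂)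
    {k R t : ℕ} (hk₁ : {x ∈ X | r x y₁}.card ≤ k) (hk₂ : {x ∈ X | r x y₂}.card ≤ k)
    (hR : ∀ w, {x ∈ X | orthogonal x w}.card ≤ R)
    (ht : ∀ y ∈ gridPoints r X Y y₁ y₂, t + 1 ≤ {x ∈ X | orthogonal x y}.card) :
    ∃ (A : Finset F) (L : Finset (F × F)), A.card ≤ k ∧ L.card ≤ X.card ∧ MaxCollinear R L ∧
      ((gridPoints r X Y y₁ y₂).card * t) ^ 2 ≤ k * incidenceCount Meets (A ×ˢ L) (A ×ˢ L) := by
  obtain ⟨b, hb₁, hb₂⟩ := exists_basis_rep h₁₂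
  have hinf : ∀ y ∈ gridPoints r X Y y₁ y₂, b.repr y.rep 2 ≠ 0 := fun y hy =>
    repr_two_ne_zero_of_mem_gridPoints hr hb₁ hb₂ hy
  refine ⟨{x ∈ X | r x y₂}.image (fun x => -(x.rep ⬝ᵥ b 2) / (x.rep ⬝ᵥ b 0)),
    {x ∈ X | x.rep ⬝ᵥ b 1 ≠ 0}.image (affineLine b), Finset.card_image_le.trans hk₂,
    Finset.card_image_le.trans (Finset.card_filter_le _ _),
    maxCollinear_image_affineLine (fun x hx => (Finset.mem_filter.1 hx).2) fun w =>
      (Finset.card_le_card (Finset.filter_subset_filter _ (Finset.filter_subset _ _))).trans (hR w),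
    ?_⟩
  rw [← Finset.card_image_of_injOn (affinePoint_injOn.mono hinf)]
  refine (sq_card_mul_le_incidenceCount_meets (Finset.image_subset_iff.2 fun y hy =>
    affinePoint_mem_product hr hb₁ hb₂ hy) (Finset.forall_mem_image.2 fun y hy => ?_)).trans
    (Nat.mul_le_mul_right _ (Finset.card_image_le.trans hk₁))
  exact Nat.le_of_add_le_add_right ((ht y hy).trans
    (card_filter_orthogonal_le hb₂ (Finset.mem_filter.1 hy).2.2.1 (hinf y hy)))

end Coordinates

/-! ### The bound for rich points -/

section Pruning

variable {α β : Type*} {r : α → β → Prop}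

namespace IsPartialLinear

theorem gridPoints_self (hr : IsPartialLinear r) (X : Finset α) (Y : Finset β) (y : β) :
    gridPoints r X Y y y = ∅ :=
  Finset.filter_eq_empty_iff.2 fun _ _ ⟨hy, _, _, _, _, _, hne, h₁, h₁', h₂, h₂'⟩ =>
    (hr h₁ h₂ h₁' h₂').elim hne hy

theorem exists_forall_notMem_card_le (hr : IsPartialLinear r) (X : Finset α) {R : ℕ}
    (hR₁ : 1 ≤ R) (hR : 2 * X.card ≤ R ^ 2) :
    ∃ Z : Finset β, Z.card * R ≤ 2 * X.card ∧ ∀ w ∉ Z, {x ∈ X | r x w}.card ≤ R := by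
  have hcard : ∀ Z : Finset β, (∀ z ∈ Z, R < {x ∈ X | r x z}.card) → Z.card * R ≤ 2 * X.card :=
    fun Z hZ => (card_mul_le_incidenceCount fun z hz => (hZ z hz).le).trans
      (incidenceCount_le_two_mul_card (fun _ _ _ _ hne => hr.card_common_le_one X hne)
        fun z hz => by nlinarith [hZ z hz])
  have hfin : {w | R < {x ∈ X | r x w}.card}.Finite := by
    by_contra hinf
    obtain ⟨Z, hZ, hZcard⟩ := Set.Infinite.exists_subset_card_eq hinf (2 * X.card + 1)
    nlinarith [hcard Z fun z hz => hZ hz]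
  refine ⟨hfin.toFinset, hcard _ fun z hz => hfin.mem_toFinset.1 hz, fun w hw => ?_⟩
  exact not_lt.1 fun h => hw (hfin.mem_toFinset.2 h)

/-- Deleting the lines through the points of `Z` costs any other point at most `|Z|` lines. -/
theorem card_filter_le_add_card (hr : IsPartialLinear r) (X : Finset α) {Z : Finset β} {y : β}
    (hy : y ∉ Z) {s : α → β → Prop} (hs : ∀ x y, s x y → r x y) :
    {x ∈ X | s x y}.card ≤ {x ∈ {x ∈ X | ∀ z ∈ Z, ¬r x z} | s x y}.card + Z.card := by
  rw [← Finset.card_filter_add_card_filter_not (s := {x ∈ X | s x y}) (fun x => ∀ z ∈ Z, ¬r x z),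
    Finset.filter_comm]
  refine Nat.add_le_add_left ?_ _
  calc {x ∈ {x ∈ X | s x y} | ¬∀ z ∈ Z, ¬r x z}.card
      ≤ (Z.biUnion fun z => {x ∈ X | r x y ∧ r x z}).card := Finset.card_le_card fun x hx => by
        simp only [Finset.mem_filter, not_forall, not_not] at hx
        obtain ⟨⟨hxX, hxy⟩, z, hz, hxz⟩ := hx
        exact Finset.mem_biUnion.2 ⟨z, hz, Finset.mem_filter.2 ⟨hxX, hs x y hxy, hxz⟩⟩
    _ ≤ Z.card * 1 := Finset.card_biUnion_le_card_mul _ _ _ fun z hz =>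
        hr.card_common_le_one X fun h => hy (h ▸ hz)
    _ = Z.card := mul_one _

theorem exists_pruning (hr : IsPartialLinear r) (X : Finset α) (Y : Finset β) {R : ℕ}
    (hR₁ : 1 ≤ R) (hR : 2 * X.card ≤ R ^ 2) {s : α → β → Prop} (hs : ∀ x y, s x y → r x y) :
    ∃ X' ⊆ X, ∃ Y' ⊆ Y, ∃ z, z * R ≤ 2 * X.card ∧ Y.card ≤ Y'.card + z ∧
      (∀ w, {x ∈ X' | r x w}.card ≤ R) ∧
      ∀ y ∈ Y', {x ∈ X | s x y}.card ≤ {x ∈ X' | s x y}.card + z := by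
  obtain ⟨Z, hZ, hZR⟩ := hr.exists_forall_notMem_card_le X hR₁ hR
  refine ⟨{x ∈ X | ∀ z ∈ Z, ¬r x z}, Finset.filter_subset _ _, Y \ Z, Finset.sdiff_subset, Z.card,
    hZ, Finset.card_le_card_sdiff_add_card, fun w => ?_, fun y hy =>
      hr.card_filter_le_add_card X (Finset.mem_sdiff.1 hy).2 hs⟩
  by_cases hw : w ∈ Z
  · rw [Finset.filter_filter, Finset.filter_eq_empty_iff.2 fun x _ hx => hx.1 w hw hx.2,
      Finset.card_empty]
    exact Nat.zero_le R
  · exact (Finset.card_le_card (Finset.filter_subset_filter _ (Finset.filter_subset _ _))).trans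
      (hZR w hw)

end IsPartialLinear

theorem exists_subrelation_card_eq {X : Finset α} {Y : Finset β} {k : ℕ}
    (h : ∀ y ∈ Y, k ≤ {x ∈ X | r x y}.card) :
    ∃ s : α → β → Prop, (∀ x y, s x y → r x y) ∧ ∀ y ∈ Y, {x ∈ X | s x y}.card = k := by
  choose! G hG hGk using fun y hy => Finset.exists_subset_card_eq (h y hy)
  refine ⟨fun x y => y ∈ Y ∧ x ∈ G y, fun x y ⟨hy, hx⟩ => (Finset.mem_filter.1 (hG y hy hx)).2,
    fun y hy => ?_⟩
  rw [← hGk y hy]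
  congr 1
  ext x
  simp only [Finset.mem_filter, hy, true_and, and_iff_right_iff_imp]
  exact fun hx => (Finset.mem_filter.1 (hG y hy hx)).1

end Pruning

section RichPoints

open scoped LinearAlgebra.Projectivization
open Projectivization

variable {F : Type*} [Field F] {p k k' m R : ℕ}

/-- With `|A| ≤ k`, `|L| ≤ m` and `R ≈ √(k m)` both terms of the bound for pairs of lines are of
order `(k m) ^ (3 / 2)`. -/
theorem sq_le_of_le_lineBound {E A L : ℕ} (hE : (E : ℝ) ≤ lineBound R (2 * (A * L)))
    (hA : A ≤ k) (hL : L ≤ m) (hR : k * m ≤ R ^ 2) (hR' : R ^ 2 ≤ 4 * (k * m)) :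
    E ^ 2 ≤ 40004 ^ 2 * 4 * (k * m) ^ 3 := by
  have hN : 2 * ((A : ℝ) * L) ≤ 2 * (k * m) := by gcongr
  have hkmR : (k * m : ℝ) ≤ (R : ℝ) ^ 2 := by exact_mod_cast hR
  have hsqrt : √(2 * ((A : ℝ) * L)) ≤ 2 * R := by
    rw [Real.sqrt_le_left (by positivity)]
    nlinarith
  have hlin : (E : ℝ) ≤ 40004 * (k * m) * R := calc
    (E : ℝ) ≤ 10000 * ((2 * (A * L)) * √(2 * (A * L))) + 2 * R * (2 * (A * L)) := by
      simpa only [lineBound, Nat.cast_mul, Nat.cast_ofNat] using hE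
    _ ≤ 10000 * ((2 * (k * m)) * (2 * R)) + 2 * R * (2 * (k * m)) := by gcongr
    _ = 40004 * (k * m) * R := by ring
  have hnat : E ≤ 40004 * (k * m) * R := by exact_mod_cast hlin
  calc E ^ 2 ≤ (40004 * (k * m) * R) ^ 2 := Nat.pow_le_pow_left hnat 2
    _ = 40004 ^ 2 * (k * m) ^ 2 * R ^ 2 := by ring
    _ ≤ 40004 ^ 2 * (k * m) ^ 2 * (4 * (k * m)) := Nat.mul_le_mul_left _ hR'
    _ = 40004 ^ 2 * 4 * (k * m) ^ 3 := by ring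

/-- Eliminates the number `E` of meeting pairs and the size `M` of the grid. -/
theorem pow_four_mul_pow_le_of_sq_le {n E M t : ℕ} (hE : E ^ 2 ≤ 40004 ^ 2 * 4 * (k * m) ^ 3)
    (hM : n * k' ^ 4 ≤ 128 * m ^ 2 * M) (hMt : (M * t) ^ 2 ≤ k * E) (hkk' : k ≤ 3 * k')
    (ht : k' ≤ 2 * t) (hk' : 0 < k') : n ^ 4 * k' ^ 15 ≤ 10 ^ 22 * m ^ 11 := by
  have hMk' : (M * k') ^ 4 ≤ 16 * (40004 ^ 2 * 4 * (k ^ 5 * m ^ 3)) := calc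
    (M * k') ^ 4 ≤ (M * (2 * t)) ^ 4 := Nat.pow_le_pow_left (Nat.mul_le_mul_left _ ht) 4
    _ = 16 * ((M * t) ^ 2) ^ 2 := by ring
    _ ≤ 16 * (k * E) ^ 2 := Nat.mul_le_mul_left _ (Nat.pow_le_pow_left hMt 2)
    _ = 16 * (k ^ 2 * E ^ 2) := by ring
    _ ≤ 16 * (k ^ 2 * (40004 ^ 2 * 4 * (k * m) ^ 3)) := by gcongr
    _ = 16 * (40004 ^ 2 * 4 * (k ^ 5 * m ^ 3)) := by ring
  refine Nat.le_of_mul_le_mul_left ?_ (by positivity : 0 < k' ^ 5)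
  calc k' ^ 5 * (n ^ 4 * k' ^ 15) = (n * k' ^ 4) ^ 4 * k' ^ 4 := by ring
    _ ≤ (128 * m ^ 2 * M) ^ 4 * k' ^ 4 := Nat.mul_le_mul_right _ (Nat.pow_le_pow_left hM 4)
    _ = 128 ^ 4 * m ^ 8 * (M * k') ^ 4 := by ring
    _ ≤ 128 ^ 4 * m ^ 8 * (16 * (40004 ^ 2 * 4 * (k ^ 5 * m ^ 3))) := Nat.mul_le_mul_left _ hMk'
    _ = 128 ^ 4 * 16 * 40004 ^ 2 * 4 * m ^ 11 * k ^ 5 := by ring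
    _ ≤ 128 ^ 4 * 16 * 40004 ^ 2 * 4 * m ^ 11 * (3 * k') ^ 5 := by gcongr
    _ = (128 ^ 4 * 16 * 40004 ^ 2 * 4 * 243) * (k' ^ 5 * m ^ 11) := by ring
    _ ≤ 10 ^ 22 * (k' ^ 5 * m ^ 11) := Nat.mul_le_mul_right _ (by norm_num)
    _ = k' ^ 5 * (10 ^ 22 * m ^ 11) := by ring

theorem grid_size_of_not_pow_le {n : ℕ} (hk : 4 ≤ k) (hkm : 4 * k ^ 2 ≤ m)
    (h : ¬n ^ 4 * k ^ 15 ≤ 10 ^ 22 * m ^ 11) : 4 * m ≤ n * k ∧ 8192 * m ^ 2 ≤ n * k ^ 4 := by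
  have hm : 1 ≤ m := by nlinarith
  refine ⟨not_lt.1 fun hlt => h ?_, not_lt.1 fun hlt => h ?_⟩
  · calc n ^ 4 * k ^ 15 ≤ n ^ 4 * k ^ 18 :=
          Nat.mul_le_mul_left _ (Nat.pow_le_pow_right (by lia) (by norm_num))
      _ = (n * k) ^ 4 * (k ^ 2) ^ 7 := by ring
      _ ≤ (4 * m) ^ 4 * m ^ 7 :=
          Nat.mul_le_mul (Nat.pow_le_pow_left hlt.le 4) (Nat.pow_le_pow_left (by lia) 7)
      _ = 256 * m ^ 11 := by ring
      _ ≤ 10 ^ 22 * m ^ 11 := Nat.mul_le_mul_right _ (by norm_num)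
  · calc n ^ 4 * k ^ 15 ≤ n ^ 4 * k ^ 16 :=
          Nat.mul_le_mul_left _ (Nat.pow_le_pow_right (by lia) (by norm_num))
      _ = (n * k ^ 4) ^ 4 := by ring
      _ ≤ (8192 * m ^ 2) ^ 4 := Nat.pow_le_pow_left hlt.le 4
      _ = 8192 ^ 4 * m ^ 8 := by ring
      _ ≤ 10 ^ 22 * m ^ 11 := Nat.mul_le_mul (by norm_num) (Nat.pow_le_pow_right hm (by norm_num))

theorem four_mul_le_of_mul_le_two_mul {z : ℕ} (hz : z * R ≤ 2 * m) (hR : k * m ≤ R ^ 2)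
    (hk : 64 * m ≤ k ^ 3) (hm : 0 < m) : 4 * z ≤ k := by
  have hzk : z ^ 2 * k ≤ 4 * m := Nat.le_of_mul_le_mul_right (c := m) (by
    calc z ^ 2 * k * m = z ^ 2 * (k * m) := by ring
      _ ≤ z ^ 2 * R ^ 2 := Nat.mul_le_mul_left _ hR
      _ = (z * R) ^ 2 := by ring
      _ ≤ (2 * m) ^ 2 := Nat.pow_le_pow_left hz 2
      _ = 4 * m * m := by ring) hm
  have hk0 : 0 < k := Nat.pos_of_ne_zero (by rintro rfl; lia)
  refine (Nat.pow_le_pow_iff_left two_ne_zero).1 (Nat.le_of_mul_le_mul_right (c := k) ?_ hk0)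
  nlinarith

/-- Here `k` is an upper and `k'` a lower bound for the number of lines used at each point, and the
pairs of lines to be counted live in a `k × k` grid. -/
theorem card_pow_four_mul_pow_le_of_card_le [Infinite F] (hp : CharAtLeast F p)
    {r : ℙ F (Fin 3 → F) → ℙ F (Fin 3 → F) → Prop} (hr : ∀ x y, r x y → orthogonal x y)
    {X Y : Finset (ℙ F (Fin 3 → F))} (hXm : X.card ≤ m) (hYk : ∀ y ∈ Y, {x ∈ X | r x y}.card ≤ k)
    (hYk' : ∀ y ∈ Y, k' ≤ {x ∈ X | r x y}.card) (hXR : ∀ w, {x ∈ X | orthogonal x w}.card ≤ R)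
    (hR : k * m ≤ R ^ 2) (hR' : R ^ 2 ≤ 4 * (k * m)) (hk' : 4 ≤ k') (hkk' : k ≤ 3 * k')
    (hkm : 4 * k ^ 2 ≤ m) (hmp : m ^ 3 ≤ p ^ 4) (hmY : 4 * m ≤ Y.card * k')
    (hmY' : 8192 * m ^ 2 ≤ Y.card * k' ^ 4) : Y.card ^ 4 * k' ^ 15 ≤ 10 ^ 22 * m ^ 11 := by
  rcases Y.eq_empty_or_nonempty with rfl | hYne
  · simp
  obtain ⟨y₀, hy₀⟩ := hYne
  have hk0 : 4 ≤ k := hk'.trans ((hYk' y₀ hy₀).trans (hYk y₀ hy₀))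
  have hm0 : 0 < m := by nlinarith
  have hlin : IsPartialLinear r := fun _ _ _ _ h₁ h₂ h₃ h₄ =>
    isPartialLinear_orthogonal (hr _ _ h₁) (hr _ _ h₂) (hr _ _ h₃) (hr _ _ h₄)
  obtain ⟨y₁, hy₁, y₂, hy₂, hM⟩ :=
    hlin.exists_card_mul_le_gridPoints hm0 hXm hk' hYk' ⟨y₀, hy₀⟩ hmY hmY'
  have h₁₂ : y₁ ≠ y₂ := by
    rintro rfl
    rw [hlin.gridPoints_self, Finset.card_empty] at hM
    nlinarith
  obtain ⟨A, L, hA, hL, hLR, hE⟩ := exists_sq_card_gridPoints_mul_le (Y := Y) (t := k' - 1) hr h₁₂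
    (hYk y₁ hy₁) (hYk y₂ hy₂) hXR fun y hy => by
      rw [Nat.sub_add_cancel (by lia)]
      exact (hYk' y (Finset.mem_filter.1 hy).1).trans
        (Finset.card_le_card (Finset.monotone_filter_right _ fun x _ => hr x y))
  have hLm := hL.trans hXm
  have hAL : 2 * (A.card * L.card) ≤ p ^ 2 := by
    refine (Nat.pow_le_pow_iff_left two_ne_zero).1 ?_
    calc (2 * (A.card * L.card)) ^ 2 ≤ (2 * (k * m)) ^ 2 := by gcongr
      _ = 4 * k ^ 2 * m ^ 2 := by ring
      _ ≤ m * m ^ 2 := Nat.mul_le_mul_right _ hkm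
      _ = m ^ 3 := by ring
      _ ≤ p ^ 4 := hmp
      _ = (p ^ 2) ^ 2 := by ring
  have hkR : k ≤ R := (Nat.pow_le_pow_iff_left two_ne_zero).1 (by nlinarith)
  have hmeets := incidenceCount_meets_product_le hp (by lia) (hA.trans hkR) hLR hAL
  exact pow_four_mul_pow_le_of_sq_le (sq_le_of_le_lineBound hmeets hA hLm hR hR') hM hE hkk'
    (by lia) (by lia)

/-- The range `4 m ^ (1 / 3) ≤ k`, in which pruning the points on more than `√(k m)` lines is
harmless. -/
theorem card_pow_four_mul_pow_le_of_le_cube [Infinite F] (hp : CharAtLeast F p)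
    {X Y : Finset (ℙ F (Fin 3 → F))} (hXm : X.card ≤ m) (hk : 8 ≤ k) (hkm : 4 * k ^ 2 ≤ m)
    (hmp : m ^ 3 ≤ p ^ 4) (hkY : k ≤ Y.card) (hk3 : 64 * m ≤ k ^ 3)
    (hYk : ∀ y ∈ Y, k ≤ {x ∈ X | orthogonal x y}.card) :
    Y.card ^ 4 * k ^ 15 ≤ 10 ^ 31 * m ^ 11 := by
  have hm0 : 0 < m := by nlinarith
  obtain ⟨s, hs, hsk⟩ := exists_subrelation_card_eq hYk
  obtain ⟨R, hR₁, hR, hR'⟩ : ∃ R : ℕ, 1 ≤ R ∧ k * m ≤ R ^ 2 ∧ R ^ 2 ≤ 4 * (k * m) := by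
    refine ⟨Nat.sqrt (k * m) + 1, by lia, (Nat.lt_succ_sqrt' _).le, ?_⟩
    have hsqrt : 1 ≤ Nat.sqrt (k * m) := Nat.le_sqrt.2 (by nlinarith)
    nlinarith [Nat.sqrt_le' (k * m)]
  obtain ⟨X', hX', Y', hY', z, hz, hYz, hX'R, hdeg⟩ :=
    isPartialLinear_orthogonal.exists_pruning X Y hR₁ (by nlinarith) hs
  have hzk : 4 * z ≤ k := four_mul_le_of_mul_le_two_mul (hz.trans (by lia)) hR hk3 hm0
  have hcard : Y'.card ^ 4 * (k / 2) ^ 15 ≤ 10 ^ 22 * m ^ 11 := by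
    by_contra h
    have hk2 : 4 * (k / 2) ^ 2 ≤ m :=
      (Nat.mul_le_mul_left 4 (Nat.pow_le_pow_left (Nat.div_le_self k 2) 2)).trans hkm
    obtain ⟨hmY, hmY'⟩ := grid_size_of_not_pow_le (by lia) hk2 h
    refine h (card_pow_four_mul_pow_le_of_card_le hp hs ((Finset.card_le_card hX').trans hXm)
      (fun y hy => ?_) (fun y hy => ?_) hX'R hR hR' (by lia) (by lia) hkm hmp hmY hmY')
    · exact (Finset.card_le_card (Finset.filter_subset_filter _ hX')).trans (hsk y (hY' hy)).le
    · have := hdeg y hy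
      rw [hsk y (hY' hy)] at this
      lia
  calc Y.card ^ 4 * k ^ 15 ≤ (2 * Y'.card) ^ 4 * (3 * (k / 2)) ^ 15 :=
        Nat.mul_le_mul (Nat.pow_le_pow_left (by lia) 4) (Nat.pow_le_pow_left (by lia) 15)
    _ = 2 ^ 4 * 3 ^ 15 * (Y'.card ^ 4 * (k / 2) ^ 15) := by ring
    _ ≤ 2 ^ 4 * 3 ^ 15 * (10 ^ 22 * m ^ 11) := Nat.mul_le_mul_left _ hcard
    _ ≤ 10 ^ 31 * m ^ 11 := by nlinarith [Nat.zero_le (m ^ 11)]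

theorem card_pow_four_mul_pow_le_of_infinite [Infinite F] (hp : CharAtLeast F p)
    {X Y : Finset (ℙ F (Fin 3 → F))} (hXm : X.card ≤ m) (hk : 8 ≤ k) (hkm : 4 * k ^ 2 ≤ m)
    (hmp : m ^ 3 ≤ p ^ 4) (hYk : ∀ y ∈ Y, k ≤ {x ∈ X | orthogonal x y}.card) :
    Y.card ^ 4 * k ^ 15 ≤ 10 ^ 31 * m ^ 11 := by
  rcases lt_or_ge Y.card k with hkY | hkY
  · calc Y.card ^ 4 * k ^ 15 ≤ k ^ 4 * k ^ 18 :=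
          Nat.mul_le_mul (Nat.pow_le_pow_left hkY.le 4)
            (Nat.pow_le_pow_right (by lia) (by norm_num))
      _ = (k ^ 2) ^ 11 := by ring
      _ ≤ m ^ 11 := Nat.pow_le_pow_left (by lia) 11
      _ ≤ 10 ^ 31 * m ^ 11 := Nat.le_mul_of_pos_left _ (by norm_num)
  rcases le_or_gt (64 * m) (k ^ 3) with hk3 | hk3
  · exact card_pow_four_mul_pow_le_of_le_cube hp hXm hk hkm hmp hkY hk3 hYk
  have hpairs : Y.card * k ^ 2 ≤ 2 * m ^ 2 :=
    (isPartialLinear_orthogonal.card_mul_sq_le (by lia) hYk).trans (by gcongr)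
  calc Y.card ^ 4 * k ^ 15 = (Y.card * k ^ 2) ^ 4 * k ^ 7 := by ring
    _ ≤ (2 * m ^ 2) ^ 4 * k ^ 9 :=
        Nat.mul_le_mul (Nat.pow_le_pow_left hpairs 4)
          (Nat.pow_le_pow_right (by lia) (by norm_num))
    _ = 16 * m ^ 8 * (k ^ 3) ^ 3 := by ring
    _ ≤ 16 * m ^ 8 * (64 * m) ^ 3 := Nat.mul_le_mul_left _ (Nat.pow_le_pow_left hk3.le 3)
    _ = 16 * 64 ^ 3 * m ^ 11 := by ring
    _ ≤ 10 ^ 31 * m ^ 11 := Nat.mul_le_mul_right _ (by norm_num)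

end RichPoints

/-! ### Bézout's theorem -/

section Bezout

variable {σ K : Type*} [Field K]

theorem totalDegree_le_of_mem_restrictTotalDegree {d : ℕ}
    (f : restrictTotalDegree σ K d) : f.1.totalDegree ≤ d :=
  (mem_restrictTotalDegree _ _ _).1 f.2

theorem card_biUnion_antidiagonal_mul_two (d : ℕ) :
    ((Finset.range (d + 1)).biUnion Finset.HasAntidiagonal.antidiagonal).card * 2 =
      (d + 1) * (d + 2) := by
  rw [Finset.card_biUnion fun i _ j _ hij => Finset.disjoint_left.2 fun q hi hj =>
    hij ((Finset.HasAntidiagonal.mem_antidiagonal.1 hi).symm.trans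
      (Finset.HasAntidiagonal.mem_antidiagonal.1 hj))]
  simp only [Finset.Nat.card_antidiagonal]
  rw [← add_zero (∑ i ∈ Finset.range (d + 1), (i + 1)),
    ← Finset.sum_range_succ' (fun i => i) (d + 1), Finset.sum_range_id_mul_two,
    Nat.add_sub_cancel, mul_comm]

theorem finrank_restrictTotalDegree_fin_two_mul_two (d : ℕ) :
    Module.finrank K (restrictTotalDegree (Fin 2) K d) * 2 = (d + 1) * (d + 2) := by
  have e : {n : Fin 2 →₀ ℕ | n.degree ≤ d} ≃
      (Finset.range (d + 1)).biUnion Finset.HasAntidiagonal.antidiagonal :=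
    (Finsupp.equivFunOnFinite.trans (finTwoArrowEquiv ℕ)).subtypeEquiv fun n => by
      simp [Finsupp.degree_eq_sum]
  have b := (basisRestrictSupport K {n : Fin 2 →₀ ℕ | n.degree ≤ d}).reindex e
  rw [← card_biUnion_antidiagonal_mul_two, ← Fintype.card_coe]
  exact congrArg (· * 2) (Module.finrank_eq_card_basis b)

theorem exists_totalDegree_le_eval_ne_zero {T : Finset (σ → K)} {t : σ → K} (ht : t ∈ T) :
    ∃ g : MvPolynomial σ K, g.totalDegree + 1 ≤ T.card ∧ eval t g ≠ 0 ∧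
      ∀ s ∈ T, s ≠ t → eval s g = 0 := by
  have hlinear : ∀ s ∈ T.erase t, ∃ l : MvPolynomial σ K,
      l.totalDegree ≤ 1 ∧ eval s l = 0 ∧ eval t l ≠ 0 := fun s hs => by
    obtain ⟨i, hi⟩ := Function.ne_iff.1 (Finset.ne_of_mem_erase hs)
    exact ⟨X i - C (s i), (totalDegree_sub_C_le _ _).trans (totalDegree_X _).le, by simp,
      by simpa [sub_eq_zero] using hi.symm⟩
  choose! l hdeg hs₀ ht₀ using hlinear
  refine ⟨∏ s ∈ T.erase t, l s, ?_, ?_, fun s hs hst => ?_⟩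
  · have hsum := (totalDegree_finsetProd _ _).trans (Finset.sum_le_card_nsmul _ _ 1 hdeg)
    rw [smul_eq_mul, mul_one] at hsum
    rw [← Finset.card_erase_add_one ht]
    exact Nat.succ_le_succ hsum
  · rw [map_prod, Finset.prod_ne_zero_iff]
    exact ht₀
  · have hmem := Finset.mem_erase.2 ⟨hst, hs⟩
    rw [map_prod]
    exact Finset.prod_eq_zero hmem (hs₀ s hmem)

/-- Evaluation of the polynomials of degree at most `d` at the points of `T`. -/
def evalOn (d : ℕ) (T : Finset (σ → K)) : restrictTotalDegree σ K d →ₗ[K] T → K :=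
  LinearMap.pi fun t => (aeval (t : σ → K)).toLinearMap ∘ₗ Submodule.subtype _

@[simp]
theorem evalOn_apply {d : ℕ} {T : Finset (σ → K)} (g : restrictTotalDegree σ K d) (t : T) :
    evalOn d T g t = eval (t : σ → K) g.1 := by
  simp [evalOn]

theorem evalOn_surjective {d : ℕ} {T : Finset (σ → K)} (hT : T.card ≤ d + 1) :
    Function.Surjective (evalOn d T) := by
  have hdual (t : T) : ∃ g : restrictTotalDegree σ K d,
      evalOn d T g t ≠ 0 ∧ ∀ s, s ≠ t → evalOn d T g s = 0 := by
    obtain ⟨g, hdeg, hgt, hgs⟩ := exists_totalDegree_le_eval_ne_zero t.2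
    refine ⟨⟨g, (mem_restrictTotalDegree _ _ _).2 (by lia)⟩, by simpa using hgt, fun s hs => ?_⟩
    simpa using hgs s s.2 (Subtype.coe_injective.ne hs)
  choose g hgt hgs using hdual
  refine fun v => ⟨∑ t, (v t / evalOn d T (g t) t) • g t, funext fun s => ?_⟩
  rw [map_sum, Finset.sum_apply, Finset.sum_eq_single_of_mem s (Finset.mem_univ s)]
  · rw [map_smul, Pi.smul_apply, smul_eq_mul, div_mul_cancel₀ _ (hgt s)]
  · intro t _ hts
    rw [map_smul, Pi.smul_apply, hgs t s hts.symm, smul_zero]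

theorem finrank_add_card_le_of_forall_eval_eq_zero [Finite σ] {d : ℕ} {T : Finset (σ → K)}
    (hT : T.card ≤ d + 1) {W : Submodule K (MvPolynomial σ K)}
    (hW : W ≤ restrictTotalDegree σ K d) (hWT : ∀ g ∈ W, ∀ t ∈ T, eval t g = 0) :
    Module.finrank K W + T.card ≤ Module.finrank K (restrictTotalDegree σ K d) := by
  have hker : W ≤ (LinearMap.ker (evalOn d T)).map (Submodule.subtype _) := fun g hg =>
    ⟨⟨g, hW hg⟩, LinearMap.mem_ker.2 (funext fun t => by simpa using hWT g hg t t.2), rfl⟩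
  have hrank := LinearMap.finrank_range_add_finrank_ker (evalOn d T)
  rw [LinearMap.range_eq_top.2 (evalOn_surjective hT), finrank_top,
    Module.finrank_fintype_fun_eq_card, Fintype.card_coe] at hrank
  have hle := Submodule.finrank_mono hker
  rw [Submodule.finrank_map_subtype_eq] at hle
  lia

/-- The map `(u, v) ↦ u f + v g` on polynomials of degrees at most `a` and `b`. -/
def combinationMap (f g : MvPolynomial σ K) (a b : ℕ) :
    restrictTotalDegree σ K a × restrictTotalDegree σ K b →ₗ[K] MvPolynomial σ K :=
  (LinearMap.mulRight K f ∘ₗ Submodule.subtype _).coprod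
    (LinearMap.mulRight K g ∘ₗ Submodule.subtype _)

@[simp]
theorem combinationMap_apply (f g : MvPolynomial σ K) {a b : ℕ}
    (w : restrictTotalDegree σ K a × restrictTotalDegree σ K b) :
    combinationMap f g a b w = w.1.1 * f + w.2.1 * g :=
  rfl

/-- A pair `(u, v)` in the kernel is determined by the quotient `v / f`. -/
theorem finrank_ker_combinationMap_le [Finite σ] {f g : MvPolynomial σ K} (hfg : IsRelPrime f g)
    (hf : f ≠ 0) (a c : ℕ) :
    Module.finrank K (LinearMap.ker (combinationMap f g a (c + f.totalDegree))) ≤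
      Module.finrank K (restrictTotalDegree σ K c) := by
  set b := c + f.totalDegree
  let snd : LinearMap.ker (combinationMap f g a b) →ₗ[K] MvPolynomial σ K :=
    Submodule.subtype _ ∘ₗ LinearMap.snd K _ _ ∘ₗ Submodule.subtype _
  have hinj : Function.Injective snd := by
    rintro ⟨⟨u, v⟩, h⟩ ⟨⟨u', v'⟩, h'⟩ (hv : v.1 = v'.1)
    rw [LinearMap.mem_ker, combinationMap_apply] at h h'
    have hu : u.1 = u'.1 := mul_right_cancel₀ hf (by linear_combination h - h' - g * hv)
    exact Subtype.ext (Prod.ext (Subtype.ext hu) (Subtype.ext hv))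
  have hrange : LinearMap.range snd ≤
      LinearMap.range (LinearMap.mulLeft K f ∘ₗ (restrictTotalDegree σ K c).subtype) := by
    rintro _ ⟨⟨⟨u, v⟩, h⟩, rfl⟩
    rw [LinearMap.mem_ker, combinationMap_apply] at h
    obtain ⟨q, hq⟩ : f ∣ v.1 :=
      hfg.dvd_of_dvd_mul_right ⟨-u.1, by linear_combination h⟩
    rcases eq_or_ne q 0 with rfl | hq₀
    · exact ⟨0, by rw [map_zero]; exact (hq.trans (mul_zero f)).symm⟩
    have hdeg := totalDegree_le_of_mem_restrictTotalDegree v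
    rw [hq, totalDegree_mul_of_isDomain hf hq₀] at hdeg
    exact ⟨⟨q, (mem_restrictTotalDegree _ _ _).2 (by lia)⟩, hq.symm⟩
  rw [← LinearMap.finrank_range_of_inj hinj]
  exact (Submodule.finrank_mono hrange).trans (LinearMap.finrank_range_le _)

/-- If `f` and `g`, of degrees `m` and `n`, had `m n + 1` common zeros, these would impose that many
conditions on the combinations `u f + v g` of degree at most `N = m n + m + n`; but these
combinations form a space of codimension at most `m n`. -/
theorem card_le_totalDegree_mul_totalDegree {f g : MvPolynomial (Fin 2) K} (hfg : IsRelPrime f g)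
    (hf : f ≠ 0) {T : Finset (Fin 2 → K)} (hT : ∀ t ∈ T, eval t f = 0 ∧ eval t g = 0) :
    T.card ≤ f.totalDegree * g.totalDegree := by
  by_contra! hcard
  obtain ⟨S, hST, hS⟩ := Finset.exists_subset_card_eq (Nat.succ_le_of_lt hcard)
  generalize hm : f.totalDegree = m at *
  generalize hn : g.totalDegree = n at *
  set Φ := combinationMap f g (m * n + n) (m * n + m) with hΦ
  have hker : Module.finrank K (LinearMap.ker Φ) ≤
      Module.finrank K (restrictTotalDegree (Fin 2) K (m * n)) :=
    hm ▸ finrank_ker_combinationMap_le hfg hf (m * n + n) (m * n)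
  have hdeg : LinearMap.range Φ ≤ restrictTotalDegree (Fin 2) K (m * n + m + n) := by
    rintro _ ⟨⟨u, v⟩, rfl⟩
    have hu := totalDegree_le_of_mem_restrictTotalDegree u
    have hv := totalDegree_le_of_mem_restrictTotalDegree v
    rw [mem_restrictTotalDegree, hΦ, combinationMap_apply]
    refine (totalDegree_add _ _).trans (max_le ?_ ?_) <;>
      exact (totalDegree_mul _ _).trans (by lia)
  have hvanish : ∀ q ∈ LinearMap.range Φ, ∀ t ∈ S, eval t q = 0 := by
    rintro _ ⟨w, rfl⟩ t ht
    simp [hΦ, hT t (hST ht)]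
  have hrange := finrank_add_card_le_of_forall_eval_eq_zero (by lia) hdeg hvanish
  have hrank := LinearMap.finrank_range_add_finrank_ker Φ
  rw [Module.finrank_prod] at hrank
  have h₁ := finrank_restrictTotalDegree_fin_two_mul_two (K := K) (m * n)
  have h₂ := finrank_restrictTotalDegree_fin_two_mul_two (K := K) (m * n + m)
  have h₃ := finrank_restrictTotalDegree_fin_two_mul_two (K := K) (m * n + n)
  have h₄ := finrank_restrictTotalDegree_fin_two_mul_two (K := K) (m * n + m + n)
  nlinarith

end Bezout

/-! ### Pinning points -/

section Pinning

theorem exists_mem_subset_card_mul_le {α β : Type*} {r : α → β → Prop} {A : Finset α}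
    {B : Finset β} {k : ℕ} (h : ∀ b ∈ B, k ≤ {a ∈ A | r a b}.card) (hpos : 0 < B.card * k) :
    ∃ a ∈ A, ∃ B' ⊆ B, (∀ b ∈ B', r a b) ∧ B.card * k ≤ A.card * B'.card := by
  have hcount := card_mul_le_incidenceCount h
  have hA : A.Nonempty := by
    by_contra hA
    simp only [incidenceCount, Finset.not_nonempty_iff_eq_empty.1 hA, Finset.sum_empty] at hcount
    exact hpos.not_ge hcount
  obtain ⟨a, ha, hmax⟩ := Finset.exists_max_image A (fun a => {b ∈ B | r a b}.card) hA
  exact ⟨a, ha, _, Finset.filter_subset _ _, fun b hb => (Finset.mem_filter.1 hb).2,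
    hcount.trans (Finset.sum_le_card_nsmul A _ _ hmax)⟩

variable {K : Type*} [Field K] {D d : ℕ} {P : Finset (Fin 2 → K)}
  {f : Finset (MvPolynomial (Fin 2) K)} {q g : MvPolynomial (Fin 2) K}
  {V : Submodule K (MvPolynomial (Fin 2) K)}

/-- Finitely many pairwise non-proportional irreducible polynomials of total degree `D`: the
equations of distinct irreducible curves of degree `D`. -/
structure IsCurveFamily (D : ℕ) (f : Finset (MvPolynomial (Fin 2) K)) : Prop where
  irreducible : ∀ q ∈ f, Irreducible q
  totalDegree_eq : ∀ q ∈ f, q.totalDegree = D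
  eq_of_mem_span : ∀ q ∈ f, ∀ q' ∈ f, q ∈ Submodule.span K {q'} → q = q'

theorem IsCurveFamily.mono {f' : Finset (MvPolynomial (Fin 2) K)} (hf : IsCurveFamily D f)
    (hs : f' ⊆ f) : IsCurveFamily D f' :=
  ⟨fun q hq => hf.irreducible q (hs hq), fun q hq => hf.totalDegree_eq q (hs hq),
    fun q hq q' hq' => hf.eq_of_mem_span q (hs hq) q' (hs hq')⟩

/-- The points of `P` on the curve `q = 0`. -/
def pointsOn (P : Finset (Fin 2 → K)) (q : MvPolynomial (Fin 2) K) : Finset (Fin 2 → K) :=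
  {x ∈ P | eval x q = 0}

theorem isRelPrime_of_notMem_span (hq : Irreducible q) (hg : g.totalDegree ≤ q.totalDegree)
    (h : g ∉ Submodule.span K {q}) : IsRelPrime q g := by
  rw [hq.isRelPrime_iff_not_dvd]
  rintro ⟨u, rfl⟩
  have hu : u ≠ 0 := by
    rintro rfl
    exact h (by simp only [mul_zero, Submodule.zero_mem])
  rw [totalDegree_mul_of_isDomain hq.ne_zero hu] at hg
  rw [totalDegree_eq_zero_iff_eq_C.1 (by lia : u.totalDegree = 0), mul_comm, ← smul_eq_C_mul] at h
  exact h (Submodule.smul_mem _ _ (Submodule.mem_span_singleton_self q))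

theorem card_filter_eval_eq_zero_le_sq (hq : Irreducible q) (hqD : q.totalDegree = D)
    (hg : g.totalDegree ≤ D) (h : g ∉ Submodule.span K {q}) (P : Finset (Fin 2 → K)) :
    {x ∈ P | eval x q = 0 ∧ eval x g = 0}.card ≤ D ^ 2 := by
  subst hqD
  calc {x ∈ P | eval x q = 0 ∧ eval x g = 0}.card
      ≤ q.totalDegree * g.totalDegree :=
        card_le_totalDegree_mul_totalDegree (isRelPrime_of_notMem_span hq hg h) hq.ne_zero
          fun t ht => (Finset.mem_filter.1 ht).2
    _ ≤ q.totalDegree * q.totalDegree := Nat.mul_le_mul_left _ hg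
    _ = q.totalDegree ^ 2 := (sq _).symm

theorem card_pointsOn_le_card_filter_add (hq : Irreducible q) (hqD : q.totalDegree = D)
    (hg : g.totalDegree ≤ D) (h : g ∉ Submodule.span K {q}) (P : Finset (Fin 2 → K)) :
    (pointsOn P q).card ≤ {x ∈ P | eval x q = 0 ∧ eval x g ≠ 0}.card + D ^ 2 := by
  have hsplit := Finset.card_filter_add_card_filter_not (s := pointsOn P q) (fun x => eval x g = 0)
  simp only [pointsOn, Finset.filter_filter] at hsplit ⊢
  have := card_filter_eval_eq_zero_le_sq hq hqD hg h P
  simp only [ne_eq]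
  lia

theorem exists_mem_notMem_span_singleton {E : Type*} [AddCommGroup E] [Module K E]
    {V : Submodule K E} (hV : 2 ≤ Module.finrank K V) (v : E) :
    ∃ g ∈ V, g ∉ Submodule.span K {v} := by
  by_contra! hle
  have := (Submodule.finrank_mono (show V ≤ _ from hle)).trans (finrank_span_le_card ({v} : Set E))
  rw [Set.toFinset_singleton, Finset.card_singleton] at this
  lia

/-- The members of the linear system `V` that pass through `x`. -/
def vanishingAt (V : Submodule K (MvPolynomial (Fin 2) K)) (x : Fin 2 → K) :
    Submodule K (MvPolynomial (Fin 2) K) :=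
  V ⊓ LinearMap.ker (aeval x : MvPolynomial (Fin 2) K →ₐ[K] K).toLinearMap

theorem mem_vanishingAt {x : Fin 2 → K} : g ∈ vanishingAt V x ↔ g ∈ V ∧ eval x g = 0 := by
  simp only [vanishingAt, Submodule.mem_inf, LinearMap.mem_ker, AlgHom.toLinearMap_apply,
    aeval_eq_eval]

theorem finrank_vanishingAt_add_one [Module.Finite K V] {x : Fin 2 → K} (hg : g ∈ V)
    (hgx : eval x g ≠ 0) : Module.finrank K (vanishingAt V x) + 1 = Module.finrank K V := by
  let ev : Module.Dual K V := (aeval x : MvPolynomial (Fin 2) K →ₐ[K] K).toLinearMap.comp V.subtype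
  have hev (a : V) : ev a = eval x a.1 := by
    simp only [ev, LinearMap.comp_apply, AlgHom.toLinearMap_apply, aeval_eq_eval,
      Submodule.subtype_apply]
  have hev0 : ev ≠ 0 := fun h0 => hgx <| by rw [← hev ⟨g, hg⟩, h0, LinearMap.zero_apply]
  have hker : (LinearMap.ker ev).map V.subtype = vanishingAt V x := by
    rw [vanishingAt, LinearMap.ker_comp, Submodule.map_comap_subtype]
  rw [← hker, Submodule.finrank_map_subtype_eq, Module.Dual.finrank_ker_add_one_of_ne_zero hev0]

/-- A most popular point that is not a base point of `V` lies on many of the curves, and passing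
through it is a nontrivial linear condition on `V`. -/
theorem exists_pin (hf : IsCurveFamily D f) (hne : f.Nonempty) (hd : D ^ 2 < d)
    (hdeg : ∀ q ∈ f, d ≤ (pointsOn P q).card) (hVD : V ≤ restrictTotalDegree (Fin 2) K D)
    (hfV : ∀ q ∈ f, q ∈ V) (hV : 2 ≤ Module.finrank K V) :
    ∃ V' ≤ V, Module.finrank K V' + 1 = Module.finrank K V ∧ ∃ f' ⊆ f, (∀ q ∈ f', q ∈ V') ∧
      f.card * (d - D ^ 2) ≤ P.card * f'.card := by
  have : Module.Finite K V := Submodule.finiteDimensional_of_le hVD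
  have hpos : 0 < f.card * (d - D ^ 2) := Nat.mul_pos hne.card_pos (Nat.sub_pos_of_lt hd)
  obtain ⟨x, -, f', hf', hx, hcard⟩ := exists_mem_subset_card_mul_le (A := P) (B := f)
    (r := fun x q => eval x q = 0 ∧ ∃ g ∈ V, eval x g ≠ 0) (k := d - D ^ 2) (fun q hq => by
      obtain ⟨g, hgV, hgq⟩ := exists_mem_notMem_span_singleton hV q
      have hsplit := card_pointsOn_le_card_filter_add (hf.irreducible q hq)
        (hf.totalDegree_eq q hq) ((mem_restrictTotalDegree _ _ _).1 (hVD hgV)) hgq P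
      refine Nat.sub_le_iff_le_add.2 ((hdeg q hq).trans (hsplit.trans ?_))
      gcongr with x
      exact fun hgx => ⟨g, hgV, hgx⟩) hpos
  obtain ⟨q, hq⟩ := Finset.card_pos.1 (Nat.pos_of_mul_pos_left (hpos.trans_le hcard))
  obtain ⟨-, g, hgV, hgx⟩ := hx q hq
  exact ⟨vanishingAt V x, inf_le_left, finrank_vanishingAt_add_one hgV hgx, f', hf',
    fun q hq => mem_vanishingAt.2 ⟨hfV q (hf' hq), (hx q hq).1⟩, hcard⟩

theorem exists_pins (hf : IsCurveFamily D f) (hne : f.Nonempty) (hd : D ^ 2 < d)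
    (hdeg : ∀ q ∈ f, d ≤ (pointsOn P q).card) {j : ℕ}
    (hj : j < Module.finrank K (restrictTotalDegree (Fin 2) K D)) :
    ∃ V ≤ restrictTotalDegree (Fin 2) K D,
      Module.finrank K V + j = Module.finrank K (restrictTotalDegree (Fin 2) K D) ∧
      ∃ f' ⊆ f, (∀ q ∈ f', q ∈ V) ∧ f.card * (d - D ^ 2) ^ j ≤ P.card ^ j * f'.card := by
  induction j with
  | zero =>
    exact ⟨_, le_rfl, rfl, f, subset_rfl,
      fun q hq => (mem_restrictTotalDegree _ _ _).2 (hf.totalDegree_eq q hq).le, by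
        rw [pow_zero, pow_zero, mul_one, one_mul]⟩
  | succ j ih =>
    obtain ⟨V, hVD, hV, f₁, hf₁, hf₁V, hcard₁⟩ := ih (by lia)
    have hne₁ : f₁.Nonempty := Finset.card_pos.1 <| Nat.pos_of_mul_pos_left <|
      (Nat.mul_pos hne.card_pos (Nat.pow_pos (Nat.sub_pos_of_lt hd))).trans_le hcard₁
    obtain ⟨V', hV'V, hV', f₂, hf₂, hf₂V, hcard₂⟩ := exists_pin (hf.mono hf₁) hne₁ hd
      (fun q hq => hdeg q (hf₁ hq)) hVD hf₁V (by lia)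
    refine ⟨V', hV'V.trans hVD, by lia, f₂, hf₂.trans hf₁, hf₂V, ?_⟩
    calc f.card * (d - D ^ 2) ^ (j + 1) = f.card * (d - D ^ 2) ^ j * (d - D ^ 2) := by ring
      _ ≤ P.card ^ j * f₁.card * (d - D ^ 2) := Nat.mul_le_mul_right _ hcard₁
      _ = P.card ^ j * (f₁.card * (d - D ^ 2)) := mul_assoc _ _ _
      _ ≤ P.card ^ j * (P.card * f₂.card) := Nat.mul_le_mul_left _ hcard₂
      _ = P.card ^ (j + 1) * f₂.card := by ring

theorem card_mul_pow_le_of_finrank_eq (hf : IsCurveFamily D f) (hd : D ^ 2 < d)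
    (hdeg : ∀ q ∈ f, d ≤ (pointsOn P q).card) {j : ℕ}
    (hj : Module.finrank K (restrictTotalDegree (Fin 2) K D) = j + 1) :
    f.card * (d - D ^ 2) ^ j ≤ P.card ^ j := by
  rcases f.eq_empty_or_nonempty with rfl | hne
  · simp only [Finset.card_empty, zero_mul, zero_le]
  obtain ⟨V, -, hV, f', hf', hf'V, hcard⟩ := exists_pins hf hne hd hdeg (j := j) (by lia)
  have hV1 : Module.finrank K V = 1 := by lia
  have hf'card : f'.card ≤ 1 := Finset.card_le_one.2 fun q hq q' hq' => by
    have hq'0 : (⟨q', hf'V q' hq'⟩ : V) ≠ 0 :=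
      fun h0 => (hf.irreducible q' (hf' hq')).ne_zero (congrArg Subtype.val h0)
    obtain ⟨c, hc⟩ := (finrank_eq_one_iff_of_nonzero' _ hq'0).1 hV1 ⟨q, hf'V q hq⟩
    exact hf.eq_of_mem_span q (hf' hq) q' (hf' hq')
      (Submodule.mem_span_singleton.2 ⟨c, congrArg Subtype.val hc⟩)
  exact hcard.trans ((Nat.mul_le_mul_left _ hf'card).trans_eq (mul_one _))

end Pinning

/-! ### Nets of curves -/

section BaseChange

open scoped LinearAlgebra.Projectivization
open Projectivization

variable {ι F L : Type*} [Field F] [Field L]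

/-- Extension of scalars along `φ : F →+* L` for points of projective space. -/
def baseChange (φ : F →+* L) : ℙ F (ι → F) → ℙ L (ι → L) :=
  Projectivization.map (σ := φ)
    { toFun := fun v => φ ∘ v
      map_add' := fun v w => funext fun i => map_add φ (v i) (w i)
      map_smul' := fun a v => funext fun i => map_mul φ a (v i) }
    φ.injective.comp_left

theorem baseChange_injective (φ : F →+* L) :
    Function.Injective (baseChange φ : ℙ F (ι → F) → ℙ L (ι → L)) := by
  intro x y hxy
  induction x using Projectivization.ind with | h v hv =>
  induction y using Projectivization.ind with | h w hw =>
  obtain ⟨a, ha⟩ := (mk_eq_mk_iff' _ _ _ _ _).1 hxy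
  obtain ⟨i, hi⟩ := Function.ne_iff.1 hw
  have haφ : a = φ (v i / w i) := by
    rw [map_div₀, eq_div_iff ((map_ne_zero φ).2 hi)]
    exact congrFun ha i
  subst haφ
  refine (mk_eq_mk_iff' _ _ _ _ _).2 ⟨v i / w i, funext fun j => φ.injective ?_⟩
  rw [Pi.smul_apply, smul_eq_mul, map_mul]
  exact congrFun ha j

theorem orthogonal_baseChange [Fintype ι] (φ : F →+* L) {x y : ℙ F (ι → F)}
    (h : orthogonal x y) : orthogonal (baseChange φ x) (baseChange φ y) := by
  induction x using Projectivization.ind with | h v hv =>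
  induction y using Projectivization.ind with | h w hw =>
  refine (orthogonal_mk _ _).2 ((φ.map_dotProduct v w).symm.trans ?_)
  rw [(orthogonal_mk hv hw).1 h, map_zero]

theorem card_pow_four_mul_pow_le {p m k : ℕ} (hp : CharAtLeast F p)
    {X Y : Finset (ℙ F (Fin 3 → F))} (hXm : X.card ≤ m) (hk : 8 ≤ k) (hkm : 4 * k ^ 2 ≤ m)
    (hmp : m ^ 3 ≤ p ^ 4) (hYk : ∀ y ∈ Y, k ≤ {x ∈ X | orthogonal x y}.card) :
    Y.card ^ 4 * k ^ 15 ≤ 10 ^ 31 * m ^ 11 := by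
  let φ := algebraMap F (AlgebraicClosure F)
  have : Infinite (AlgebraicClosure F) := IsAlgClosed.instInfinite
  rw [← Finset.card_image_of_injective Y (baseChange_injective φ)]
  refine card_pow_four_mul_pow_le_of_infinite (X := X.image (baseChange φ)) (hp.map φ.injective)
    (Finset.card_image_le.trans hXm) hk hkm hmp (Finset.forall_mem_image.2 fun y hy => ?_)
  refine (hYk y hy).trans ((Finset.card_image_of_injective _ (baseChange_injective φ)).symm.le.trans
    (Finset.card_le_card (Finset.image_subset_iff.2 fun x hx => ?_)))
  obtain ⟨hxX, hxy⟩ := Finset.mem_filter.1 hx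
  exact Finset.mem_filter.2 ⟨Finset.mem_image_of_mem _ hxX, orthogonal_baseChange φ hxy⟩

end BaseChange

section Net

open scoped LinearAlgebra.Projectivization
open Projectivization

variable {ι K : Type*} [Field K]

/-- The point of projective space with homogeneous coordinates `v`; junk if `v = 0`. -/
def projPoint [Nonempty ι] (v : ι → K) : ℙ K (ι → K) :=
  if hv : v ≠ 0 then mk K v hv else Classical.arbitrary _

theorem projPoint_of_ne_zero [Nonempty ι] {v : ι → K} (hv : v ≠ 0) : projPoint v = mk K v hv :=
  dif_pos hv

theorem projPoint_eq_projPoint_iff [Nonempty ι] {v w : ι → K} (hv : v ≠ 0) (hw : w ≠ 0) :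
    projPoint v = projPoint w ↔ ∃ a : K, a • w = v := by
  rw [projPoint_of_ne_zero hv, projPoint_of_ne_zero hw, mk_eq_mk_iff']

theorem orthogonal_projPoint [Fintype ι] [Nonempty ι] {v w : ι → K} (hv : v ≠ 0) (hw : w ≠ 0) :
    orthogonal (projPoint v) (projPoint w) ↔ v ⬝ᵥ w = 0 := by
  rw [projPoint_of_ne_zero hv, projPoint_of_ne_zero hw, orthogonal_mk]

/-- The values at `x` of generators `b` of a linear system of curves; away from the base points
this is the rational map defined by the system. -/
def netMap (b : ι → MvPolynomial (Fin 2) K) (x : Fin 2 → K) : ι → K := fun i => eval x (b i)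

variable {D : ℕ} {P : Finset (Fin 2 → K)} {f : Finset (MvPolynomial (Fin 2) K)}
  {q g : MvPolynomial (Fin 2) K} {b : ι → MvPolynomial (Fin 2) K}

theorem eval_linearCombination [Fintype ι] (b : ι → MvPolynomial (Fin 2) K) (c : ι → K)
    (x : Fin 2 → K) : eval x (Fintype.linearCombination K b c) = netMap b x ⬝ᵥ c := by
  simp only [Fintype.linearCombination_apply, map_sum, smul_eval, dotProduct, netMap, mul_comm]

theorem exists_linearCombination_eq [Fintype ι] (hg : g ∈ Submodule.span K (Set.range b)) :
    ∃ c, Fintype.linearCombination K b c = g := by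
  rwa [← Fintype.range_linearCombination] at hg

theorem eval_eq_mul_eval_of_mem_span {x x₀ : Fin 2 → K} {a : K}
    (h : a • netMap b x₀ = netMap b x) (hg : g ∈ Submodule.span K (Set.range b)) :
    eval x g = a * eval x₀ g := by
  induction hg using Submodule.span_induction with
  | mem g hg =>
    obtain ⟨i, rfl⟩ := hg
    exact (congrFun h i).symm
  | zero => rw [map_zero, map_zero, mul_zero]
  | add g₁ g₂ _ _ h₁ h₂ => rw [map_add, map_add, h₁, h₂, mul_add]
  | smul c g _ h => rw [smul_eval, smul_eval, h, mul_left_comm]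

theorem span_range_le_restrictTotalDegree (hbD : ∀ i, (b i).totalDegree ≤ D) :
    Submodule.span K (Set.range b) ≤ restrictTotalDegree (Fin 2) K D := by
  rw [Submodule.span_le, Set.range_subset_iff]
  exact fun i => (mem_restrictTotalDegree _ _ _).2 (hbD i)

/-- A second member of the system meets `q = 0` in all the base points. -/
theorem card_pointsOn_le_card_filter_netMap_ne_zero (hq : Irreducible q) (hqD : q.totalDegree = D)
    (hbD : ∀ i, (b i).totalDegree ≤ D)
    (hb : 2 ≤ Module.finrank K (Submodule.span K (Set.range b))) (P : Finset (Fin 2 → K)) :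
    (pointsOn P q).card ≤ {x ∈ pointsOn P q | netMap b x ≠ 0}.card + D ^ 2 := by
  obtain ⟨g, hg, hgq⟩ := exists_mem_notMem_span_singleton hb q
  refine (card_pointsOn_le_card_filter_add hq hqD ((mem_restrictTotalDegree _ _ _).1
    (span_range_le_restrictTotalDegree hbD hg)) hgq P).trans ?_
  rw [pointsOn, Finset.filter_filter]
  gcongr with x
  intro hx
  rw [eval_eq_mul_eval_of_mem_span (a := 0) (x₀ := x) (by rw [zero_smul, hx]) hg, zero_mul]

/-- The fibre of `netMap b` through `x₀` lies on every member of the system through `x₀`, in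
particular on one other than `q`. -/
theorem card_filter_netMap_eq_smul_le (hq : Irreducible q) (hqD : q.totalDegree = D)
    (hbD : ∀ i, (b i).totalDegree ≤ D)
    (hb : 3 ≤ Module.finrank K (Submodule.span K (Set.range b))) {x₀ : Fin 2 → K}
    (hx₀ : netMap b x₀ ≠ 0) (P : Finset (Fin 2 → K)) :
    {x ∈ pointsOn P q | ∃ a : K, a • netMap b x₀ = netMap b x}.card ≤ D ^ 2 := by
  have hle := span_range_le_restrictTotalDegree hbD
  have : Module.Finite K (Submodule.span K (Set.range b)) :=
    Submodule.finiteDimensional_of_le hle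
  obtain ⟨i, hi⟩ := Function.ne_iff.1 hx₀
  have hpin := finrank_vanishingAt_add_one (Submodule.subset_span (Set.mem_range_self i)) hi
  obtain ⟨g, hg, hgq⟩ := exists_mem_notMem_span_singleton
    (V := vanishingAt (Submodule.span K (Set.range b)) x₀) (by lia) q
  obtain ⟨hgb, hgx₀⟩ := mem_vanishingAt.1 hg
  refine le_trans ?_ (card_filter_eval_eq_zero_le_sq hq hqD
    ((mem_restrictTotalDegree _ _ _).1 (hle hgb)) hgq P)
  rw [pointsOn, Finset.filter_filter]
  gcongr with x
  rintro ⟨a, ha⟩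
  rw [eval_eq_mul_eval_of_mem_span ha hgb, hgx₀, mul_zero]

theorem card_pointsOn_le_mul_card_image [Nonempty ι] (hq : Irreducible q)
    (hqD : q.totalDegree = D) (hbD : ∀ i, (b i).totalDegree ≤ D)
    (hb : 3 ≤ Module.finrank K (Submodule.span K (Set.range b))) (P : Finset (Fin 2 → K)) :
    (pointsOn P q).card ≤ D ^ 2 *
      ({x ∈ pointsOn P q | netMap b x ≠ 0}.image fun x => projPoint (netMap b x)).card + D ^ 2 := by
  refine (card_pointsOn_le_card_filter_netMap_ne_zero hq hqD hbD (by lia) P).trans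
    (Nat.add_le_add_right (Finset.card_le_mul_card_image _ _
      (Finset.forall_mem_image.2 fun x₀ hx₀ => ?_)) _)
  have hx₀ := (Finset.mem_filter.1 hx₀).2
  refine le_trans ?_ (card_filter_netMap_eq_smul_le hq hqD hbD hb hx₀ P)
  rw [Finset.filter_filter]
  gcongr with x
  exact fun hx => (projPoint_eq_projPoint_iff hx.1 hx₀).1 hx.2

/-- The system maps the plane to `ℙ²` in such a way that its members become preimages of lines. -/
theorem card_pow_four_mul_pow_le_of_net {p k : ℕ} (hp : CharAtLeast K p) (hf : IsCurveFamily D f)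
    (hD : D ≠ 0) (hdeg : ∀ q ∈ f, D ^ 2 * k + D ^ 2 ≤ (pointsOn P q).card)
    {b : Fin 3 → MvPolynomial (Fin 2) K} (hb : LinearIndependent K b)
    (hbD : ∀ i, (b i).totalDegree ≤ D) (hfb : ∀ q ∈ f, q ∈ Submodule.span K (Set.range b))
    (hk : 8 ≤ k) (hkm : 4 * k ^ 2 ≤ P.card) (hmp : P.card ^ 3 ≤ p ^ 4) :
    f.card ^ 4 * k ^ 15 ≤ 10 ^ 31 * P.card ^ 11 := by
  choose! y hy using fun q hq => exists_linearCombination_eq (hfb q hq)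
  have hy₀ (q) (hq : q ∈ f) : y q ≠ 0 := fun h0 => (hf.irreducible q hq).ne_zero <| by
    rw [← hy q hq, h0, map_zero]
  have hyinj : Set.InjOn (fun q => projPoint (y q)) f := fun q hq q' hq' h => by
    obtain ⟨a, ha⟩ := (projPoint_eq_projPoint_iff (hy₀ q hq) (hy₀ q' hq')).1 h
    refine hf.eq_of_mem_span q hq q' hq' (Submodule.mem_span_singleton.2 ⟨a, ?_⟩)
    rw [← hy q hq, ← ha, map_smul, hy q' hq']
  rw [← Finset.card_image_of_injOn hyinj]
  refine card_pow_four_mul_pow_le hp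
    (X := {x ∈ P | netMap b x ≠ 0}.image fun x => projPoint (netMap b x))
    (Finset.card_image_le.trans (Finset.card_filter_le _ _)) hk hkm hmp
    (Finset.forall_mem_image.2 fun q hq => ?_)
  have hcard := (hdeg q hq).trans (card_pointsOn_le_mul_card_image (hf.irreducible q hq)
    (hf.totalDegree_eq q hq) hbD ((finrank_span_eq_card hb).trans (Fintype.card_fin 3)).ge P)
  refine (Nat.le_of_mul_le_mul_left (Nat.le_of_add_le_add_right hcard)
    (Nat.pow_pos (Nat.pos_of_ne_zero hD))).trans (Finset.card_le_card ?_)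
  refine Finset.image_subset_iff.2 fun x hx => ?_
  simp only [pointsOn, Finset.mem_filter] at hx
  obtain ⟨⟨hxP, hxq⟩, hx₀⟩ := hx
  refine Finset.mem_filter.2
    ⟨Finset.mem_image_of_mem _ (Finset.mem_filter.2 ⟨hxP, hx₀⟩), ?_⟩
  rw [orthogonal_projPoint hx₀ (hy₀ q hq), ← eval_linearCombination, hy q hq, hxq]

theorem exists_linearIndependent_span_eq {E : Type*} [AddCommGroup E] [Module K E]
    {V : Submodule K E} [Module.Finite K V] {n : ℕ} (hV : Module.finrank K V = n) :
    ∃ b : Fin n → E, LinearIndependent K b ∧ Submodule.span K (Set.range b) = V := by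
  let B := Module.finBasisOfFinrankEq K V hV
  refine ⟨V.subtype ∘ B, B.linearIndependent.map' V.subtype V.ker_subtype, ?_⟩
  rw [Set.range_comp, Submodule.span_image, B.span_eq, Submodule.map_subtype_top]

/-- Pinning points cuts the system of all curves of degree `D` down to a net. -/
theorem card_pow_four_mul_pow_le_of_isCurveFamily {p k j : ℕ} (hp : CharAtLeast K p)
    (hf : IsCurveFamily D f) (hD : D ≠ 0)
    (hj : Module.finrank K (restrictTotalDegree (Fin 2) K D) = j + 3)
    (hdeg : ∀ q ∈ f, D ^ 2 * k + D ^ 2 ≤ (pointsOn P q).card)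
    (hk : 8 ≤ k) (hkm : 4 * k ^ 2 ≤ P.card) (hmp : P.card ^ 3 ≤ p ^ 4) :
    f.card ^ 4 * k ^ (4 * j + 15) ≤ 10 ^ 31 * P.card ^ (4 * j + 11) := by
  rcases f.eq_empty_or_nonempty with rfl | hne
  · simp only [Finset.card_empty, ne_eq, OfNat.ofNat_ne_zero, not_false_eq_true, zero_pow,
      zero_mul, zero_le]
  have hDpos : 0 < D ^ 2 := Nat.pow_pos (Nat.pos_of_ne_zero hD)
  obtain ⟨V, hVD, hV, f', hf', hf'V, hcard⟩ := exists_pins hf hne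
    (Nat.lt_add_of_pos_left (Nat.mul_pos hDpos (by lia))) hdeg (j := j) (by lia)
  rw [Nat.add_sub_cancel] at hcard
  have : Module.Finite K V := Submodule.finiteDimensional_of_le hVD
  obtain ⟨b, hb, rfl⟩ := exists_linearIndependent_span_eq (V := V) (n := 3) (by lia)
  have hnet := card_pow_four_mul_pow_le_of_net hp (hf.mono hf') hD (fun q hq => hdeg q (hf' hq)) hb
    (fun i => (mem_restrictTotalDegree _ _ _).1
      (hVD (Submodule.subset_span (Set.mem_range_self i)))) hf'V hk hkm hmp
  calc f.card ^ 4 * k ^ (4 * j + 15) = (f.card * k ^ j) ^ 4 * k ^ 15 := by ring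
    _ ≤ (f.card * (D ^ 2 * k) ^ j) ^ 4 * k ^ 15 := by
        gcongr
        exact Nat.le_mul_of_pos_left k hDpos
    _ ≤ (P.card ^ j * f'.card) ^ 4 * k ^ 15 := by gcongr
    _ = P.card ^ (4 * j) * (f'.card ^ 4 * k ^ 15) := by ring
    _ ≤ P.card ^ (4 * j) * (10 ^ 31 * P.card ^ 11) := Nat.mul_le_mul_left _ hnet
    _ = 10 ^ 31 * P.card ^ (4 * j + 11) := by ring

end Net

/-! ### Summation over the curves -/

section Summation

theorem sub_one_rpow_add_le {x s : ℝ} (hx : 1 ≤ x) (hs0 : 0 ≤ s) (hs1 : s ≤ 1) :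
    (x - 1) ^ s + s * x ^ (s - 1) ≤ x ^ s := by
  have hx0 : 0 < x := zero_lt_one.trans_le hx
  have hinv : -1 ≤ -x⁻¹ := neg_le_neg (inv_le_one_of_one_le₀ hx)
  have hx1 : x - 1 = x * (1 + -x⁻¹) := by field_simp; ring
  calc (x - 1) ^ s + s * x ^ (s - 1)
      = x ^ s * (1 + -x⁻¹) ^ s + s * (x ^ s / x) := by
        rw [hx1, Real.mul_rpow hx0.le (by linarith), Real.rpow_sub_one hx0.ne']
    _ ≤ x ^ s * (1 + s * -x⁻¹) + s * (x ^ s / x) := by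
        gcongr
        exact rpow_one_add_le_one_add_mul_self hinv hs0 hs1
    _ = x ^ s := by field_simp; ring

/-- Remove an element of least weight repeatedly. -/
theorem sum_le_div_mul_card_rpow {α : Type*} {w : α → ℝ} {D s : ℝ} (hD : 0 ≤ D) (hs0 : 0 < s)
    (hs1 : s ≤ 1) {A : Finset α} (h : ∀ S ⊆ A, ∀ a ∈ S, (∀ a' ∈ S, w a ≤ w a') →
      w a ≤ D * (S.card : ℝ) ^ (s - 1)) :
    ∑ a ∈ A, w a ≤ D / s * (A.card : ℝ) ^ s := by
  induction hn : A.card generalizing A with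
  | zero =>
    rw [Finset.card_eq_zero.1 hn, Finset.sum_empty, Nat.cast_zero, Real.zero_rpow hs0.ne', mul_zero]
  | succ n ih =>
    obtain ⟨a, ha, hmin⟩ := Finset.exists_min_image A w (Finset.card_pos.1 (by lia))
    have hrest := ih (fun S hS => h S (hS.trans (Finset.erase_subset a A)))
      (by rw [Finset.card_erase_of_mem ha, hn, Nat.add_sub_cancel])
    have hstep := sub_one_rpow_add_le (x := ((n + 1 : ℕ) : ℝ))
      (by exact_mod_cast Nat.le_add_left 1 n) hs0.le hs1
    rw [Nat.cast_succ, add_sub_cancel_right, ← Nat.cast_succ] at hstep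
    calc ∑ a ∈ A, w a = w a + ∑ a' ∈ A.erase a, w a' := (Finset.add_sum_erase A w ha).symm
      _ ≤ D * ((n + 1 : ℕ) : ℝ) ^ (s - 1) + D / s * (n : ℝ) ^ s :=
          add_le_add (hn ▸ h A subset_rfl a ha hmin) hrest
      _ = D / s * ((n : ℝ) ^ s + s * ((n + 1 : ℕ) : ℝ) ^ (s - 1)) := by field_simp; ring
      _ ≤ D / s * ((n + 1 : ℕ) : ℝ) ^ s := by gcongr

theorem le_mul_rpow_neg_of_pow_mul_pow_le {x y M : ℝ} (hx : 0 < x) (hM : 0 ≤ M) {a N : ℕ}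
    (hN : N ≠ 0) (h : x ^ a * y ^ N ≤ M ^ N) : y ≤ M * x ^ (-(a / N : ℝ)) := by
  refine le_of_pow_le_pow_left₀ hN (by positivity) ?_
  rw [mul_pow, ← Real.rpow_mul_natCast hx.le, neg_mul, div_mul_cancel₀ _ (Nat.cast_ne_zero.2 hN),
    Real.rpow_neg hx.le, Real.rpow_natCast, ← div_eq_mul_inv, le_div_iff₀ (pow_pos hx a), mul_comm]
  exact h

theorem natCast_rpow_le_rpow_of_exponent_le (n : ℕ) {s t : ℝ} (hs : 0 < s) (hst : s ≤ t) :
    (n : ℝ) ^ s ≤ (n : ℝ) ^ t := by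
  rcases n.eq_zero_or_pos with rfl | hn
  · rw [Nat.cast_zero, Real.zero_rpow hs.ne', Real.zero_rpow (hs.trans_le hst).ne']
  · exact Real.rpow_le_rpow_of_exponent_le (by exact_mod_cast hn) hst

variable {K : Type*} [Field K] {D p : ℕ} {P : Finset (Fin 2 → K)}
  {f : Finset (MvPolynomial (Fin 2) K)}

theorem sum_card_pointsOn_eq_incidenceCount (P : Finset (Fin 2 → K))
    (f : Finset (MvPolynomial (Fin 2) K)) :
    ∑ q ∈ f, (pointsOn P q).card = incidenceCount (fun x q => eval x q = 0) P f :=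
  (incidenceCount_comm _ _ _).symm

theorem sum_card_pointsOn_filter_lt_le (P : Finset (Fin 2 → K))
    (f : Finset (MvPolynomial (Fin 2) K)) (t : ℕ) :
    ∑ q ∈ f with ¬ t ≤ (pointsOn P q).card, (pointsOn P q).card ≤ f.card * t :=
  (Finset.sum_le_card_nsmul _ _ t fun _ hq => (not_le.1 (Finset.mem_filter.1 hq).2).le).trans
    (Nat.mul_le_mul_right _ (Finset.card_filter_le _ _))

namespace IsCurveFamily

theorem card_filter_eval_eq_zero_le_sq (hf : IsCurveFamily D f) (P : Finset (Fin 2 → K)) :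
    ∀ q ∈ f, ∀ q' ∈ f, q ≠ q' → {x ∈ P | eval x q = 0 ∧ eval x q' = 0}.card ≤ D ^ 2 :=
  fun q hq q' hq' hne => CubicIncidence.card_filter_eval_eq_zero_le_sq (hf.irreducible q hq)
    (hf.totalDegree_eq q hq) (hf.totalDegree_eq q' hq').le
    (fun h => hne (hf.eq_of_mem_span q' hq' q hq h).symm) P

theorem sum_card_pointsOn_sq_le (hf : IsCurveFamily D f) (P : Finset (Fin 2 → K)) :
    (∑ q ∈ f, (pointsOn P q).card) ^ 2 ≤
      P.card * (∑ q ∈ f, (pointsOn P q).card + D ^ 2 * f.card ^ 2) := by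
  rw [sum_card_pointsOn_eq_incidenceCount]
  exact incidenceCount_sq_le (hf.card_filter_eval_eq_zero_le_sq P)

theorem sum_card_pointsOn_le_two_mul_card (hf : IsCurveFamily D f)
    (h : ∀ q ∈ f, 2 * D ^ 2 * P.card ≤ (pointsOn P q).card ^ 2) :
    ∑ q ∈ f, (pointsOn P q).card ≤ 2 * P.card := by
  rw [sum_card_pointsOn_eq_incidenceCount]
  exact incidenceCount_le_two_mul_card (hf.card_filter_eval_eq_zero_le_sq P) h

theorem sum_card_pointsOn_le_sqrt (hf : IsCurveFamily D f) (P : Finset (Fin 2 → K)) :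
    ((∑ q ∈ f, (pointsOn P q).card : ℕ) : ℝ) ≤
      D * ((P.card : ℝ) ^ (1 / 2 : ℝ) * f.card) + P.card := by
  rw [← Real.sqrt_eq_rpow]
  have hsq : ((∑ q ∈ f, (pointsOn P q).card : ℕ) : ℝ) ^ 2 ≤
      P.card * ((∑ q ∈ f, (pointsOn P q).card : ℕ) + (D : ℝ) ^ 2 * (f.card : ℝ) ^ 2) := by
    exact_mod_cast hf.sum_card_pointsOn_sq_le P
  have hroot : 0 ≤ D * (√(P.card : ℝ) * f.card) := by positivity
  have hroot_sq : (D * (√(P.card : ℝ) * f.card)) ^ 2 =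
      P.card * ((D : ℝ) ^ 2 * (f.card : ℝ) ^ 2) := by
    rw [mul_pow, mul_pow, Real.sq_sqrt (Nat.cast_nonneg _), mul_left_comm]
  by_contra! hlt
  nlinarith [mul_nonneg hroot (Nat.cast_nonneg P.card)]

theorem cubic_le_card_mul_rpow_of_forall_le_card_pointsOn (hf : IsCurveFamily 3 f)
    (hne : f.Nonempty) {d : ℕ} (hd : 18 ≤ d) (hdeg : ∀ q ∈ f, d ≤ (pointsOn P q).card) :
    (d : ℝ) ≤ 2 * P.card * (f.card : ℝ) ^ (8 / 9 - 1 : ℝ) := by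
  have hfin := finrank_restrictTotalDegree_fin_two_mul_two (K := K) 3
  have hcard : f.card * (d - 3 ^ 2) ^ 9 ≤ P.card ^ 9 :=
    card_mul_pow_le_of_finrank_eq hf (by lia) hdeg (by lia)
  have hroot := le_mul_rpow_neg_of_pow_mul_pow_le (x := f.card) (a := 1)
    (y := (d - 3 ^ 2 : ℕ)) (M := P.card) (N := 9) (by exact_mod_cast hne.card_pos)
    (Nat.cast_nonneg _) (by norm_num) (by rw [pow_one]; exact_mod_cast hcard)
  have hhalf : (d : ℝ) ≤ 2 * (d - 3 ^ 2 : ℕ) := by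
    exact_mod_cast (by lia : d ≤ 2 * (d - 3 ^ 2))
  norm_num at hroot hhalf ⊢
  linarith

theorem cubic_sum_card_pointsOn_le_card_mul_rpow_of_le (hf : IsCurveFamily 3 f)
    (h18 : ∀ q ∈ f, 18 ≤ (pointsOn P q).card) :
    ((∑ q ∈ f, (pointsOn P q).card : ℕ) : ℝ) ≤
      3 * (P.card * (f.card : ℝ) ^ (8 / 9 : ℝ)) := by
  have hsum := sum_le_div_mul_card_rpow (w := fun q => ((pointsOn P q).card : ℝ))
    (D := 2 * P.card) (s := 8 / 9) (by positivity) (by norm_num) (by norm_num) (A := f)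
    fun S hS q hq hmin => (hf.mono hS).cubic_le_card_mul_rpow_of_forall_le_card_pointsOn ⟨q, hq⟩
      (h18 q (hS hq)) fun q' hq' => by exact_mod_cast hmin q' hq'
  push_cast
  have : 0 ≤ P.card * (f.card : ℝ) ^ (8 / 9 : ℝ) := by positivity
  linarith

theorem cubic_sum_card_pointsOn_le_card_mul_rpow (hf : IsCurveFamily 3 f)
    (P : Finset (Fin 2 → K)) :
    ((∑ q ∈ f, (pointsOn P q).card : ℕ) : ℝ) ≤
      3 * (P.card * (f.card : ℝ) ^ (8 / 9 : ℝ)) + 18 * f.card := by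
  rw [← Finset.sum_filter_add_sum_filter_not f (fun q => 18 ≤ (pointsOn P q).card), Nat.cast_add]
  refine add_le_add ((cubic_sum_card_pointsOn_le_card_mul_rpow_of_le
    (hf.mono (Finset.filter_subset _ _)) fun q hq => (Finset.mem_filter.1 hq).2).trans ?_) ?_
  · gcongr
    exact Finset.filter_subset _ _
  · rw [mul_comm]
    exact_mod_cast sum_card_pointsOn_filter_lt_le P f 18

theorem cubic_le_mul_rpow_of_forall_le_card_pointsOn (hK : CharAtLeast K p)
    (hf : IsCurveFamily 3 f) (hne : f.Nonempty) (hP : P.card ^ 3 ≤ p ^ 4) {d : ℕ} (hd90 : 90 ≤ d)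
    (hd18 : d ^ 2 ≤ 18 * P.card) (hdeg : ∀ q ∈ f, d ≤ (pointsOn P q).card) :
    (d : ℝ) ≤ 120 * (P.card : ℝ) ^ (39 / 43 : ℝ) * (f.card : ℝ) ^ (39 / 43 - 1 : ℝ) := by
  have hfin := finrank_restrictTotalDegree_fin_two_mul_two (K := K) 3
  obtain ⟨k, hk, hkd, hdk⟩ : ∃ k, 8 ≤ k ∧ 9 * k + 9 ≤ d ∧ d ≤ 12 * k :=
    ⟨(d - 9) / 9, by lia, by lia, by lia⟩
  have hkP : 4 * k ^ 2 ≤ P.card := by nlinarith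
  have hcard : f.card ^ 4 * k ^ 43 ≤ 10 ^ 31 * P.card ^ 39 :=
    card_pow_four_mul_pow_le_of_isCurveFamily (j := 7) hK hf (by norm_num) (by lia)
      (fun q hq => hkd.trans (hdeg q hq)) hk hkP hP
  have hroot := le_mul_rpow_neg_of_pow_mul_pow_le (x := f.card) (a := 4) (y := k)
    (M := 10 * (P.card : ℝ) ^ (39 / 43 : ℝ)) (N := 43) (by exact_mod_cast hne.card_pos)
    (by positivity) (by norm_num) <| by
      calc (f.card : ℝ) ^ 4 * (k : ℝ) ^ 43 ≤ 10 ^ 31 * (P.card : ℝ) ^ 39 := by exact_mod_cast hcard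
        _ ≤ 10 ^ 43 * (P.card : ℝ) ^ 39 := by gcongr <;> norm_num
        _ = (10 * (P.card : ℝ) ^ (39 / 43 : ℝ)) ^ 43 := by
          rw [mul_pow, ← Real.rpow_mul_natCast (Nat.cast_nonneg _), ← Real.rpow_natCast _ 39]
          norm_num
  have hdk' : (d : ℝ) ≤ 12 * k := by exact_mod_cast hdk
  norm_num at hroot ⊢
  linarith

theorem cubic_sum_card_pointsOn_le_rpow_of_le_of_le (hK : CharAtLeast K p)
    (hf : IsCurveFamily 3 f) (hP : P.card ^ 3 ≤ p ^ 4) (h90 : ∀ q ∈ f, 90 ≤ (pointsOn P q).card)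
    (h18 : ∀ q ∈ f, (pointsOn P q).card ^ 2 ≤ 18 * P.card) :
    ((∑ q ∈ f, (pointsOn P q).card : ℕ) : ℝ) ≤ 140 * (P.card * f.card : ℝ) ^ (39 / 43 : ℝ) := by
  have hsum := sum_le_div_mul_card_rpow (w := fun q => ((pointsOn P q).card : ℝ))
    (D := 120 * (P.card : ℝ) ^ (39 / 43 : ℝ)) (s := 39 / 43) (by positivity) (by norm_num)
    (by norm_num) (A := f) fun S hS q hq hmin =>
      (hf.mono hS).cubic_le_mul_rpow_of_forall_le_card_pointsOn hK ⟨q, hq⟩ hP (h90 q (hS hq))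
        (h18 q (hS hq)) fun q' hq' => by exact_mod_cast hmin q' hq'
  push_cast
  rw [Real.mul_rpow (Nat.cast_nonneg _) (Nat.cast_nonneg _)]
  have : 0 ≤ (P.card : ℝ) ^ (39 / 43 : ℝ) * (f.card : ℝ) ^ (39 / 43 : ℝ) := by positivity
  linarith

theorem cubic_sum_card_pointsOn_le_rpow (hK : CharAtLeast K p) (hf : IsCurveFamily 3 f)
    (hP : P.card ^ 3 ≤ p ^ 4) :
    ((∑ q ∈ f, (pointsOn P q).card : ℕ) : ℝ) ≤
      140 * (P.card * f.card : ℝ) ^ (39 / 43 : ℝ) + 2 * P.card + 90 * f.card := by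
  set g := {q ∈ f | 90 ≤ (pointsOn P q).card}
  have hgf : g ⊆ f := Finset.filter_subset _ _
  set rich := {q ∈ g | 18 * P.card ≤ (pointsOn P q).card ^ 2}
  set mid := {q ∈ g | ¬ 18 * P.card ≤ (pointsOn P q).card ^ 2}
  have hmidf : mid ⊆ f := (Finset.filter_subset _ _).trans hgf
  have hrich : ∑ q ∈ rich, (pointsOn P q).card ≤ 2 * P.card :=
    (hf.mono ((Finset.filter_subset _ _).trans hgf)).sum_card_pointsOn_le_two_mul_card
      fun q hq => (Finset.mem_filter.1 hq).2
  have hmid : ((∑ q ∈ mid, (pointsOn P q).card : ℕ) : ℝ) ≤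
      140 * (P.card * f.card : ℝ) ^ (39 / 43 : ℝ) := by
    refine ((hf.mono hmidf).cubic_sum_card_pointsOn_le_rpow_of_le_of_le hK hP
      (fun q hq => (Finset.mem_filter.1 (Finset.mem_filter.1 hq).1).2)
      fun q hq => (not_le.1 (Finset.mem_filter.1 hq).2).le).trans ?_
    gcongr
  have hpoor := sum_card_pointsOn_filter_lt_le P f 90
  have hsplit : ∑ q ∈ f, (pointsOn P q).card ≤
      2 * P.card + ∑ q ∈ mid, (pointsOn P q).card + f.card * 90 := by
    rw [← Finset.sum_filter_add_sum_filter_not f (fun q => 90 ≤ (pointsOn P q).card),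
      ← Finset.sum_filter_add_sum_filter_not g (fun q => 18 * P.card ≤ (pointsOn P q).card ^ 2)]
    gcongr
  have hsplit' : ((∑ q ∈ f, (pointsOn P q).card : ℕ) : ℝ) ≤
      2 * P.card + (∑ q ∈ mid, (pointsOn P q).card : ℕ) + f.card * 90 := by exact_mod_cast hsplit
  linarith

end IsCurveFamily

end Summation

/-! ### From curves to equations -/

section Curves

variable {K : Type*} [Field K] {D p : ℕ}

theorem exists_isCurveFamily (P : Finset (Fin 2 → K)) {C : Finset (Set (Fin 2 → K))}
    (hC : ∀ γ ∈ C, ∃ q : MvPolynomial (Fin 2) K,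
      Irreducible q ∧ q.totalDegree = D ∧ γ = {x | eval x q = 0}) :
    ∃ f, IsCurveFamily D f ∧ f.card = C.card ∧
      {z ∈ P ×ˢ C | z.1 ∈ z.2}.card = ∑ q ∈ f, (pointsOn P q).card := by
  choose! F hirr hdeg hzero using hC
  have hinj : Set.InjOn F C := fun γ hγ γ' hγ' h => by rw [hzero γ hγ, h, ← hzero γ' hγ']
  refine ⟨C.image F, ⟨?_, ?_, ?_⟩, Finset.card_image_of_injOn hinj, ?_⟩
  · exact Finset.forall_mem_image.2 hirr
  · exact Finset.forall_mem_image.2 hdeg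
  · rintro _ hq _ hq' hspan
    obtain ⟨γ, hγ, rfl⟩ := Finset.mem_image.1 hq
    obtain ⟨γ', hγ', rfl⟩ := Finset.mem_image.1 hq'
    obtain ⟨c, hc⟩ := Submodule.mem_span_singleton.1 hspan
    have hc0 : c ≠ 0 := by
      rintro rfl
      exact (hirr γ hγ).ne_zero (by rw [← hc, zero_smul])
    have hγγ' : γ = γ' := by
      rw [hzero γ hγ, hzero γ' hγ', ← hc]
      ext x
      rw [Set.mem_ofPred_eq, Set.mem_ofPred_eq, smul_eval, mul_eq_zero, or_iff_right hc0]
    rw [hγγ']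
  · rw [Finset.sum_image hinj, Finset.card_filter, Finset.sum_product_right]
    refine Finset.sum_congr rfl fun γ hγ => ?_
    rw [← Finset.card_filter, pointsOn]
    refine congrArg _ (Finset.filter_congr fun x _ => ?_)
    exact Set.ext_iff.1 (hzero γ hγ) x

theorem pow_three_le_pow_four_of_le_rpow {m : ℕ} (hp : 1 ≤ p)
    (h : (m : ℝ) ≤ (p : ℝ) ^ (15 / 13 : ℝ)) : m ^ 3 ≤ p ^ 4 := by
  have : (m : ℝ) ^ 3 ≤ (p : ℝ) ^ 4 := calc
    (m : ℝ) ^ 3 ≤ ((p : ℝ) ^ (15 / 13 : ℝ)) ^ 3 := by gcongr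
    _ = (p : ℝ) ^ (45 / 13 : ℝ) := by
      rw [← Real.rpow_mul_natCast (Nat.cast_nonneg p)]
      norm_num
    _ ≤ (p : ℝ) ^ (4 : ℝ) :=
      Real.rpow_le_rpow_of_exponent_le (by exact_mod_cast hp) (by norm_num)
    _ = (p : ℝ) ^ 4 := by norm_cast
  exact_mod_cast this

end Curves

end CubicIncidence

theorem incidence_bound_min_general {K : Type*} [Field K] {p : ℕ}
    (hK : CubicIncidence.CharAtLeast K p) (P : Finset (Fin 2 → K)) (C : Finset (Set (Fin 2 → K)))
    (hP : P.card ^ 3 ≤ p ^ 4)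
    (hC : ∀ γ ∈ C, ∃ f : MvPolynomial (Fin 2) K,
      Irreducible f ∧ f.totalDegree = 3 ∧ γ = {x | MvPolynomial.eval x f = 0}) :
    (((P ×ˢ C).filter fun z => z.1 ∈ z.2).card : ℝ) ≤
      200 * (min (min ((P.card * C.card : ℝ) ^ (39 / 43 : ℝ))
            (P.card * (C.card : ℝ) ^ (8 / 9 : ℝ)))
          ((P.card : ℝ) ^ (1 / 2 : ℝ) * C.card)
        + P.card + C.card) := by
  obtain ⟨f, hf, hcard, hinc⟩ := CubicIncidence.exists_isCurveFamily P hC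
  have h₁ := hf.cubic_sum_card_pointsOn_le_rpow hK hP
  have h₂ := hf.cubic_sum_card_pointsOn_le_card_mul_rpow P
  have h₃ := hf.sum_card_pointsOn_le_sqrt P
  rw [hinc, ← hcard]
  set S : ℝ := ((∑ q ∈ f, (CubicIncidence.pointsOn P q).card : ℕ) : ℝ)
  have hPcard : (0 : ℝ) ≤ P.card := Nat.cast_nonneg _
  have hfcard : (0 : ℝ) ≤ f.card := Nat.cast_nonneg _
  suffices S / 200 - P.card - f.card ≤ min (min ((P.card * f.card : ℝ) ^ (39 / 43 : ℝ))
      (P.card * (f.card : ℝ) ^ (8 / 9 : ℝ))) ((P.card : ℝ) ^ (1 / 2 : ℝ) * f.card) by linarith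
  have hp₁ : 0 ≤ (P.card * f.card : ℝ) ^ (39 / 43 : ℝ) := by positivity
  have hp₂ : 0 ≤ P.card * (f.card : ℝ) ^ (8 / 9 : ℝ) := by positivity
  have hp₃ : 0 ≤ (P.card : ℝ) ^ (1 / 2 : ℝ) * f.card := by positivity
  refine le_min (le_min ?_ ?_) ?_ <;> linarith

theorem incidence_bound_min :
    ∃ c : ℝ, 0 < c ∧ ∀ p : ℕ, p.Prime →
      ∀ (P : Finset (Fin 2 → ZMod p)) (C : Finset (Set (Fin 2 → ZMod p))),
        (P.card : ℝ) ≤ (p : ℝ) ^ ((15 : ℝ) / 13) →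
        (∀ γ ∈ C, IsIrredCubic γ) →
        (incidences P C : ℝ) ≤
          c * (min (min (((P.card : ℝ) * (C.card : ℝ)) ^ ((39 : ℝ) / 43))
                ((P.card : ℝ) * (C.card : ℝ) ^ ((9 : ℝ) / 10)))
              ((P.card : ℝ) ^ ((1 : ℝ) / 2) * (C.card : ℝ))
            + (P.card : ℝ) + (C.card : ℝ)) := by
  refine ⟨200, by norm_num, fun p hp P C hP hC => ?_⟩
  have : Fact p.Prime := ⟨hp⟩
  refine (incidence_bound_min_general (CubicIncidence.charAtLeast_of_charP (ZMod p) p) P C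
    (CubicIncidence.pow_three_le_pow_four_of_le_rpow hp.one_le hP) hC).trans ?_
  have h := CubicIncidence.natCast_rpow_le_rpow_of_exponent_le C.card (s := 8 / 9) (t := 9 / 10)
    (by norm_num) (by norm_num)
  gcongr
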